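/- Suppose n is even. Fix an integer m ≥ 2, a real α with 1/(n−Δ) < α < 1/(n−1), ε > 0, and S > 0. Define I(s) = (1/(2π))·lim_{R→∞} ∫_{−R}^{R} e(y^n)·sin(2πsy)·(dy/y) (the integrand being extended by its limiting value 2πs·e(0) at y = 0). Then there exist C > 0 and t₁ > 0 such that for every t ∈ (0, t₁] which either (i) is irrational and lies in ℬ_{m,α}, or (ii) is a rational with reduced form u/q satisfying t ≤ m·q^{−1/(α(n−Δ))}, for every s ∈ [−S, S] and each sign σ ∈ {+1, −1}, the limit I(s) exists, the limit defining U(t, σγ + s·t^{1/n}) exists, and |U(t, σγ + s·t^{1/n}) − (1/2 − σ·I(s))| ≤ C·( t^{αΔ/2^{n−1} − ε} + t^{αn−1} ). -/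

import Mathlib

open Filter Finset MeasureTheory

/-- An approximant to a real number `t`: a reduced fraction `u/q` with `q ≥ 1`
and `|t - u/q| < 1/q²`. -/
def IsApproximant (t : ℝ) (u q : ℤ) : Prop :=
  1 ≤ q ∧ Int.gcd u q = 1 ∧ |t - (u : ℝ) / (q : ℝ)| < 1 / (q : ℝ) ^ 2

/-- The set `𝒜_m`: `t ∈ [0,1]` such that for every real `M ≥ m` there is an
approximant `u/q` to `t` with `M^Δ < q ≤ M^(n-Δ)`. -/
def Aset (n : ℕ) (Δ : ℝ) (m : ℤ) : Set ℝ :=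
  {t | t ∈ Set.Icc (0 : ℝ) 1 ∧ ∀ M : ℝ, (m : ℝ) ≤ M →
    ∃ u q : ℤ, IsApproximant t u q ∧ M ^ Δ < (q : ℝ) ∧ (q : ℝ) ≤ M ^ ((n : ℝ) - Δ)}

/-- The set `𝒜`: `t ∈ [0,1]` such that for all sufficiently large `M` there is an
approximant `u/q` to `t` with `M^Δ < q ≤ M^(n-Δ)`. -/
def Aall (n : ℕ) (Δ : ℝ) : Set ℝ :=
  {t | t ∈ Set.Icc (0 : ℝ) 1 ∧ ∃ M₀ : ℝ, ∀ M : ℝ, M₀ ≤ M →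
    ∃ u q : ℤ, IsApproximant t u q ∧ M ^ Δ < (q : ℝ) ∧ (q : ℝ) ≤ M ^ ((n : ℝ) - Δ)}

/-- The set `ℬ_{m,α}`: `t ∈ (0,1]` such that for every real `M ≥ m·t^(-α)` there is an
approximant `u/q` to `t` with `M^Δ < q ≤ M^(n-Δ)`. -/
def Bset (n : ℕ) (Δ : ℝ) (m : ℤ) (α : ℝ) : Set ℝ :=
  {t | t ∈ Set.Ioc (0 : ℝ) 1 ∧ ∀ M : ℝ, (m : ℝ) * t ^ (-α) ≤ M →
    ∃ u q : ℤ, IsApproximant t u q ∧ M ^ Δ < (q : ℝ) ∧ (q : ℝ) ≤ M ^ ((n : ℝ) - Δ)}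

/-- `e(ξ) = exp(2πiξ)`. -/
noncomputable def ee (ξ : ℝ) : ℂ := Complex.exp (2 * Real.pi * Complex.I * ξ)

/-- The partial sum defining `U(t,x)`:
`2γ + Σ_{0<|k|≤K} (sin(2πγk)/(πk))·e(t·k^n + x·k)`. -/
noncomputable def Upartial (n : ℕ) (γ t x : ℝ) (K : ℕ) : ℂ :=
  Complex.ofReal (2 * γ) +
    ∑ k ∈ (Finset.Icc (-(K : ℤ)) (K : ℤ)).filter (· ≠ 0),
      Complex.ofReal (Real.sin (2 * Real.pi * γ * (k : ℝ)) / (Real.pi * (k : ℝ))) *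
        ee (t * (k : ℝ) ^ n + x * (k : ℝ))

/-- The truncated integral `∫_{−R}^{R} e(y^n)·sin(2πsy)·dy/y`, the integrand extended by its
limiting value `2πs·e(0) = 2πs` at `y = 0`. -/
noncomputable def Iint (n : ℕ) (s R : ℝ) : ℂ :=
  ∫ y in (-R)..R,
    (if y = 0 then Complex.ofReal (2 * Real.pi * s)
      else ee (y ^ n) * Complex.ofReal (Real.sin (2 * Real.pi * s * y)) / Complex.ofReal y)


lemma ee_add (a b : ℝ) : ee (a + b) = ee a * ee b := by
  unfold ee; rw [← Complex.exp_add]; push_cast; ring_nf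

lemma ee_eq (a : ℝ) : ee a = Complex.exp ((2 * Real.pi * a : ℝ) * Complex.I) := by
  unfold ee; push_cast; ring_nf

lemma norm_ee (a : ℝ) : ‖ee a‖ = 1 := by
  rw [ee_eq]; exact Complex.norm_exp_ofReal_mul_I _

lemma ee_zero : ee 0 = 1 := by simp [ee]

lemma ee_neg (a : ℝ) : ee (-a) = (starRingEnd ℂ) (ee a) := by
  rw [ee_eq, ee_eq, ← Complex.exp_conj]; simp [-Complex.ofReal_mul]

lemma ee_int (k : ℤ) : ee k = 1 := by
  unfold ee
  rw [Complex.exp_eq_one_iff]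
  exact ⟨k, by push_cast; ring⟩

lemma ee_nat (k : ℕ) : ee k = 1 := by simpa using ee_int k

lemma ee_ne_zero (a : ℝ) : ee a ≠ 0 := by
  unfold ee; exact Complex.exp_ne_zero _

lemma ee_sub (a b : ℝ) : ee (a - b) * ee b = ee a := by
  rw [← ee_add]; simp

lemma ee_cos_sin (a : ℝ) : ee a = Complex.ofReal (Real.cos (2 * Real.pi * a)) +
    Complex.ofReal (Real.sin (2 * Real.pi * a)) * Complex.I := by
  rw [ee_eq, Complex.exp_mul_I]; simp

lemma norm_ee_sub_one (a : ℝ) : ‖ee a - 1‖ = 2 * |Real.sin (Real.pi * a)| := by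
  rw [ee_eq, mul_comm _ Complex.I, Complex.norm_exp_I_mul_ofReal_sub_one]
  rw [norm_mul]; simp; congr 2; ring

lemma norm_ee_sub_one_le (a : ℝ) : ‖ee a - 1‖ ≤ 2 * Real.pi * |a| := by
  rw [norm_ee_sub_one]
  have : |Real.sin (Real.pi * a)| ≤ |Real.pi * a| := Real.abs_sin_le_abs
  rw [abs_mul, abs_of_pos Real.pi_pos] at this
  linarith

lemma norm_ee_sub_ee (a b : ℝ) : ‖ee a - ee b‖ ≤ 2 * Real.pi * |a - b| := by
  have : ee a - ee b = (ee (a - b) - 1) * ee b := by rw [sub_mul, ee_sub]; ring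
  rw [this, norm_mul, norm_ee, mul_one]
  exact norm_ee_sub_one_le _

lemma continuous_ee : Continuous ee := by
  unfold ee; fun_prop

lemma hasDerivAt_ee (a : ℝ) : HasDerivAt ee (2 * Real.pi * Complex.I * ee a) a := by
  unfold ee
  have h : HasDerivAt (fun x : ℝ => 2 * Real.pi * Complex.I * (x : ℂ)) (2 * Real.pi * Complex.I) a := by
    simpa using (Complex.ofRealCLM.hasDerivAt (x := a)).const_mul (2 * Real.pi * Complex.I)
  have := h.cexp
  convert this using 1; ring

lemma ee_sin (a : ℝ) : Complex.ofReal (Real.sin (2 * Real.pi * a)) = (ee a - ee (-a)) / (2 * Complex.I) := by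
  rw [ee_cos_sin, ee_cos_sin]
  have : 2 * Real.pi * -a = - (2 * Real.pi * a) := by ring
  rw [this, Real.cos_neg, Real.sin_neg]
  field_simp; push_cast; ring

/-- Abel summation inequality. -/
lemma abel_ineq (a w : ℕ → ℂ) (M K : ℕ) (hMK : M ≤ K) (B : ℝ)
    (hB : ∀ j, M ≤ j → j ≤ K → ‖∑ k ∈ Ico M j, a k‖ ≤ B) :
    ‖∑ k ∈ Ico M K, a k * w k‖ ≤ B * (‖w K‖ + ∑ k ∈ Ico M K, ‖w (k + 1) - w k‖) := by
  have key : ∀ K, M ≤ K → ∑ k ∈ Ico M K, a k * w k = (∑ k ∈ Ico M K, a k) * w K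
      - ∑ k ∈ Ico M K, (∑ j ∈ Ico M (k+1), a j) * (w (k+1) - w k) := by
    intro K hK
    induction K, hK using Nat.le_induction with
    | base => simp
    | succ K hK ih =>
      rw [sum_Ico_succ_top hK, sum_Ico_succ_top hK (f := fun k => (∑ j ∈ Ico M (k+1), a j) * (w (k+1) - w k)), ih,
        sum_Ico_succ_top hK]
      ring
  rw [key K hMK]
  refine (norm_sub_le _ _).trans ?_
  rw [mul_add]
  gcongr
  · rw [norm_mul]; gcongr; exact hB K hMK le_rfl
  · rw [mul_sum]
    refine (norm_sum_le _ _).trans (sum_le_sum ?_)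
    intro k hk
    rw [mem_Ico] at hk
    rw [norm_mul]; gcongr; exact hB _ (by lia) (by lia)

/-- Abel with weights 1/k. -/
lemma abel_inv (a : ℕ → ℂ) (M K : ℕ) (hM : 1 ≤ M) (hMK : M ≤ K) (B : ℝ)
    (hB : ∀ j, M ≤ j → j ≤ K → ‖∑ k ∈ Ico M j, a k‖ ≤ B) :
    ‖∑ k ∈ Ico M K, a k * ((k : ℂ))⁻¹‖ ≤ B / M := by
  have h := abel_ineq a (fun k => ((k : ℂ))⁻¹) M K hMK B hB
  refine h.trans (le_of_eq ?_)
  have key : ∀ K, M ≤ K → ∑ k ∈ Ico M K, ‖(((k+1 : ℕ) : ℂ))⁻¹ - ((k : ℂ))⁻¹‖ = (M : ℝ)⁻¹ - (K : ℝ)⁻¹ := by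
    intro K hK
    induction K, hK using Nat.le_induction with
    | base => simp
    | succ K hK ih =>
      rw [sum_Ico_succ_top hK, ih]
      have hK0 : (0:ℝ) < K := by exact_mod_cast (by lia : 0 < K)
      have : (((K+1 : ℕ) : ℂ))⁻¹ - ((K : ℂ))⁻¹ = Complex.ofReal (((K:ℝ)+1)⁻¹ - (K:ℝ)⁻¹) := by push_cast; ring
      rw [this, Complex.norm_real, Real.norm_eq_abs, abs_sub_comm, abs_of_nonneg]
      · push_cast; ring
      · rw [sub_nonneg]; exact inv_anti₀ hK0 (by linarith)
  rw [key K hMK]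
  simp; ring



noncomputable def gN (N : ℕ) (x : ℝ) : ℝ := 2 * N / (1 + N * |Real.sin (Real.pi * x)|)

lemma gN_den (N : ℕ) (x : ℝ) : 0 < 1 + N * |Real.sin (Real.pi * x)| := by positivity

lemma gN_nonneg (N : ℕ) (x : ℝ) : 0 ≤ gN N x := by unfold gN; positivity

lemma gN_le (N : ℕ) (x : ℝ) : gN N x ≤ 2 * N := by
  unfold gN
  apply div_le_self (by positivity)
  have : 0 ≤ N * |Real.sin (Real.pi * x)| := by positivity
  linarith

lemma le_gN (N : ℕ) (x b : ℝ) (h1 : b ≤ N) (h2 : b * |Real.sin (Real.pi * x)| ≤ 1) : b ≤ gN N x := by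
  unfold gN
  rw [le_div_iff₀ (gN_den N x)]
  have : (N:ℝ) * (b * |Real.sin (Real.pi * x)|) ≤ N * 1 := by gcongr
  linarith

lemma gN_le_inv (N : ℕ) (x v : ℝ) (hv : 0 < v) (h : v ≤ |Real.sin (Real.pi * x)|) : gN N x ≤ 2 / v := by
  unfold gN
  rw [div_le_div_iff₀ (gN_den N x) hv]
  have : (N:ℝ) * v ≤ N * |Real.sin (Real.pi * x)| := by gcongr
  linarith

lemma gN_neg (N : ℕ) (x : ℝ) : gN N (-x) = gN N x := by
  unfold gN; rw [mul_neg, Real.sin_neg, abs_neg]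

noncomputable def BW (N : ℕ) : ℕ → ℝ → ℝ
  | 0, A => gN N A
  | d + 1, A => ∑ h ∈ Ioo (-(N : ℤ)) N, BW N d ((d + 2) * h * A)

def PolyLike : ℕ → ℝ → (ℤ → ℝ) → Prop
  | 0, A, f => ∃ c, ∀ k : ℤ, f k = A * k + c
  | d + 1, A, f => ∀ h : ℤ, PolyLike d ((d + 2) * h * A) (fun k => f (k + h) - f k)

lemma geom_bound (A c : ℝ) (a b : ℤ) (N : ℕ) (hab : b - a ≤ N) :
    ‖∑ k ∈ Ico a b, ee (A * k + c)‖ ≤ gN N A := by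
  apply le_gN
  · refine (norm_sum_le _ _).trans ?_
    simp only [norm_ee, sum_const, Int.card_Ico, nsmul_eq_mul, mul_one]
    exact_mod_cast (by lia : (b - a).toNat ≤ N)
  · rcases le_total b a with h | h
    · rw [Ico_eq_empty (by lia)]; simp
    have tel : ∀ b : ℤ, a ≤ b → (∑ k ∈ Ico a b, ee (A * k + c)) * (ee A - 1) = ee (A * b + c) - ee (A * a + c) := by
      intro b hb
      induction b, hb using Int.leInduction with
      | base => simp
      | succ b hb ih =>
        have : Ico a (b+1) = insert b (Ico a b) := by ext x; simp; lia
        rw [this, sum_insert (by simp), add_mul, ih]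
        have : ee (A * ((b + 1 : ℤ) : ℝ) + c) = ee (A * b + c) * ee A := by
          rw [← ee_add]; push_cast; ring_nf
        rw [this]; ring
    have h2 : ‖∑ k ∈ Ico a b, ee (A * k + c)‖ * (2 * |Real.sin (Real.pi * A)|) ≤ 2 := by
      rw [← norm_ee_sub_one, ← norm_mul, tel b h]
      refine (norm_sub_le _ _).trans ?_
      rw [norm_ee, norm_ee]; norm_num
    linarith

lemma vdc_ineq (f : ℤ → ℝ) (a b : ℤ) (N : ℕ) (hab : b - a ≤ N) :
    ‖∑ k ∈ Ico a b, ee (f k)‖ ^ 2 ≤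
      ∑ h ∈ Ioo (-(N : ℤ)) N, ‖∑ k ∈ Ico (max a (a - h)) (min b (b - h)), ee (f (k + h) - f k)‖ := by
  have key : (∑ k ∈ Ico a b, ee (f k)) * (starRingEnd ℂ) (∑ k ∈ Ico a b, ee (f k)) =
      ∑ h ∈ Ioo (-(N : ℤ)) N, ∑ k ∈ Ico (max a (a - h)) (min b (b - h)), ee (f (k + h) - f k) := by
    rw [map_sum, mul_comm, sum_mul_sum]
    have : ∀ h ∈ Ioo (-(N : ℤ)) N, ∑ k ∈ Ico (max a (a - h)) (min b (b - h)), ee (f (k + h) - f k)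
        = ∑ k ∈ Ico a b, if k + h ∈ Ico a b then ee (f (k + h) - f k) else 0 := by
      intro h _
      rw [← sum_filter]
      apply sum_congr _ (fun _ _ => rfl)
      ext x; simp; lia
    rw [sum_congr rfl this, sum_comm (s := Ioo (-(N : ℤ)) N)]
    apply sum_congr rfl
    intro k hk
    rw [← sum_filter]
    symm
    refine sum_nbij' (fun h => k + h) (fun l => l - k) ?_ ?_ ?_ ?_ ?_
    · intro h hh; simp only [mem_filter] at hh; exact hh.2
    · intro l hl; simp only [mem_filter, mem_Ioo, mem_Ico] at hl hk ⊢; lia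
    · intro h _; ring
    · intro h _; ring
    · intro h _
      rw [← ee_neg, ← ee_add]; ring_nf
  have h2 : ‖∑ k ∈ Ico a b, ee (f k)‖ ^ 2 = ‖(∑ k ∈ Ico a b, ee (f k)) * (starRingEnd ℂ) (∑ k ∈ Ico a b, ee (f k))‖ := by
    rw [norm_mul, RCLike.norm_conj, sq]
  rw [h2, key]
  exact norm_sum_le _ _

lemma weyl_diff (N : ℕ) (hN : 1 ≤ N) (d : ℕ) : ∀ (A : ℝ) (f : ℤ → ℝ), PolyLike d A f → ∀ a b : ℤ, b - a ≤ N →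
    ‖∑ k ∈ Ico a b, ee (f k)‖ ^ (2 ^ d) * (2 * N : ℝ) ^ (d + 1) ≤ (2 * N : ℝ) ^ (2 ^ d) * BW N d A := by
  induction d with
  | zero =>
    rintro A f ⟨c, hc⟩ a b hab
    simp only [hc, BW]
    have := geom_bound A c a b N hab
    simp only [pow_zero, pow_one, zero_add]
    rw [mul_comm]
    gcongr
  | succ d ih =>
    intro A f hf a b hab
    have h1 := vdc_ineq f a b N hab
    set X : ℤ → ℝ := fun h => ‖∑ k ∈ Ico (max a (a - h)) (min b (b - h)), ee (f (k + h) - f k)‖ with hX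
    have hcard : ((#(Ioo (-(N : ℤ)) N) : ℕ) : ℝ) ≤ 2 * N := by
      rw [Int.card_Ioo]
      exact_mod_cast (by lia : ((N:ℤ) - (-N) - 1).toNat ≤ 2 * N)
    have hpow : (∑ h ∈ Ioo (-(N : ℤ)) N, X h) ^ (2 ^ d) * (2 * N) ≤ (2 * N : ℝ) ^ (2 ^ d) * ∑ h ∈ Ioo (-(N : ℤ)) N, X h ^ (2 ^ d) := by
      obtain ⟨p, hp⟩ : ∃ p, 2 ^ d = p + 1 := ⟨2 ^ d - 1, by have := Nat.one_le_two_pow (n := d); lia⟩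
      rw [hp]
      have h5 : (∑ h ∈ Ioo (-(N : ℤ)) N, X h) ^ (p + 1) ≤ (#(Ioo (-(N : ℤ)) N) : ℝ) ^ p * ∑ h ∈ Ioo (-(N : ℤ)) N, X h ^ (p + 1) :=
        pow_sum_le_card_mul_sum_pow (fun i _ => norm_nonneg _) p
      have hs : 0 ≤ ∑ h ∈ Ioo (-(N : ℤ)) N, X h ^ (p + 1) := sum_nonneg fun i _ => by positivity
      calc _ ≤ (#(Ioo (-(N : ℤ)) N) : ℝ) ^ p * (∑ h ∈ Ioo (-(N : ℤ)) N, X h ^ (p + 1)) * (2 * N) := by gcongr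
        _ ≤ (2 * N : ℝ) ^ p * (∑ h ∈ Ioo (-(N : ℤ)) N, X h ^ (p + 1)) * (2 * N) := by gcongr
        _ = _ := by ring
    have hstep : ∀ h ∈ Ioo (-(N : ℤ)) N, X h ^ (2 ^ d) * (2 * N : ℝ) ^ (d + 1) ≤ (2 * N : ℝ) ^ (2 ^ d) * BW N d ((d + 2) * h * A) := by
      intro h _
      exact ih _ _ (hf h) _ _ (by lia)
    calc ‖∑ k ∈ Ico a b, ee (f k)‖ ^ (2 ^ (d + 1)) * (2 * N : ℝ) ^ (d + 1 + 1)
        = (‖∑ k ∈ Ico a b, ee (f k)‖ ^ 2) ^ (2 ^ d) * (2 * N) * (2 * N : ℝ) ^ (d + 1) := by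
          rw [← pow_mul, pow_succ' 2 d]; ring
      _ ≤ (∑ h ∈ Ioo (-(N : ℤ)) N, X h) ^ (2 ^ d) * (2 * N) * (2 * N : ℝ) ^ (d + 1) := by gcongr
      _ ≤ (2 * N : ℝ) ^ (2 ^ d) * (∑ h ∈ Ioo (-(N : ℤ)) N, X h ^ (2 ^ d)) * (2 * N : ℝ) ^ (d + 1) := by gcongr
      _ = (2 * N : ℝ) ^ (2 ^ d) * ∑ h ∈ Ioo (-(N : ℤ)) N, (X h ^ (2 ^ d) * (2 * N : ℝ) ^ (d + 1)) := by
          rw [← sum_mul]; ring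
      _ ≤ (2 * N : ℝ) ^ (2 ^ d) * ∑ h ∈ Ioo (-(N : ℤ)) N, ((2 * N : ℝ) ^ (2 ^ d) * BW N d ((d + 2) * h * A)) := by
          exact mul_le_mul_of_nonneg_left (sum_le_sum hstep) (by positivity)
      _ = _ := by
          rw [← mul_sum, BW]; ring

open Polynomial in
lemma polyLike_poly (d : ℕ) : ∀ (p : ℝ[X]), p.natDegree ≤ d + 1 → PolyLike d (p.coeff (d + 1)) (fun k : ℤ => p.eval (k : ℝ)) := by
  induction d with
  | zero =>
    intro p hp
    refine ⟨p.coeff 0, fun k => ?_⟩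
    show eval (k:ℝ) p = _
    rw [eval_eq_sum_range' (p := p) (n := 2) (by lia)]
    simp [sum_range_succ]; ring
  | succ d ih =>
    intro p hp h
    have hh := ih (taylor (h:ℝ) p - p) ?_
    · have hc : (taylor (h:ℝ) p - p).coeff (d + 1) = (d + 2) * h * p.coeff (d + 1 + 1) := by
        rw [coeff_sub, taylor_coeff, eval_eq_sum_range' (n := 2)]
        · simp only [hasseDeriv_coeff, sum_range_succ]
          have h1 : (1 + (d + 1)).choose (d + 1) = d + 2 := by
            rw [add_comm, Nat.choose_succ_self_right]
          rw [h1]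
          simp
          rw [show 1 + (d+1) = d+1+1 by ring]; ring
        · have := natDegree_hasseDeriv_le p (d+1); lia
      rw [hc] at hh
      convert! hh using 2 with k
      simp [taylor_eval]
    · rw [natDegree_le_iff_coeff_eq_zero]
      intro j hj
      rw [coeff_sub, taylor_coeff, eval_eq_sum_range' (n := 1)]
      · simp [hasseDeriv_coeff]
      · have := natDegree_hasseDeriv_le p j; lia

lemma polyLike_phase (d : ℕ) (t x : ℝ) : PolyLike (d + 1) t (fun k : ℤ => t * (k:ℝ) ^ (d + 2) + x * k) := by
  have := polyLike_poly (d + 1) (Polynomial.C t * Polynomial.X ^ (d + 2) + Polynomial.C x * Polynomial.X) (by compute_degree)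
  convert! this using 2 with k
  · simp
  · simp


lemma divisor_bound (η : ℝ) (hη : 0 < η) : ∃ C : ℝ, 1 ≤ C ∧ ∀ l : ℕ, 1 ≤ l → ((#l.divisors : ℕ) : ℝ) ≤ C * (l : ℝ) ^ η := by
  set C1 : ℝ := 1 + 1 / (η * Real.log 2) with hC1
  have hlog : 0 < Real.log 2 := Real.log_pos (by norm_num)
  have hC1' : 1 ≤ C1 := by
    have : 0 < 1 / (η * Real.log 2) := by positivity
    linarith
  set P0 : ℕ := ⌈(2:ℝ) ^ (1 / η)⌉₊ with hP0
  refine ⟨C1 ^ P0, one_le_pow₀ hC1', ?_⟩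
  intro l hl
  rw [Nat.card_divisors (by lia)]
  have hl2 : (l : ℝ) ^ η = ∏ p ∈ l.primeFactors, ((p : ℝ) ^ (l.factorization p)) ^ η := by
    rw [Real.finsetProd_rpow _ _ (fun i _ => by positivity)]
    congr 1
    have := Nat.prod_factorization_pow_eq_self (n := l) (by lia)
    conv_lhs => rw [← this]
    rw [Finsupp.prod, Nat.support_factorization]; push_cast; rfl
  have hprod : ∏ p ∈ l.primeFactors, (if p < P0 then C1 else 1) ≤ C1 ^ P0 := by
    rw [← prod_filter, prod_const]
    apply pow_le_pow_right₀ hC1'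
    calc _ ≤ #(range P0) := card_le_card (by intro p; simp)
      _ = P0 := by simp
  rw [hl2]
  calc _ = ∏ p ∈ l.primeFactors, ((l.factorization p : ℝ) + 1) := by push_cast; rfl
    _ ≤ ∏ p ∈ l.primeFactors, ((if p < P0 then C1 else 1) * ((p : ℝ) ^ (l.factorization p)) ^ η) := by
        apply prod_le_prod (fun i _ => by positivity)
        intro p hp
        have hp2 : (2:ℝ) ≤ p := by exact_mod_cast (Nat.prime_of_mem_primeFactors hp).two_le
        set e := l.factorization p
        have hpe : ((p:ℝ) ^ e) ^ η = ((p:ℝ) ^ η) ^ e := by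
          rw [← Real.rpow_natCast, ← Real.rpow_mul (by positivity), ← Real.rpow_natCast, ← Real.rpow_mul (by positivity), mul_comm]
        split_ifs with h
        · have h1 : (2:ℝ) ^ (η * e) ≤ ((p:ℝ) ^ e) ^ η := by
            rw [hpe, ← Real.rpow_natCast, ← Real.rpow_mul (by positivity)]
            exact Real.rpow_le_rpow (by norm_num) hp2 (by positivity)
          have h2 : Real.log 2 * (η * e) + 1 ≤ (2:ℝ) ^ (η * e) := by
            rw [Real.rpow_def_of_pos (by norm_num)]
            exact Real.add_one_le_exp _
          have h3 : (e:ℝ) + 1 ≤ C1 * (Real.log 2 * (η * e) + 1) := by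
            have : C1 * (Real.log 2 * (η * e) + 1) = Real.log 2 * (η * e) + 1 + e + 1 / (η * Real.log 2) := by
              rw [hC1]; field_simp; ring
            rw [this]
            have : 0 ≤ Real.log 2 * (η * e) := by positivity
            have : 0 < 1 / (η * Real.log 2) := by positivity
            linarith
          exact h3.trans (by gcongr; exact h2.trans h1)
        · rw [one_mul, hpe]
          have h1 : (2:ℝ) ≤ (p:ℝ) ^ η := by
            have h4 : (2:ℝ) ^ (1/η) ≤ p := (Nat.le_ceil _).trans (by exact_mod_cast (not_lt.mp h))
            calc (2:ℝ) = ((2:ℝ) ^ (1/η)) ^ η := by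
                  rw [← Real.rpow_mul (by norm_num), one_div, inv_mul_cancel₀ hη.ne', Real.rpow_one]
              _ ≤ _ := Real.rpow_le_rpow (by positivity) h4 hη.le
          calc (e:ℝ) + 1 ≤ (2:ℝ) ^ e := by exact_mod_cast Nat.lt_two_pow_self
            _ ≤ _ := by gcongr
    _ ≤ _ := by
        rw [prod_mul_distrib]
        gcongr

lemma sin_lower (y v : ℝ) (hv : 0 ≤ v) (h1 : v ≤ y) (h2 : v ≤ 1 - y) : 2 * v ≤ |Real.sin (Real.pi * y)| := by
  have hpi := Real.pi_pos
  have main : ∀ y : ℝ, v ≤ y → y ≤ 1/2 → 2 * v ≤ Real.sin (Real.pi * y) := by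
    intro y h1 h2
    have := Real.mul_le_sin (x := Real.pi * y) (by nlinarith) (by nlinarith)
    have h3 : 2 / Real.pi * (Real.pi * y) = 2 * y := by field_simp
    linarith
  refine le_trans ?_ (le_abs_self _)
  rcases le_total y (1/2) with h | h
  · exact main y h1 h
  · have := main (1 - y) h2 (by linarith)
    rwa [show Real.pi * (1 - y) = Real.pi - Real.pi * y by ring, Real.sin_pi_sub] at this

noncomputable def bR (N q r : ℕ) : ℝ := if r < 2 then 2 * N else q / (r - 1 : ℕ)

lemma bR_nonneg (N q r : ℕ) : 0 ≤ bR N q r := by unfold bR; split_ifs <;> positivity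

lemma sum_bR (N q : ℕ) (hq : 1 ≤ q) : ∑ r ∈ range q, bR N q r ≤ 4 * N + q * (1 + Real.log q) := by
  have h1 : ∑ r ∈ range q, bR N q r ≤ ∑ r ∈ range (q + 2), bR N q r :=
    sum_le_sum_of_subset_of_nonneg (by intro x; simp; lia) (fun _ _ _ => bR_nonneg _ _ _)
  refine h1.trans ?_
  rw [sum_range_succ', sum_range_succ']
  have h2 : ∑ k ∈ range q, bR N q (k + 1 + 1) = q * (harmonic q : ℝ) := by
    rw [harmonic]; push_cast; rw [mul_sum]
    apply sum_congr rfl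
    intro k _
    simp [bR]; rfl
  have h3 := harmonic_le_one_add_log q
  rw [h2]
  have h4 : bR N q (0+1) = 2 * N := by simp [bR]
  have h5 : bR N q 0 = 2 * N := by simp [bR]
  rw [h4, h5]
  have : (q:ℝ) * (harmonic q : ℝ) ≤ q * (1 + Real.log q) := by gcongr
  linarith

lemma block_bound (N : ℕ) (t c : ℝ) (u : ℤ) (q : ℕ) (hq : 1 ≤ q) (hg : Int.gcd u q = 1)
    (ht : |t - u / q| < 1 / (q:ℝ) ^ 2) :
    ∑ j ∈ range q, gN N (c + j * t) ≤ 8 * N + 2 * q * (1 + Real.log q) := by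
  have hq0 : (0:ℝ) < q := by exact_mod_cast hq
  set z0 : ℤ := ⌊q * c⌋ with hz0
  set r : ℕ → ℕ := fun j => ((j * u + z0) % q).toNat with hr
  have hrq : ∀ j, ((r j : ℕ) : ℤ) = (j * u + z0) % q := fun j => by
    rw [hr]; exact Int.toNat_of_nonneg (Int.emod_nonneg _ (by lia))
  have hrlt : ∀ j, r j < q := fun j => by
    have := hrq j
    have h2 := Int.emod_lt_of_pos (j * u + z0) (by lia : (0:ℤ) < q)
    lia
  have hinj : Set.InjOn r (range q : Finset ℕ) := by
    intro i hi j hj hij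
    simp only [coe_range, Set.mem_Iio] at hi hj
    have h1 : (i * u + z0) % (q:ℤ) = (j * u + z0) % q := by rw [← hrq, ← hrq, hij]
    have h2 : (q:ℤ) ∣ (i * u + z0) - (j * u + z0) := Int.ModEq.dvd (Int.ModEq.symm h1)
    have h3 : (q:ℤ) ∣ (i - j) * u := by convert h2 using 1; ring
    have h4 : (q:ℤ) ∣ (i - j) := by
      refine IsCoprime.dvd_of_dvd_mul_right ?_ h3
      exact (Int.isCoprime_iff_gcd_eq_one.mpr hg).symm
    have h5 : (i:ℤ) - j = 0 := Int.eq_zero_of_abs_lt_dvd h4 (by rw [abs_lt]; constructor <;> lia)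
    lia
  have himg : (range q).image r = range q := by
    apply eq_of_subset_of_card_le
    · intro x hx; rw [mem_image] at hx; obtain ⟨j, _, rfl⟩ := hx; simpa using hrlt j
    · rw [card_image_of_injOn hinj]
  have hterm : ∀ j ∈ range q, gN N (c + j * t) ≤ bR N q (r j) + bR N q (q - 1 - r j) := by
    intro j hj
    rw [mem_range] at hj
    by_cases h1 : r j < 2
    · have := gN_le N (c + j * t)
      have h2 := bR_nonneg N q (q - 1 - r j)
      have h3 : bR N q (r j) = 2 * N := by simp [bR, h1]
      linarith
    by_cases h1' : q - 1 - r j < 2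
    · have := gN_le N (c + j * t)
      have h2 := bR_nonneg N q (r j)
      have h3 : bR N q (q - 1 - r j) = 2 * N := by simp [bR, h1']
      linarith
    have e1 : bR N q (r j) = q / ((r j : ℝ) - 1) := by
      simp only [bR, h1, if_false]; rw [Nat.cast_sub (by lia)]; simp
    have e2 : bR N q (q - 1 - r j) = q / ((q:ℝ) - 2 - r j) := by
      simp only [bR, h1', if_false]; rw [Nat.cast_sub (by lia), Nat.cast_sub (by lia), Nat.cast_sub (by lia)]; simp; ring_nf
    have p1 : (1:ℝ) ≤ (r j : ℝ) - 1 := by have : (2:ℝ) ≤ r j := by exact_mod_cast (by lia : 2 ≤ r j)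
                                          linarith
    have p2 : (1:ℝ) ≤ (q:ℝ) - 2 - r j := by have : (r j : ℝ) + 3 ≤ q := by exact_mod_cast (by lia : r j + 3 ≤ q)
                                            linarith
    set v : ℝ := min ((r j : ℝ) - 1) ((q:ℝ) - 2 - r j) with hv
    have hv1 : 1 ≤ v := le_min p1 p2
    set D : ℤ := (j * u + z0) / q with hD
    have hdiv : (j:ℝ) * u + z0 = q * D + r j := by
      have := Int.mul_ediv_add_emod (j * u + z0) q
      rw [← hrq j] at this
      exact_mod_cast this.symm
    set y : ℝ := c + j * t - D with hy
    -- bounds on y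
    have f1 : (z0:ℝ) ≤ q * c := Int.floor_le _
    have f2 : q * c < z0 + 1 := Int.lt_floor_add_one _
    have g1 : |(j:ℝ) * (q * t - u)| ≤ 1 := by
      rw [abs_mul, abs_of_nonneg (by positivity)]
      have : q * t - u = q * (t - u / q) := by field_simp
      rw [this, abs_mul, abs_of_pos hq0]
      have hjq : (j:ℝ) ≤ q := by exact_mod_cast hj.le
      calc (j:ℝ) * (q * |t - u/q|) ≤ q * (q * (1 / (q:ℝ)^2)) := by gcongr
        _ = 1 := by field_simp
    have hqy : q * y = r j + (q * c - z0) + j * (q * t - u) := by rw [hy]; linear_combination hdiv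
    rw [abs_le] at g1
    have y1 : v / q ≤ y := by
      rw [div_le_iff₀ hq0]
      have := min_le_left ((r j : ℝ) - 1) ((q:ℝ) - 2 - r j)
      linarith
    have y2 : v / q ≤ 1 - y := by
      rw [div_le_iff₀ hq0]
      have := min_le_right ((r j : ℝ) - 1) ((q:ℝ) - 2 - r j)
      nlinarith
    have hs := sin_lower y (v/q) (by positivity) y1 y2
    have hs2 : |Real.sin (Real.pi * (c + j * t))| = |Real.sin (Real.pi * y)| := by
      have : Real.pi * (c + j * t) = Real.pi * y + D * Real.pi := by rw [hy]; ring
      rw [this, Real.sin_add_int_mul_pi, abs_mul]; simp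
    rw [← hs2] at hs
    have := gN_le_inv N _ _ (by positivity) hs
    refine this.trans ?_
    rw [e1, e2]
    have : 2 / (2 * (v / q)) = q / v := by field_simp
    rw [this]
    rcases min_cases ((r j : ℝ) - 1) ((q:ℝ) - 2 - r j) with ⟨h, _⟩ | ⟨h, _⟩
    · rw [hv, h]; have : 0 ≤ q / ((q:ℝ) - 2 - r j) := by positivity
      linarith
    · rw [hv, h]; have : 0 ≤ q / ((r j:ℝ) - 1) := by positivity
      linarith
  refine (sum_le_sum hterm).trans ?_
  have hsum : ∑ j ∈ range q, (bR N q (r j) + bR N q (q - 1 - r j)) = ∑ x ∈ range q, (bR N q x + bR N q (q - 1 - x)) := by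
    conv_rhs => rw [← himg]
    rw [sum_image hinj]
  rw [hsum, sum_add_distrib, sum_range_reflect]
  have := sum_bR N q hq
  linarith

lemma sum_gN_bound (N : ℕ) (t : ℝ) (u : ℤ) (q : ℕ) (hq : 1 ≤ q) (hg : Int.gcd u q = 1)
    (ht : |t - u / q| < 1 / (q:ℝ) ^ 2) (L : ℕ) :
    ∑ l ∈ Ioc 0 L, gN N (l * t) ≤ ((L:ℝ) / q + 1) * (8 * N + 2 * q * (1 + Real.log q)) := by
  have hq0 : (0:ℝ) < q := by exact_mod_cast hq
  have hblocks : ∀ B : ℕ, ∑ l ∈ range (B * q), gN N (l * t) ≤ B * (8 * N + 2 * q * (1 + Real.log q)) := by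
    intro B
    induction B with
    | zero => simp
    | succ B ih =>
      rw [add_mul, one_mul, sum_range_add]
      push_cast
      have := block_bound N t (B * q * t) u q hq hg ht
      have h2 : ∑ x ∈ range q, gN N (((B:ℝ) * q + x) * t) = ∑ j ∈ range q, gN N (B * q * t + j * t) := by
        apply sum_congr rfl; intro x _; ring_nf
      rw [h2]; linarith
  have h1 : ∑ l ∈ Ioc 0 L, gN N (l * t) ≤ ∑ l ∈ range ((L / q + 1) * q), gN N (l * t) := by
    apply sum_le_sum_of_subset_of_nonneg
    · intro x
      simp only [mem_Ioc, mem_range]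
      rintro ⟨_, h⟩
      have := Nat.lt_div_mul_add (a := L) (b := q) (by lia)
      nlinarith
    · intro _ _ _; exact gN_nonneg _ _
  refine (h1.trans (hblocks _)).trans ?_
  have hlog : 0 ≤ Real.log q := Real.log_natCast_nonneg q
  gcongr
  push_cast
  gcongr
  exact Nat.cast_div_le


lemma BW_nonneg (N d : ℕ) (x : ℝ) : 0 ≤ BW N d x := by
  induction d generalizing x with
  | zero => exact gN_nonneg _ _
  | succ d ih => rw [BW]; exact sum_nonneg fun _ _ => ih _

lemma BW_le (N d : ℕ) (x : ℝ) : BW N d x ≤ (2 * N : ℝ) ^ (d + 1) := by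
  induction d generalizing x with
  | zero => simpa [BW] using gN_le N x
  | succ d ih =>
    rw [BW]
    have hcard : ((#(Ioo (-(N : ℤ)) N) : ℕ) : ℝ) ≤ 2 * N := by
      rw [Int.card_Ioo]
      exact_mod_cast (by lia : ((N:ℤ) - (-N) - 1).toNat ≤ 2 * N)
    calc _ ≤ ∑ h ∈ Ioo (-(N : ℤ)) N, (2 * N : ℝ) ^ (d + 1) := sum_le_sum fun _ _ => ih _
      _ = #(Ioo (-(N : ℤ)) N) * (2 * N : ℝ) ^ (d + 1) := by rw [sum_const, nsmul_eq_mul]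
      _ ≤ (2 * N) * (2 * N : ℝ) ^ (d + 1) := by gcongr
      _ = _ := by ring

lemma BW_neg (N d : ℕ) (x : ℝ) : BW N d (-x) = BW N d x := by
  induction d generalizing x with
  | zero => exact gN_neg _ _
  | succ d ih => rw [BW, BW]; apply sum_congr rfl; intro h _; rw [← ih]; ring_nf

lemma sum_sym (N : ℕ) (hN : 1 ≤ N) (F : ℤ → ℝ) (hF : ∀ h, F (-h) = F h) :
    ∑ h ∈ Ioo (-(N : ℤ)) N, F h = F 0 + 2 * ∑ h ∈ Ioo 0 N, F (h : ℕ) := by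
  have hsplit : Ioo (-(N : ℤ)) N = insert 0 ((Ioo (-(N:ℤ)) 0) ∪ (Ioo 0 (N:ℤ))) := by
    ext x; simp; lia
  have h1 : ∑ h ∈ Ioo 0 (N:ℤ), F h = ∑ h ∈ Ioo 0 N, F (h : ℕ) := by
    symm
    refine sum_nbij' (fun h : ℕ => (h:ℤ)) (fun h => h.toNat) ?_ ?_ ?_ ?_ ?_
    · intro h; simp
    · intro h; simp; lia
    · intro h _; simp
    · intro h hh; simp at hh ⊢; lia
    · intro h _; rfl
  have h2 : ∑ h ∈ Ioo (-(N:ℤ)) 0, F h = ∑ h ∈ Ioo 0 (N:ℤ), F h := by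
    refine sum_nbij' (fun h => -h) (fun h => -h) ?_ ?_ ?_ ?_ ?_
    · intro h; simp; lia
    · intro h; simp; lia
    · intro h _; simp
    · intro h _; simp
    · intro h _; rw [hF]
  rw [hsplit, sum_insert (by simp), sum_union, h2, h1]
  · ring
  · rw [disjoint_left]; intro x; simp; lia

lemma divisor_sum (N L d : ℕ) (G : ℕ → ℝ) (hG : ∀ l, 0 ≤ G l) :
    ∑ h ∈ Ioo 0 N, ∑ l ∈ Ioc 0 L, ((#l.divisors : ℕ) : ℝ) ^ d * G (h * l) ≤
      ∑ l ∈ Ioc 0 (N * L), ((#l.divisors : ℕ) : ℝ) ^ (d + 1) * G l := by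
  rw [← sum_product']
  rw [← sum_fiberwise_of_maps_to (t := Ioc 0 (N * L)) (g := fun p : ℕ × ℕ => p.1 * p.2)]
  · apply sum_le_sum
    intro m hm
    rw [mem_Ioc] at hm
    have hcard : #{p ∈ Ioo 0 N ×ˢ Ioc 0 L | p.1 * p.2 = m} ≤ #m.divisors := by
      apply card_le_card_of_injOn (fun p => p.1)
      · intro p hp
        simp only [coe_filter, Set.mem_ofPred_eq] at hp
        simp only [mem_coe, Nat.mem_divisors]
        exact ⟨⟨p.2, hp.2.symm⟩, by lia⟩
      · intro p hp p' hp' h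
        simp only [coe_filter, Set.mem_ofPred_eq, mem_product, mem_Ioo] at hp hp'
        have h : p.1 = p'.1 := h
        ext
        · exact h
        · have h1 := hp.2; have h2 := hp'.2
          rw [← h, ← h1] at h2
          exact (Nat.eq_of_mul_eq_mul_left hp.1.1.1 h2).symm
    calc _ ≤ ∑ p ∈ Ioo 0 N ×ˢ Ioc 0 L with p.1 * p.2 = m, ((#m.divisors : ℕ) : ℝ) ^ d * G m := by
          apply sum_le_sum
          intro p hp
          rw [mem_filter] at hp
          rw [hp.2]
          have : #p.2.divisors ≤ #m.divisors := card_le_card (Nat.divisors_subset_of_dvd (by lia) ⟨p.1, by rw [← hp.2]; ring⟩)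
          have h0 := hG m
          gcongr
      _ = #{p ∈ Ioo 0 N ×ˢ Ioc 0 L | p.1 * p.2 = m} * (((#m.divisors : ℕ) : ℝ) ^ d * G m) := by rw [sum_const, nsmul_eq_mul]
      _ ≤ #m.divisors * (((#m.divisors : ℕ) : ℝ) ^ d * G m) := by
          have h0 := hG m
          gcongr
      _ = _ := by ring
  · intro p hp
    simp only [mem_product, mem_Ioo, mem_Ioc] at hp ⊢
    exact ⟨Nat.mul_pos hp.1.1 hp.2.1, Nat.mul_le_mul hp.1.2.le hp.2.2⟩

lemma BW_bound (N : ℕ) (hN : 1 ≤ N) (A : ℝ) (d : ℕ) : ∀ c : ℕ,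
    BW N d (c * A) ≤ d * (2 * N : ℝ) ^ d +
      2 ^ d * ∑ l ∈ Ioc 0 (N ^ d), ((#l.divisors : ℕ) : ℝ) ^ d * gN N ((((d + 1).factorial * c * l : ℕ) : ℝ) * A) := by
  induction d with
  | zero => intro c; simp [BW, show Ioc 0 1 = {1} from rfl]
  | succ d ih =>
    intro c
    rw [BW, sum_sym N hN _ (fun h => by rw [← BW_neg]; congr 1; push_cast; ring)]
    have h0 := BW_le N d ((d + 2) * ((0:ℤ):ℝ) * (c * A))
    have hstep : ∑ h ∈ Ioo 0 N, BW N d ((d + 2) * ((h:ℤ):ℝ) * (c * A)) ≤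
        ∑ h ∈ Ioo 0 N, (d * (2 * N : ℝ) ^ d +
      2 ^ d * ∑ l ∈ Ioc 0 (N ^ d), ((#l.divisors : ℕ) : ℝ) ^ d * gN N (((((d + 1 + 1).factorial * c * (h * l)) : ℕ) : ℝ) * A)) := by
      apply sum_le_sum
      intro h _
      have := ih ((d + 2) * h * c)
      convert! this using 2
      · push_cast; ring
      · congr 1; apply sum_congr rfl; intro l _
        congr 3
        rw [Nat.factorial_succ (d+1)]
        push_cast; ring
    have hd := divisor_sum N (N ^ d) d (fun l => gN N (((((d + 1 + 1).factorial * c * l) : ℕ) : ℝ) * A)) (fun _ => gN_nonneg _ _)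
    rw [sum_add_distrib, sum_const, nsmul_eq_mul, ← mul_sum] at hstep
    have hc : ((#(Ioo 0 N) : ℕ) : ℝ) ≤ N := by
      rw [Nat.card_Ioo]; exact_mod_cast (by lia)
    have e1 : (#(Ioo 0 N) : ℝ) * (d * (2 * N : ℝ) ^ d) ≤ N * (d * (2 * N : ℝ) ^ d) := by gcongr
    have e2 := mul_le_mul_of_nonneg_left hd (by positivity : (0:ℝ) ≤ 2 ^ d)
    rw [show N ^ (d + 1) = N * N ^ d by ring]
    rw [show (2:ℝ) ^ (d+1) = 2 * 2 ^ d by ring, mul_assoc (2:ℝ)]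
    have e3 : ((d + 1 : ℕ) : ℝ) * (2 * N : ℝ) ^ (d + 1) = (2 * N : ℝ) ^ (d+1) + 2 * (N * (d * (2 * N : ℝ) ^ d)) := by
      push_cast; ring
    rw [e3]
    linarith

/-- Weyl's inequality, in the range needed. -/
lemma weyl_ineq (d : ℕ) (η : ℝ) (hη : 0 < η) (Δ : ℝ) (hΔ1 : Δ ≤ 1) : ∃ C : ℝ, 0 < C ∧
    ∀ (t x : ℝ) (u : ℤ) (q N : ℕ), 1 ≤ q → Int.gcd u q = 1 → |t - u / q| < 1 / (q:ℝ) ^ 2 → 1 ≤ N →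
      (N:ℝ) ^ Δ ≤ q → (q:ℝ) ≤ (N:ℝ) ^ ((d + 2 : ℝ) - Δ) →
      ‖∑ k ∈ range N, ee (t * (k:ℝ) ^ (d + 2) + x * k)‖ ≤ C * (N:ℝ) ^ (1 - Δ / 2 ^ (d + 1) + η) := by
  set η1 : ℝ := η / (2 * (d + 1) ^ 2 + 2) with hη1
  have hη1' : 0 < η1 := by positivity
  obtain ⟨C0, hC0, hdiv⟩ := divisor_bound η1 hη1'
  set κ : ℝ := ((d + 2).factorial : ℝ) with hκ
  have hκ1 : 1 ≤ κ := by rw [hκ]; exact_mod_cast Nat.one_le_iff_ne_zero.mpr (Nat.factorial_ne_zero _)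
  -- log bound: 1 + log q ≤ C2 N ^ (η/2)
  set C2 : ℝ := 1 + (d + 2 - Δ) * (2 / η) with hC2
  have hd0 : (0:ℝ) ≤ d := by positivity
  have hC2' : 1 ≤ C2 := by
    have : 0 ≤ (d + 2 - Δ) * (2 / η) := mul_nonneg (by linarith) (by positivity)
    linarith
  set C3 : ℝ := (d + 1) * 2 ^ (d + 1) + 2 ^ (d + 1) * C0 ^ (d + 1) * (40 * κ * C2) with hC3
  have hC3' : 0 < C3 := by positivity
  refine ⟨2 * C3 ^ ((1:ℝ) / 2 ^ (d+1)) + 1, by positivity, ?_⟩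
  intro t x u q N hq hg ht hN hq1 hq2
  have hN0 : (0:ℝ) < N := by exact_mod_cast hN
  have hN1 : (1:ℝ) ≤ N := by exact_mod_cast hN
  have hq0 : (0:ℝ) < q := by exact_mod_cast hq
  have hS : ∑ k ∈ range N, ee (t * (k:ℝ) ^ (d + 2) + x * k) = ∑ k ∈ Ico (0:ℤ) N, ee (t * (k:ℝ) ^ (d + 2) + x * k) := by
    refine sum_nbij' (fun h : ℕ => (h:ℤ)) (fun h => h.toNat) ?_ ?_ ?_ ?_ ?_
    · intro h; simp
    · intro h; simp; lia
    · intro h _; simp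
    · intro h hh; simp at hh ⊢; lia
    · intro h _; simp
  rw [hS]
  set X := ‖∑ k ∈ Ico (0:ℤ) N, ee (t * (k:ℝ) ^ (d + 2) + x * k)‖ with hX
  have hX0 : 0 ≤ X := norm_nonneg _
  have hW := weyl_diff N hN (d + 1) t _ (polyLike_phase d t x) 0 N (by simp)
  have hB := BW_bound N hN t (d + 1) 1
  simp only [Nat.cast_one, one_mul, mul_one] at hB
  -- bound the divisor sum
  have hdsum : ∑ l ∈ Ioc 0 (N ^ (d+1)), ((#l.divisors : ℕ) : ℝ) ^ (d+1) * gN N ((((d + 1 + 1).factorial * l : ℕ) : ℝ) * t)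
      ≤ C0 ^ (d+1) * (N:ℝ) ^ (η / 2) * ∑ l ∈ Ioc 0 ((d+2).factorial * N ^ (d+1)), gN N (l * t) := by
    have h1 : ∑ l ∈ Ioc 0 (N ^ (d+1)), ((#l.divisors : ℕ) : ℝ) ^ (d+1) * gN N ((((d + 1 + 1).factorial * l : ℕ) : ℝ) * t)
        ≤ ∑ l ∈ Ioc 0 (N ^ (d+1)), C0 ^ (d+1) * (N:ℝ) ^ (η / 2) * gN N ((((d + 2).factorial * l : ℕ) : ℝ) * t) := by
      apply sum_le_sum
      intro l hl
      rw [mem_Ioc] at hl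
      refine mul_le_mul_of_nonneg_right ?_ (gN_nonneg _ _)
      have hl2 : (l:ℝ) ≤ (N:ℝ) ^ ((d + 1 : ℝ)) := by
        have : (l:ℝ) ≤ (N:ℝ) ^ (d+1) := by exact_mod_cast hl.2
        rw [← Real.rpow_natCast] at this; simpa using this
      calc ((#l.divisors : ℕ) : ℝ) ^ (d+1) ≤ (C0 * (l:ℝ) ^ η1) ^ (d+1) := by gcongr; exact hdiv l hl.1
        _ ≤ (C0 * ((N:ℝ) ^ ((d + 1 : ℝ))) ^ η1) ^ (d+1) := by gcongr
        _ = C0 ^ (d+1) * (N:ℝ) ^ ((d + 1 : ℝ) * η1 * (d+1)) := by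
            rw [mul_pow, ← Real.rpow_mul hN0.le, ← Real.rpow_natCast (_ ^ _) (d+1), ← Real.rpow_mul hN0.le]
            push_cast; rfl
        _ ≤ _ := by
            gcongr
            · rw [hη1]
              rw [mul_div_assoc', div_mul_eq_mul_div, div_le_div_iff₀ (by positivity) (by positivity)]
              nlinarith
    refine h1.trans ?_
    rw [← mul_sum]
    gcongr
    calc _ = ∑ l ∈ (Ioc 0 (N ^ (d+1))).image (fun l => (d+2).factorial * l), gN N (l * t) := by
          rw [sum_image]
          intro a _ b _ h
          exact Nat.eq_of_mul_eq_mul_left (Nat.factorial_pos _) h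
      _ ≤ _ := by
          apply sum_le_sum_of_subset_of_nonneg
          · intro y hy
            rw [mem_image] at hy
            obtain ⟨l, hl, rfl⟩ := hy
            rw [mem_Ioc] at hl ⊢
            exact ⟨Nat.mul_pos (Nat.factorial_pos _) hl.1, Nat.mul_le_mul_left _ hl.2⟩
          · intro _ _ _; exact gN_nonneg _ _
  have hsg := sum_gN_bound N t u q hq hg ht ((d+2).factorial * N ^ (d+1))
  have hlogq : 1 + Real.log q ≤ C2 * (N:ℝ) ^ (η / 2) := by
    have h1 : Real.log q ≤ (d + 2 - Δ) * Real.log N := by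
      calc Real.log q ≤ Real.log ((N:ℝ) ^ ((d + 2 : ℝ) - Δ)) := Real.log_le_log hq0 hq2
        _ = _ := Real.log_rpow hN0 _
    have h2 : Real.log N ≤ (N:ℝ) ^ (η/2) / (η/2) := Real.log_le_rpow_div hN0.le (by positivity)
    have h3 : 1 ≤ (N:ℝ) ^ (η/2) := Real.one_le_rpow hN1 (by positivity)
    have h4 : (d + 2 - Δ) * Real.log N ≤ (d + 2 - Δ) * ((N:ℝ) ^ (η/2) / (η/2)) := by
      apply mul_le_mul_of_nonneg_left h2; linarith
    have h5 : C2 * (N:ℝ) ^ (η / 2) = (N:ℝ) ^ (η / 2) + (d + 2 - Δ) * ((N:ℝ) ^ (η/2) / (η/2)) := by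
      rw [hC2]; field_simp
    linarith
  have hlog0 : 0 ≤ Real.log q := Real.log_natCast_nonneg q
  set Z : ℝ := (N:ℝ) ^ ((d + 2 : ℝ) - Δ) with hZ
  have hZ1 : (N:ℝ) ^ (d + 1) ≤ Z := by
    rw [hZ, ← Real.rpow_natCast]
    apply Real.rpow_le_rpow_of_exponent_le hN1; push_cast; linarith
  have hZ2 : (N:ℝ) ^ (d + 2) / q ≤ Z := by
    rw [div_le_iff₀ hq0]
    calc (N:ℝ) ^ (d+2) = Z * (N:ℝ) ^ Δ := by
          rw [hZ, ← Real.rpow_add hN0, ← Real.rpow_natCast]; congr 1; push_cast; ring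
      _ ≤ _ := by gcongr
  have hZ3 : (N:ℝ) ≤ Z := by
    refine le_trans ?_ hZ1
    exact le_self_pow₀ hN1 (by lia)
  have hsum2 : ∑ l ∈ Ioc 0 ((d+2).factorial * N ^ (d+1)), gN N (l * t) ≤ 40 * κ * C2 * (N:ℝ) ^ (η/2) * Z := by
    refine hsg.trans ?_
    push_cast
    have hE : 1 ≤ C2 * (N:ℝ) ^ (η / 2) := by linarith
    set E := C2 * (N:ℝ) ^ (η / 2) with hEdef
    have hZ0 : 0 < Z := by positivity
    calc (κ * (N:ℝ) ^ (d+1) / q + 1) * (8 * N + 2 * q * (1 + Real.log q))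
        ≤ (κ * (N:ℝ) ^ (d+1) / q + 1) * (8 * N + 2 * q * E) := by gcongr
      _ = 8 * κ * ((N:ℝ) ^ (d+2) / q) + 2 * κ * (N:ℝ) ^ (d+1) * E + 8 * N + 2 * q * E := by
          field_simp; ring
      _ ≤ 8 * κ * Z + 2 * κ * Z * E + 8 * Z + 2 * Z * E := by gcongr
      _ ≤ 8 * κ * (Z * E) + 2 * κ * (Z * E) + 8 * (κ * (Z * E)) + 2 * (κ * (Z * E)) := by
          have e1 : Z ≤ Z * E := le_mul_of_one_le_right hZ0.le hE
          have e2 : Z * E ≤ κ * (Z * E) := le_mul_of_one_le_left (by positivity) hκ1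
          have e3 : 8 * κ * Z ≤ 8 * κ * (Z * E) := by gcongr
          linarith
      _ ≤ 40 * κ * C2 * (N:ℝ) ^ (η/2) * Z := by
          have : 40 * κ * C2 * (N:ℝ) ^ (η/2) * Z = 40 * (κ * (Z * E)) := by rw [hEdef]; ring
          rw [this]
          have : 0 ≤ κ * (Z * E) := by positivity
          linarith
  have hBfin : BW N (d+1) t ≤ C3 * (N:ℝ) ^ η * Z := by
    have h1 : 1 ≤ (N:ℝ) ^ η := Real.one_le_rpow hN1 hη.le
    have hNη : (N:ℝ) ^ (η/2) * (N:ℝ) ^ (η/2) = (N:ℝ) ^ η := by rw [← Real.rpow_add hN0]; congr 1; ring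
    calc BW N (d+1) t ≤ ((d + 1 : ℕ):ℝ) * (2 * N : ℝ) ^ (d+1) + 2 ^ (d+1) * (C0 ^ (d+1) * (N:ℝ) ^ (η / 2) * (40 * κ * C2 * (N:ℝ) ^ (η/2) * Z)) := by
          refine hB.trans ?_
          gcongr
          exact hdsum.trans (by gcongr)
      _ = (d+1) * 2 ^ (d+1) * ((N:ℝ) ^ (d+1) * 1) + 2 ^ (d + 1) * C0 ^ (d + 1) * (40 * κ * C2) * ((N:ℝ) ^ (η/2) * (N:ℝ) ^ (η/2)) * Z := by
          push_cast; ring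
      _ ≤ (d+1) * 2 ^ (d+1) * (Z * (N:ℝ) ^ η) + 2 ^ (d + 1) * C0 ^ (d + 1) * (40 * κ * C2) * (N:ℝ) ^ η * Z := by
          rw [hNη]; gcongr
      _ = _ := by rw [hC3]; ring
  have hpos : (0:ℝ) < (2 * N : ℝ) ^ (d + 1 + 1) := by positivity
  -- X^(2^(d+1)) ≤ 2^(2^(d+1)) * C3 * N^(2^(d+1) - Δ + η)
  have hXp : X ^ (2 ^ (d+1)) ≤ 2 ^ (2 ^ (d+1)) * C3 * (N:ℝ) ^ ((2:ℝ) ^ (d+1) - Δ + η) := by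
    have h1 : X ^ (2 ^ (d+1)) * (N:ℝ) ^ (d + 2) ≤ (2 * N : ℝ) ^ (2 ^ (d+1)) * (C3 * (N:ℝ) ^ η * Z) := by
      calc X ^ (2 ^ (d+1)) * (N:ℝ) ^ (d + 2) ≤ X ^ (2 ^ (d+1)) * (2 * N : ℝ) ^ (d + 1 + 1) := by
            gcongr
            · linarith
        _ ≤ _ := hW.trans (by gcongr)
    have h2 : (2 * N : ℝ) ^ (2 ^ (d+1)) * (C3 * (N:ℝ) ^ η * Z) = (2 ^ (2 ^ (d+1)) * C3 * (N:ℝ) ^ ((2:ℝ) ^ (d+1) - Δ + η)) * (N:ℝ) ^ (d + 2) := by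
      have h3 : (N:ℝ) ^ (2 ^ (d+1)) * (N:ℝ) ^ η * Z = (N:ℝ) ^ ((2:ℝ) ^ (d+1) - Δ + η) * (N:ℝ) ^ (d + 2) := by
        rw [hZ, ← Real.rpow_natCast (N:ℝ) (2 ^ (d+1)), ← Real.rpow_natCast (N:ℝ) (d+2), ← Real.rpow_add hN0, ← Real.rpow_add hN0, ← Real.rpow_add hN0]
        congr 1; push_cast; ring
      rw [mul_pow]; linear_combination (2 ^ (2 ^ (d+1)) * C3) * h3
    rw [h2] at h1
    exact le_of_mul_le_mul_right h1 (by positivity)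
  set P : ℝ := (2:ℝ) ^ (d+1) with hP
  have hP0 : 0 < P := by positivity
  have hP1 : 1 ≤ P := one_le_pow₀ (by norm_num)
  have hPn : ((2 ^ (d+1) : ℕ) : ℝ) = P := by rw [hP]; push_cast; rfl
  have hroot : X = (X ^ (2 ^ (d+1))) ^ (1 / P) := by
    rw [← Real.rpow_natCast, ← Real.rpow_mul hX0, hPn, mul_one_div_cancel hP0.ne', Real.rpow_one]
  rw [hroot]
  calc (X ^ (2 ^ (d+1))) ^ (1 / P) ≤ (2 ^ (2 ^ (d+1)) * C3 * (N:ℝ) ^ (P - Δ + η)) ^ (1/P) := by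
        gcongr
    _ = 2 * C3 ^ (1/P) * (N:ℝ) ^ ((P - Δ + η) * (1/P)) := by
        rw [Real.mul_rpow (by positivity) (by positivity), Real.mul_rpow (by positivity) (by positivity),
          ← Real.rpow_mul hN0.le]
        congr 2
        rw [← Real.rpow_natCast, ← Real.rpow_mul (by norm_num), hPn, mul_one_div_cancel hP0.ne', Real.rpow_one]
    _ ≤ (2 * C3 ^ (1/P) + 1) * (N:ℝ) ^ (1 - Δ / P + η) := by
        gcongr
        · linarith
        · have : (P - Δ + η) * (1/P) = 1 - Δ / P + η / P := by field_simp
          rw [this]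
          have : η / P ≤ η := div_le_self hη.le hP1
          linarith


noncomputable def VN (n : ℕ) (t ω : ℝ) (K : ℕ) : ℂ :=
  ∑ k ∈ range K, ee (t * (k:ℝ) ^ n) * Complex.ofReal (Real.sin (2 * Real.pi * ω * k) / (Real.pi * k))

lemma VN_sub (n : ℕ) (t ω : ℝ) (M K : ℕ) (h : M ≤ K) : VN n t ω K - VN n t ω M =
    ∑ k ∈ Ico M K, ee (t * (k:ℝ) ^ n) * Complex.ofReal (Real.sin (2 * Real.pi * ω * k) / (Real.pi * k)) := by
  unfold VN; rw [sum_Ico_eq_sub _ h]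

lemma telescope_rpow (ρ : ℝ) (hρ : 0 < ρ) (k : ℕ) (hk : 1 ≤ k) :
    ((k:ℝ) + 1) ^ (-ρ) / k ≤ (2 / ρ) * ((k:ℝ) ^ (-ρ) - ((k:ℝ) + 1) ^ (-ρ)) := by
  have hk0 : (0:ℝ) < k := by exact_mod_cast hk
  have hk1 : (1:ℝ) ≤ k := by exact_mod_cast hk
  have hy0 : 0 < (k:ℝ) / (k + 1) := by positivity
  have h1 : 1 + ρ * (1 / (k + 1)) ≤ ((k:ℝ) / (k + 1)) ^ (-ρ) := by
    rw [Real.rpow_def_of_pos hy0]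
    have h2 := Real.add_one_le_exp (Real.log ((k:ℝ) / (k + 1)) * -ρ)
    have h3 := Real.log_le_sub_one_of_pos hy0
    have h4 : (k:ℝ) / (k + 1) - 1 = - (1 / (k + 1)) := by field_simp; ring
    rw [h4] at h3
    nlinarith
  have h5 : (k:ℝ) ^ (-ρ) = ((k:ℝ) / (k + 1)) ^ (-ρ) * ((k:ℝ) + 1) ^ (-ρ) := by
    rw [← Real.mul_rpow hy0.le (by positivity)]; congr 1; field_simp
  have hp : 0 < ((k:ℝ) + 1) ^ (-ρ) := by positivity
  have h6 : ρ * (1 / (k + 1)) * ((k:ℝ) + 1) ^ (-ρ) ≤ (k:ℝ) ^ (-ρ) - ((k:ℝ) + 1) ^ (-ρ) := by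
    rw [h5]; nlinarith
  calc ((k:ℝ) + 1) ^ (-ρ) / k ≤ (2 / ρ) * (ρ * (1 / (k + 1)) * ((k:ℝ) + 1) ^ (-ρ)) := by
        have : (2 / ρ) * (ρ * (1 / (k + 1)) * ((k:ℝ) + 1) ^ (-ρ)) = ((k:ℝ) + 1) ^ (-ρ) * (2 / (k + 1)) := by field_simp
        rw [this, div_eq_mul_one_div]
        gcongr 1
        rw [div_le_div_iff₀ hk0 (by positivity)]; linarith
    _ ≤ _ := by gcongr

lemma abel_power (a : ℕ → ℂ) (M K : ℕ) (hM : 1 ≤ M) (hMK : M ≤ K) (C ρ : ℝ) (hC : 0 ≤ C) (hρ : 0 < ρ)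
    (hB : ∀ j, M ≤ j → j ≤ K → ‖∑ k ∈ range j, a k‖ ≤ C * (j:ℝ) ^ (1 - ρ)) :
    ‖∑ k ∈ Ico M K, a k * ((k : ℂ))⁻¹‖ ≤ C * (2 + 2 / ρ) * (M:ℝ) ^ (-ρ) := by
  have key : ∀ K, M ≤ K → ∑ k ∈ Ico M K, a k * ((k : ℂ))⁻¹ = (∑ k ∈ range K, a k) * ((K : ℂ))⁻¹ - (∑ k ∈ range M, a k) * ((M : ℂ))⁻¹
      - ∑ k ∈ Ico M K, (∑ j ∈ range (k+1), a j) * ((((k+1 : ℕ) : ℂ))⁻¹ - ((k : ℂ))⁻¹) := by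
    intro K hK
    induction K, hK using Nat.le_induction with
    | base => simp
    | succ K hK ih =>
      rw [sum_Ico_succ_top hK, sum_Ico_succ_top hK (f := fun k => (∑ j ∈ range (k+1), a j) * ((((k+1 : ℕ) : ℂ))⁻¹ - ((k : ℂ))⁻¹)), ih,
        sum_range_succ]
      ring
  have hb : ∀ j, M ≤ j → j ≤ K → ‖(∑ k ∈ range j, a k) * ((j : ℂ))⁻¹‖ ≤ C * (j:ℝ) ^ (-ρ) := by
    intro j h1 h2
    have hj : (0:ℝ) < j := by exact_mod_cast (by lia : 0 < j)
    rw [norm_mul, norm_inv, Complex.norm_natCast]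
    calc _ ≤ C * (j:ℝ) ^ (1 - ρ) * (j:ℝ)⁻¹ := by gcongr; exact hB j h1 h2
      _ = C * (j:ℝ) ^ (-ρ) := by
        rw [mul_assoc, ← Real.rpow_neg_one, ← Real.rpow_add hj]; congr 2; ring
  have hM0 : (0:ℝ) < M := by exact_mod_cast hM
  have hKM : (K:ℝ) ^ (-ρ) ≤ (M:ℝ) ^ (-ρ) := by
    apply Real.rpow_le_rpow_of_nonpos hM0 (by exact_mod_cast hMK) (by linarith)
  have htel : ∀ K, M ≤ K → ∑ k ∈ Ico M K, (2 / ρ) * ((k:ℝ) ^ (-ρ) - ((k:ℝ) + 1) ^ (-ρ)) = (2/ρ) * ((M:ℝ) ^ (-ρ) - (K:ℝ) ^ (-ρ)) := by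
    intro K hK
    induction K, hK using Nat.le_induction with
    | base => simp
    | succ K hK ih => rw [sum_Ico_succ_top hK, ih]; push_cast; ring
  rw [key K hMK]
  have h3 : ‖∑ k ∈ Ico M K, (∑ j ∈ range (k+1), a j) * ((((k+1 : ℕ) : ℂ))⁻¹ - ((k : ℂ))⁻¹)‖ ≤ C * ((2/ρ) * (M:ℝ) ^ (-ρ)) := by
    refine (norm_sum_le _ _).trans ?_
    calc _ ≤ ∑ k ∈ Ico M K, C * ((2 / ρ) * ((k:ℝ) ^ (-ρ) - ((k:ℝ) + 1) ^ (-ρ))) := by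
          apply sum_le_sum
          intro k hk
          rw [mem_Ico] at hk
          have hk0 : (0:ℝ) < k := by exact_mod_cast (by lia : 0 < k)
          have e : ((((k+1 : ℕ) : ℂ))⁻¹ - ((k : ℂ))⁻¹) = (((k+1 : ℕ) : ℂ))⁻¹ * (- ((k : ℂ))⁻¹) := by
            have : (k:ℂ) ≠ 0 := by exact_mod_cast hk0.ne'
            have : (k:ℂ) + 1 ≠ 0 := by exact_mod_cast (by lia : k + 1 ≠ 0)
            push_cast; field_simp; ring
          rw [e, ← mul_assoc, norm_mul, norm_neg, norm_inv, Complex.norm_natCast]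
          calc _ ≤ C * ((k + 1 : ℕ):ℝ) ^ (-ρ) * (k:ℝ)⁻¹ := by gcongr; exact hb (k+1) (by lia) (by lia)
            _ = C * (((k:ℝ) + 1) ^ (-ρ) / k) := by push_cast; ring
            _ ≤ _ := by gcongr; exact telescope_rpow ρ hρ k (by lia)
      _ = C * ((2/ρ) * ((M:ℝ) ^ (-ρ) - (K:ℝ) ^ (-ρ))) := by rw [← mul_sum, htel K hMK]
      _ ≤ _ := by
          gcongr
          have : 0 ≤ (K:ℝ) ^ (-ρ) := by positivity
          linarith
  have h1 := hb K hMK le_rfl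
  have h2 := hb M le_rfl hMK
  have h4 : C * (K:ℝ) ^ (-ρ) ≤ C * (M:ℝ) ^ (-ρ) := by gcongr
  refine (norm_sub_le _ _).trans ?_
  have := norm_sub_le ((∑ k ∈ range K, a k) * ((K : ℂ))⁻¹) ((∑ k ∈ range M, a k) * ((M : ℂ))⁻¹)
  nlinarith

lemma VN_term (n : ℕ) (t ω : ℝ) (k : ℕ) : ee (t * (k:ℝ) ^ n) * Complex.ofReal (Real.sin (2 * Real.pi * ω * k) / (Real.pi * k))
    = (2 * Real.pi * Complex.I)⁻¹ * (ee (t * (k:ℝ) ^ n + ω * k) * ((k : ℂ))⁻¹ - ee (t * (k:ℝ) ^ n + (-ω) * k) * ((k : ℂ))⁻¹) := by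
  have h1 : Complex.ofReal (Real.sin (2 * Real.pi * ω * k)) = (ee (ω * k) - ee (-(ω * k))) / (2 * Complex.I) := by
    rw [← ee_sin]; ring_nf
  rw [Complex.ofReal_div, h1, ee_add, ee_add, show -ω * (k:ℝ) = -(ω * k) by ring]
  push_cast
  ring

lemma norm_two_pi_I_inv : ‖(2 * Real.pi * Complex.I)⁻¹‖ = (2 * Real.pi)⁻¹ := by
  simp [abs_of_pos Real.pi_pos]

lemma two_pi_inv_le : (2 * Real.pi)⁻¹ ≤ 1 / 2 := by
  rw [inv_le_comm₀ (by positivity) (by norm_num)]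
  have := Real.pi_gt_three
  norm_num; linarith

lemma VN_tail_weyl (n : ℕ) (t ω : ℝ) (M K : ℕ) (hM : 1 ≤ M) (hMK : M ≤ K) (C ρ : ℝ) (hC : 0 ≤ C) (hρ : 0 < ρ)
    (hB : ∀ x : ℝ, ∀ j : ℕ, M ≤ j → j ≤ K → ‖∑ k ∈ range j, ee (t * (k:ℝ) ^ n + x * k)‖ ≤ C * (j:ℝ) ^ (1 - ρ)) :
    ‖VN n t ω K - VN n t ω M‖ ≤ C * (2 + 2 / ρ) * (M:ℝ) ^ (-ρ) := by
  rw [VN_sub _ _ _ _ _ hMK]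
  simp only [VN_term]
  rw [← mul_sum, sum_sub_distrib, norm_mul, norm_two_pi_I_inv]
  have h1 := abel_power _ M K hM hMK C ρ hC hρ (hB ω)
  have h2 := abel_power _ M K hM hMK C ρ hC hρ (hB (-ω))
  set Q := C * (2 + 2 / ρ) * (M:ℝ) ^ (-ρ)
  calc _ ≤ (1/2) * (Q + Q) := by
        gcongr
        · exact two_pi_inv_le
        · exact (norm_sub_le _ _).trans (add_le_add h1 h2)
    _ = Q := by ring

lemma ee_im (a : ℝ) : (ee a).im = Real.sin (2 * Real.pi * a) := by
  rw [ee_eq, Complex.exp_ofReal_mul_I_im]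

/-- tail of sine series -/
noncomputable def TS (θ : ℝ) (M K : ℕ) : ℂ := ∑ k ∈ Ico M K, Complex.ofReal (Real.sin (2 * Real.pi * θ * k)) * ((k:ℂ))⁻¹

lemma sin_part (θ : ℝ) (M K : ℕ) : ‖∑ k ∈ Ico M K, Complex.ofReal (Real.sin (2 * Real.pi * θ * k))‖ * |Real.sin (Real.pi * θ)| ≤ 1 := by
  have h1 : ∑ k ∈ Ico M K, Real.sin (2 * Real.pi * θ * k) = (∑ k ∈ Ico M K, ee (θ * k)).im := by
    rw [Complex.im_sum]; apply sum_congr rfl; intro k _; rw [ee_im]; ring_nf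
  have h2 : ‖∑ k ∈ Ico M K, ee (θ * k)‖ * |Real.sin (Real.pi * θ)| ≤ 1 := by
    rcases le_total K M with h | h
    · rw [Ico_eq_empty (by lia)]; simp
    have tel : ∀ K, M ≤ K → (∑ k ∈ Ico M K, ee (θ * k)) * (ee θ - 1) = ee (θ * K) - ee (θ * M) := by
      intro K hK
      induction K, hK using Nat.le_induction with
      | base => simp
      | succ K hK ih =>
        rw [sum_Ico_succ_top hK, add_mul, ih]
        have : ee (θ * ((K + 1 : ℕ) : ℝ)) = ee (θ * K) * ee θ := by
          rw [← ee_add]; push_cast; ring_nf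
        rw [this]; ring
    have h2 : ‖∑ k ∈ Ico M K, ee (θ * k)‖ * (2 * |Real.sin (Real.pi * θ)|) ≤ 2 := by
      rw [← norm_ee_sub_one, ← norm_mul, tel K h]
      refine (norm_sub_le _ _).trans ?_
      rw [norm_ee, norm_ee]; norm_num
    linarith
  refine le_trans ?_ h2
  gcongr
  rw [← Complex.ofReal_sum, h1, Complex.norm_real]
  exact Complex.abs_im_le_norm _

lemma TS_le (θ : ℝ) (M K : ℕ) (hM : 1 ≤ M) (hMK : M ≤ K) (hs : 0 < |Real.sin (Real.pi * θ)|) :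
    ‖TS θ M K‖ ≤ 1 / |Real.sin (Real.pi * θ)| / M := by
  apply abel_inv _ M K hM hMK
  intro j _ _
  rw [le_div_iff₀ hs]
  exact sin_part θ M j

lemma sin_small (θ : ℝ) (k : ℕ) : |Real.sin (2 * Real.pi * θ * k)| ≤ 2 * k * |Real.sin (Real.pi * θ)| := by
  have h1 : ‖ee (θ * k) - 1‖ ≤ k * ‖ee θ - 1‖ := by
    induction k with
    | zero => simp [ee_zero]
    | succ k ih =>
      have : ee (θ * ((k + 1 : ℕ) : ℝ)) - 1 = (ee (θ * k) - 1) * ee θ + (ee θ - 1) := by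
        have : ee (θ * ((k + 1 : ℕ) : ℝ)) = ee (θ * k) * ee θ := by
          rw [← ee_add]; push_cast; ring_nf
        rw [this]; ring
      rw [this]
      refine (norm_add_le _ _).trans ?_
      rw [norm_mul, norm_ee]; push_cast; linarith
  rw [norm_ee_sub_one θ] at h1
  have h2 : Real.sin (2 * Real.pi * θ * k) = (ee (θ * k) - 1).im := by
    rw [Complex.sub_im, ee_im, Complex.one_im, sub_zero]; ring_nf
  rw [h2]
  refine (Complex.abs_im_le_norm _).trans (h1.trans (le_of_eq ?_)); ring

lemma TS_zero (θ : ℝ) (M K : ℕ) (hs : |Real.sin (Real.pi * θ)| = 0) : TS θ M K = 0 := by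
  unfold TS
  apply sum_eq_zero
  intro k _
  have := sin_small θ k
  rw [hs, mul_zero] at this
  rw [abs_nonpos_iff.mp this]; simp

lemma TS_bound (θ : ℝ) (M K : ℕ) (hM : 1 ≤ M) (hMK : M ≤ K) : ‖TS θ M K‖ ≤ 5 * gN M θ / M := by
  have hM0 : (0:ℝ) < M := by exact_mod_cast hM
  set w := |Real.sin (Real.pi * θ)| with hw
  have hw0 : 0 ≤ w := abs_nonneg _
  have hw1 : w ≤ 1 := Real.abs_sin_le_one _
  have hg : gN M θ / M = 2 / (1 + M * w) := by unfold gN; rw [← hw]; field_simp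
  rw [mul_div_assoc, hg]
  rcases hw0.eq_or_lt with h | h
  · rw [TS_zero θ M K (by rw [← hw, ← h])]; simp; positivity
  have hT : ∀ M', 1 ≤ M' → M' ≤ K → ‖TS θ M' K‖ ≤ 1 / w / M' := fun M' h1 h2 => TS_le θ M' K h1 h2 h
  rcases le_total 1 (M * w) with h1 | h1
  · refine (hT M hM hMK).trans ?_
    rw [div_div, div_le_iff₀ (by positivity), mul_comm w]
    rw [mul_div_assoc', div_mul_eq_mul_div, le_div_iff₀ (by positivity)]
    linarith
  · have h2 : 5 ≤ 5 * (2 / (1 + M * w)) := by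
      have : 1 ≤ 2 / (1 + M * w) := by rw [le_div_iff₀ (by positivity)]; linarith
      linarith
    refine le_trans ?_ h2
    set M' := ⌈1 / w⌉₊ with hM'
    have hM'1 : 1 / w ≤ M' := Nat.le_ceil _
    have hM'2 : (M':ℝ) < 1 / w + 1 := Nat.ceil_lt_add_one (by positivity)
    have hMM' : M ≤ M' := by
      have : (M:ℝ) ≤ M' := le_trans (by rw [le_div_iff₀ h]; exact h1) hM'1
      exact_mod_cast this
    have hfirst : ∀ J, J ≤ M' → ‖TS θ M J‖ ≤ 4 := by
      intro J hJ
      unfold TS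
      refine (norm_sum_le _ _).trans ?_
      calc _ ≤ ∑ k ∈ Ico M J, 2 * w := by
            apply sum_le_sum
            intro k hk
            rw [mem_Ico] at hk
            have hk0 : (0:ℝ) < k := by exact_mod_cast (by lia : 0 < k)
            rw [norm_mul, norm_inv, Complex.norm_natCast, Complex.norm_real, Real.norm_eq_abs, ← div_eq_mul_inv, div_le_iff₀ hk0]
            have := sin_small θ k
            linarith
        _ = ((J - M : ℕ):ℝ) * (2 * w) := by rw [sum_const, Nat.card_Ico, nsmul_eq_mul]
        _ ≤ (1 / w + 1) * (2 * w) := by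
            gcongr
            have : ((J - M : ℕ):ℝ) ≤ M' := by exact_mod_cast (by lia : J - M ≤ M')
            linarith
        _ = 2 + 2 * w := by field_simp
        _ ≤ 4 := by linarith
    rcases le_total K M' with hK | hK
    · linarith [hfirst K hK]
    · have hsp : TS θ M K = TS θ M M' + TS θ M' K := by
        unfold TS; rw [sum_Ico_consecutive _ hMM' hK]
      rw [hsp]
      refine (norm_add_le _ _).trans ?_
      have h3 := hfirst M' le_rfl
      have h4 := hT M' (by lia) hK
      have h5 : 1 / w / (M':ℝ) ≤ 1 := by
        have : (0:ℝ) < M' := by exact_mod_cast (by lia : 0 < M')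
        rw [div_le_one this]; exact hM'1
      linarith


lemma ee_add_int (a : ℝ) (k : ℤ) : ee (a + k) = ee a := by
  rw [ee_add, ee_int, mul_one]

lemma ee_mul_nat (a : ℝ) (k : ℕ) : ee (k * a) = ee a ^ k := by
  induction k with
  | zero => simp [ee_zero]
  | succ k ih => rw [pow_succ, ← ih, ← ee_add]; push_cast; ring_nf

lemma ee_eq_one (a : ℝ) (h : ee a = 1) : ∃ k : ℤ, a = k := by
  unfold ee at h
  rw [Complex.exp_eq_one_iff] at h
  obtain ⟨k, hk⟩ := h
  refine ⟨k, ?_⟩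
  have h2 : (2 * Real.pi * Complex.I : ℂ) ≠ 0 := Complex.two_pi_I_ne_zero
  have : (2 * Real.pi * Complex.I : ℂ) * a = (2 * Real.pi * Complex.I : ℂ) * k := by rw [hk]; ring
  have := mul_left_cancel₀ h2 this
  exact_mod_cast this

lemma orth (q : ℕ) (hq : 1 ≤ q) (d : ℤ) : ∑ b ∈ range q, ee ((b:ℝ) * (d / q)) = if (q:ℤ) ∣ d then (q:ℂ) else 0 := by
  have hq0 : (q:ℝ) ≠ 0 := by exact_mod_cast (by lia : q ≠ 0)
  simp only [ee_mul_nat]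
  split_ifs with h
  · obtain ⟨e, rfl⟩ := h
    have : ((((q:ℤ) * e : ℤ) : ℝ) / q) = e := by push_cast; field_simp
    rw [this, ee_int]; simp
  · have hne : ee ((d:ℝ) / q) ≠ 1 := by
      intro h1
      obtain ⟨k, hk⟩ := ee_eq_one _ h1
      apply h
      refine ⟨k, ?_⟩
      rw [div_eq_iff hq0] at hk
      have : (d:ℝ) = ((q * k : ℤ) : ℝ) := by push_cast; linarith
      exact_mod_cast this
    have := geom_sum_eq hne q
    rw [this, ← ee_mul_nat]
    have : (q:ℝ) * ((d:ℝ) / q) = d := by field_simp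
    rw [this, ee_int]; simp

noncomputable def cF (n : ℕ) (u : ℤ) (q b : ℕ) : ℂ := (q:ℂ)⁻¹ * ∑ j ∈ range q, ee ((u:ℝ) / q * (j:ℝ) ^ n + (-((b:ℝ) / q)) * j)

lemma cF_expand (n : ℕ) (u : ℤ) (q : ℕ) (hq : 1 ≤ q) (k : ℤ) :
    ee ((u:ℝ) / q * (k:ℝ) ^ n) = ∑ b ∈ range q, cF n u q b * ee ((b:ℝ) / q * k) := by
  have hq0 : (q:ℝ) ≠ 0 := by exact_mod_cast (by lia : q ≠ 0)
  have hqc : (q:ℂ) ≠ 0 := by exact_mod_cast (by lia : q ≠ 0)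
  have h1 : ∑ b ∈ range q, cF n u q b * ee ((b:ℝ) / q * k) = (q:ℂ)⁻¹ * ∑ j ∈ range q, ee ((u:ℝ) / q * (j:ℝ) ^ n) * (if (q:ℤ) ∣ (k - j) then (q:ℂ) else 0) := by
    unfold cF
    simp_rw [← orth q hq, mul_assoc, ← mul_sum, sum_mul, mul_sum]
    rw [sum_comm]
    apply sum_congr rfl; intro j _
    apply sum_congr rfl; intro b _
    rw [← ee_add, ← ee_add]; congr 2
    push_cast; ring
  rw [h1]
  have hk0 : 0 ≤ k % q := Int.emod_nonneg _ (by lia)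
  have hk1 : k % q < q := Int.emod_lt_of_pos _ (by lia)
  rw [sum_eq_single (k % q).toNat]
  · have hd : (q:ℤ) ∣ (k - ((k % q).toNat : ℤ)) := by
      rw [Int.toNat_of_nonneg hk0]; exact Int.dvd_self_sub_emod
    rw [if_pos hd]
    have : ee ((u:ℝ) / q * (((k % q).toNat : ℕ) : ℝ) ^ n) = ee ((u:ℝ) / q * (k:ℝ) ^ n) := by
      have h2 : (q:ℤ) ∣ (k ^ n - ((k % q).toNat : ℤ) ^ n) := hd.trans (sub_dvd_pow_sub_pow _ _ _)
      obtain ⟨e, he⟩ := h2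
      have h3 : (k:ℝ)^n = (((k % q).toNat : ℕ) : ℝ) ^ n + q * e := by
        have : ((k ^ n : ℤ):ℝ) = (((((k % q).toNat : ℤ) ^ n + q * e : ℤ)) : ℝ) := by
          congr 1; lia
        rw [← Int.cast_pow, this, Int.cast_add, Int.cast_pow, Int.cast_natCast, Int.cast_mul, Int.cast_natCast]
      rw [h3]
      have : (u:ℝ) / q * ((((k % q).toNat : ℕ) : ℝ) ^ n + q * e) = (u:ℝ) / q * ((((k % q).toNat : ℕ) : ℝ) ^ n) + ((u * e : ℤ) : ℝ) := by
        push_cast; field_simp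
      rw [this, ee_add_int]
    rw [this]; field_simp
  · intro j hj hne
    rw [if_neg, mul_zero]
    rintro ⟨e, he⟩
    apply hne
    rw [mem_range] at hj
    have : k % q = j := by
      have : k = j + q * e := by lia
      rw [this, Int.add_mul_emod_self_left]
      exact Int.emod_eq_of_lt (by lia) (by lia)
    rw [this]; simp
  · intro h; exfalso; apply h; rw [mem_range]; lia

lemma cF_even (n : ℕ) (hn : Even n) (u : ℤ) (q : ℕ) (hq : 1 ≤ q) (k : ℕ) (ω : ℝ) :
    ee ((u:ℝ) / q * (k:ℝ) ^ n) * Complex.ofReal (Real.sin (2 * Real.pi * ω * k)) = 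
     ∑ b ∈ range q, cF n u q b * ((Complex.ofReal (Real.sin (2 * Real.pi * (ω + b * (1 / q)) * k))
       + Complex.ofReal (Real.sin (2 * Real.pi * (ω + b * (-1 / q)) * k))) / 2) := by
  have h1 := cF_expand n u q hq k
  have h2 := cF_expand n u q hq (-k)
  rw [Int.cast_neg, hn.neg_pow] at h2
  simp only [Int.cast_natCast] at h1 h2
  have h3 : ee ((u:ℝ) / q * (k:ℝ) ^ n) = ∑ b ∈ range q, cF n u q b * ((ee ((b:ℝ) / q * k) + ee (-((b:ℝ) / q * k))) / 2) := by
    have : ee ((u:ℝ) / q * (k:ℝ) ^ n) = (ee ((u:ℝ) / q * (k:ℝ) ^ n) + ee ((u:ℝ) / q * (k:ℝ) ^ n)) / 2 := by ring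
    rw [this]
    nth_rewrite 1 [h1]
    rw [h2, ← sum_add_distrib, sum_div]
    apply sum_congr rfl; intro b _
    rw [mul_neg]; ring
  rw [h3, sum_mul]
  apply sum_congr rfl; intro b _
  rw [mul_assoc]; congr 1
  have e0 : 2 * Real.pi * ω * k = 2 * Real.pi * (ω * k) := by ring
  have e1 : 2 * Real.pi * (ω + b * (1 / q)) * k = 2 * Real.pi * (ω * k + b / q * k) := by ring
  have e2 : 2 * Real.pi * (ω + b * (-1 / q)) * k = 2 * Real.pi * (ω * k + -(b / q * k)) := by ring
  rw [e0, e1, e2, ee_sin, ee_sin, ee_sin]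
  simp only [neg_add, neg_neg, ee_add]
  ring

lemma VN_rat (n : ℕ) (hn : Even n) (u : ℤ) (q : ℕ) (hq : 1 ≤ q) (ω : ℝ) (M K : ℕ) (hMK : M ≤ K) :
    VN n ((u:ℝ) / q) ω K - VN n ((u:ℝ) / q) ω M = (2 * Real.pi : ℂ)⁻¹ *
      ∑ b ∈ range q, cF n u q b * (TS (ω + b * (1 / q)) M K + TS (ω + b * (-1 / q)) M K) := by
  rw [VN_sub _ _ _ _ _ hMK]
  unfold TS
  have : ∀ k ∈ Ico M K, ee ((u:ℝ) / q * (k:ℝ) ^ n) * Complex.ofReal (Real.sin (2 * Real.pi * ω * k) / (Real.pi * k)) =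
     (2 * Real.pi : ℂ)⁻¹ * ∑ b ∈ range q, cF n u q b * (Complex.ofReal (Real.sin (2 * Real.pi * (ω + b * (1 / q)) * k)) * (k:ℂ)⁻¹
       + Complex.ofReal (Real.sin (2 * Real.pi * (ω + b * (-1 / q)) * k)) * (k:ℂ)⁻¹) := by
    intro k _
    rw [Complex.ofReal_div, mul_div_assoc', cF_even n hn u q hq k ω, sum_div, mul_sum]
    apply sum_congr rfl; intro b _
    push_cast; ring
  rw [sum_congr rfl this, ← mul_sum, sum_comm]
  congr 1
  apply sum_congr rfl; intro b _
  rw [← mul_sum, sum_add_distrib]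

lemma TS_D (θ : ℝ) : ∃ D : ℝ, 0 ≤ D ∧ ∀ M K : ℕ, 1 ≤ M → M ≤ K → ‖TS θ M K‖ ≤ D / M := by
  by_cases h : |Real.sin (Real.pi * θ)| = 0
  · refine ⟨0, le_rfl, fun M K _ _ => ?_⟩
    rw [TS_zero θ M K h]; simp
  · have h' : 0 < |Real.sin (Real.pi * θ)| := lt_of_le_of_ne (abs_nonneg _) (Ne.symm h)
    exact ⟨1 / |Real.sin (Real.pi * θ)|, by positivity, fun M K h1 h2 => TS_le θ M K h1 h2 h'⟩

lemma VN_rat_D (n : ℕ) (hn : Even n) (u : ℤ) (q : ℕ) (hq : 1 ≤ q) (ω : ℝ) : ∃ D : ℝ, 0 ≤ D ∧ ∀ M K : ℕ, 1 ≤ M → M ≤ K →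
    ‖VN n ((u:ℝ) / q) ω K - VN n ((u:ℝ) / q) ω M‖ ≤ D / M := by
  choose D hD0 hD using TS_D
  refine ⟨‖(2 * Real.pi : ℂ)⁻¹‖ * ∑ b ∈ range q, ‖cF n u q b‖ * (D (ω + b * (1 / q)) + D (ω + b * (-1 / q))), ?_, ?_⟩
  · apply mul_nonneg (norm_nonneg _)
    apply sum_nonneg; intro b _
    have := hD0 (ω + b * (1 / q)); have := hD0 (ω + b * (-1 / q)); positivity
  · intro M K h1 h2
    rw [VN_rat n hn u q hq ω M K h2, norm_mul, mul_div_assoc]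
    gcongr
    refine (norm_sum_le _ _).trans ?_
    rw [sum_div]
    apply sum_le_sum; intro b _
    rw [norm_mul, mul_div_assoc, add_div]
    gcongr
    refine (norm_add_le _ _).trans (add_le_add (hD _ M K h1 h2) (hD _ M K h1 h2))

lemma cauchy_lim (f : ℕ → ℂ) (b : ℕ → ℝ) (hb : Tendsto b atTop (nhds 0)) (M0 : ℕ)
    (h : ∀ M K, M0 ≤ M → M ≤ K → ‖f K - f M‖ ≤ b M) : ∃ L, Tendsto f atTop (nhds L) := by
  apply cauchySeq_tendsto_of_complete
  rw [Metric.cauchySeq_iff']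
  intro ε hε
  have := (hb.eventually (gt_mem_nhds hε)).and (eventually_ge_atTop M0)
  obtain ⟨N, hN1, hN2⟩ := this.exists
  refine ⟨N, fun K hK => ?_⟩
  rw [dist_eq_norm]
  exact (h N K hN2 hK).trans_lt hN1

lemma VN_rat_lim (n : ℕ) (hn : Even n) (u : ℤ) (q : ℕ) (hq : 1 ≤ q) (ω : ℝ) : ∃ L, Tendsto (VN n ((u:ℝ) / q) ω) atTop (nhds L) := by
  obtain ⟨D, hD0, hD⟩ := VN_rat_D n hn u q hq ω
  exact cauchy_lim _ (fun M => D / M) (tendsto_const_div_atTop_nhds_zero_nat D) 1 (fun M K h1 h2 => hD M K h1 h2)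

lemma rat_tail (d : ℕ) (hn : Even (d+2)) (η : ℝ) (hη : 0 < η) : ∃ C : ℝ, 0 < C ∧ ∀ (u : ℤ) (q : ℕ), 1 ≤ q → Int.gcd u q = 1 → ∀ ω : ℝ,
    ∀ M K : ℕ, q ≤ M → M ≤ K → ‖VN (d+2) ((u:ℝ) / q) ω K - VN (d+2) ((u:ℝ) / q) ω M‖ ≤ C * (q:ℝ) ^ (-(1 / 2 ^ (d+1) : ℝ) + 2 * η) := by
  obtain ⟨C, hC, hW⟩ := weyl_ineq d η hη 1 le_rfl
  refine ⟨C * (50 + 10 * (1 / η)), by positivity, ?_⟩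
  intro u q hq hg ω M K hM hMK
  have hq0 : (0:ℝ) < q := by exact_mod_cast hq
  have hq1 : (1:ℝ) ≤ q := by exact_mod_cast hq
  have hM0 : (0:ℝ) < M := by exact_mod_cast (by lia : 0 < M)
  have hqM : (q:ℝ) ≤ M := by exact_mod_cast hM
  have hc : ∀ b : ℕ, ‖cF (d+2) u q b‖ ≤ C * (q:ℝ) ^ (-(1 / 2 ^ (d+1) : ℝ) + η) := by
    intro b
    have := hW ((u:ℝ)/q) (-((b:ℝ)/q)) u q q hq hg (by simp; positivity) hq (by simp) (by
      have : (q:ℝ) ^ (1:ℝ) ≤ (q:ℝ) ^ ((d + 2 : ℝ) - 1) := Real.rpow_le_rpow_of_exponent_le hq1 (by linarith [(Nat.cast_nonneg d : (0:ℝ) ≤ d)])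
      rwa [Real.rpow_one] at this)
    unfold cF
    rw [norm_mul, norm_inv, Complex.norm_natCast]
    calc _ ≤ (q:ℝ)⁻¹ * (C*(q:ℝ)^(1-1/2^(d+1)+η)) := by gcongr
      _ = C * ((q:ℝ)^(-1:ℝ) * (q:ℝ)^(1-1/2^(d+1)+η)) := by rw [Real.rpow_neg_one]; ring
      _ = _ := by rw [← Real.rpow_add hq0]; congr 2; ring
  have hlog : Real.log q ≤ (q:ℝ)^η / η := Real.log_le_rpow_div hq0.le hη
  have hqη : 1 ≤ (q:ℝ)^η := Real.one_le_rpow hq1 hη.le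
  have hblk : ∀ (u' : ℤ), Int.gcd u' q = 1 → ∑ b ∈ range q, ‖TS (ω + b * ((u':ℝ) / q)) M K‖ ≤ 5 * (8 + 2 * (1 + Real.log q)) := by
    intro u' hu'
    have := block_bound M ((u':ℝ)/q) ω u' q hq hu' (by simp; positivity)
    calc _ ≤ ∑ b ∈ range q, 5 * gN M (ω + b * ((u':ℝ)/q)) / M := by
          apply sum_le_sum; intro b _; exact TS_bound _ M K (by lia) hMK
      _ = 5 * (∑ b ∈ range q, gN M (ω + b * ((u':ℝ)/q))) / M := by rw [← sum_div, ← mul_sum]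
      _ ≤ 5 * (8 * M + 2 * q * (1 + Real.log q)) / M := by gcongr
      _ ≤ 5 * (8 * M + 2 * M * (1 + Real.log q)) / M := by
          have : 0 ≤ Real.log q := Real.log_nonneg hq1
          gcongr
      _ = _ := by field_simp
  have hb1 := hblk 1 (by simp)
  have hb2 := hblk (-1) (by simp)
  rw [VN_rat (d+2) hn u q hq ω M K hMK, norm_mul]
  have h2pi : ‖(2 * Real.pi : ℂ)⁻¹‖ ≤ 1 / 2 := by
    have : ‖(2 * Real.pi : ℂ)⁻¹‖ = (2 * Real.pi)⁻¹ := by simp [abs_of_pos Real.pi_pos]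
    rw [this]; exact two_pi_inv_le
  push_cast at hb1 hb2
  calc _ ≤ 1/2 * ∑ b ∈ range q, (C * (q:ℝ) ^ (-(1 / 2 ^ (d+1) : ℝ) + η)) * (‖TS (ω + b * (1 / q)) M K‖ + ‖TS (ω + b * (-1 / q)) M K‖) := by
        gcongr
        refine (norm_sum_le _ _).trans (sum_le_sum ?_)
        intro b _
        rw [norm_mul]
        gcongr
        · exact hc b
        · exact norm_add_le _ _
    _ = 1/2 * ((C * (q:ℝ) ^ (-(1 / 2 ^ (d+1) : ℝ) + η)) * (∑ b ∈ range q, ‖TS (ω + b * (1 / q)) M K‖ + ∑ b ∈ range q, ‖TS (ω + b * (-1 / q)) M K‖)) := by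
        rw [← mul_sum, sum_add_distrib]
    _ ≤ 1/2 * ((C * (q:ℝ) ^ (-(1 / 2 ^ (d+1) : ℝ) + η)) * ((5 * (8 + 2 * (1 + Real.log q))) + (5 * (8 + 2 * (1 + Real.log q))))) := by
        gcongr
    _ = (C * (q:ℝ) ^ (-(1 / 2 ^ (d+1) : ℝ) + η)) * (50 + 10 * Real.log q) := by ring
    _ ≤ (C * (q:ℝ) ^ (-(1 / 2 ^ (d+1) : ℝ) + η)) * (50 * (q:ℝ)^η + 10 * ((q:ℝ)^η/η)) := by
        gcongr; linarith
    _ = C * (50 + 10 * (1 / η)) * ((q:ℝ) ^ (-(1 / 2 ^ (d+1) : ℝ) + η) * (q:ℝ)^η) := by ring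
    _ = _ := by rw [← Real.rpow_add hq0]; congr 2; ring


lemma lim_bound (f : ℕ → ℂ) (L a : ℂ) (B : ℝ) (hf : Tendsto f atTop (nhds L)) (M : ℕ) (h : ∀ K, M ≤ K → ‖f K - a‖ ≤ B) : ‖L - a‖ ≤ B := by
  have : Tendsto (fun K => ‖f K - a‖) atTop (nhds ‖L - a‖) := (hf.sub_const a).norm
  exact le_of_tendsto this (eventually_atTop.mpr ⟨M, h⟩)

lemma tail_main (d : ℕ) (hne : Even (d+2)) (Δ : ℝ) (hΔ0 : 0 < Δ) (hΔ1 : Δ < 1) (m : ℤ) (hm : 2 ≤ m) (α : ℝ)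
    (hα1 : 0 < α) (hα2 : α < 1) (ε : ℝ) (hε : 0 < ε) : ∃ C > (0:ℝ), ∀ t ∈ Set.Ioc (0:ℝ) 1,
      ((Irrational t ∧ t ∈ Bset (d+2) Δ m α) ∨
        (∃ u q : ℤ, 1 ≤ q ∧ Int.gcd u q = 1 ∧ t = (u : ℝ) / (q : ℝ) ∧
          t ≤ (m : ℝ) * (q : ℝ) ^ (-(1 / (α * (((d+2 : ℕ) : ℝ) - Δ)))))) →
      ∀ ω : ℝ, ∃ L : ℂ, Tendsto (VN (d+2) t ω) atTop (nhds L) ∧ 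
        ‖L - VN (d+2) t ω ⌈(m:ℝ) * t ^ (-α)⌉₊‖ ≤ C * t ^ (α * Δ / 2 ^ (d+1) - ε) := by
  set ρ0 : ℝ := Δ / 2 ^ (d+1) with hρ0
  have hρ00 : 0 < ρ0 := by positivity
  set η := min (ρ0 / 2) (ε / 2) with hη
  have hη0 : 0 < η := by rw [hη]; positivity
  have hη1 : η ≤ ρ0 / 2 := min_le_left _ _
  have hη2 : η ≤ ε / 2 := min_le_right _ _
  set ρ := ρ0 - η with hρ
  have hρp : 0 < ρ := by linarith
  obtain ⟨C1, hC1, hW⟩ := weyl_ineq d η hη0 Δ hΔ1.le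
  obtain ⟨C2, hC2, hR⟩ := rat_tail d hne η hη0
  refine ⟨C1 * (2 + 2 / ρ) + C2, by positivity, ?_⟩
  rintro t ⟨ht0, ht1⟩ hcase ω
  set N := ⌈(m:ℝ) * t ^ (-α)⌉₊ with hN
  have hm1 : (1:ℝ) ≤ m := by exact_mod_cast (by lia : 1 ≤ m)
  have hta : 0 < t ^ (-α) := by positivity
  have hNle : (m:ℝ) * t ^ (-α) ≤ N := Nat.le_ceil _
  have hNt : t ^ (-α) ≤ N := by nlinarith
  have hta1 : 1 ≤ t ^ (-α) := Real.one_le_rpow_of_pos_of_le_one_of_nonpos ht0 ht1 (by linarith)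
  have hN1 : 1 ≤ N := by
    have : (1:ℝ) ≤ N := by linarith
    exact_mod_cast this
  have hexp : ∀ κ : ℝ, α * ρ0 - ε ≤ κ → t ^ κ ≤ t ^ (α * Δ / 2 ^ (d+1) - ε) := by
    intro κ hκ
    apply Real.rpow_le_rpow_of_exponent_ge ht0 ht1
    rw [mul_div_assoc]; exact hκ
  have hNρ : (N:ℝ) ^ (-ρ) ≤ t ^ (α * Δ / 2 ^ (d+1) - ε) := by
    calc (N:ℝ) ^ (-ρ) ≤ (t ^ (-α)) ^ (-ρ) := Real.rpow_le_rpow_of_nonpos hta hNt (by linarith)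
      _ = t ^ (α * ρ) := by rw [← Real.rpow_mul ht0.le]; congr 1; ring
      _ ≤ _ := hexp _ (by rw [hρ]; nlinarith)
  have hpow0 : 0 < t ^ (α * Δ / 2 ^ (d+1) - ε) := by positivity
  have hexpo : (1 - Δ / 2 ^ (d + 1) + η) = 1 - ρ := by rw [hρ, hρ0]; ring
  rw [hexpo] at hW
  rcases hcase with ⟨_, hB⟩ | ⟨u, q', hq', hg, htq, htm⟩
  · have hW' : ∀ x : ℝ, ∀ j : ℕ, N ≤ j → ‖∑ k ∈ range j, ee (t * (k:ℝ) ^ (d+2) + x * k)‖ ≤ C1 * (j:ℝ) ^ (1 - ρ) := by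
      intro x j hj
      have hjN : (N:ℝ) ≤ j := by exact_mod_cast hj
      obtain ⟨u, q', ⟨hq1, hg, hap⟩, h1, h2⟩ := hB.2 j (hNle.trans hjN)
      obtain ⟨q, rfl⟩ := Int.eq_ofNat_of_zero_le (by lia : 0 ≤ q')
      simp only [Int.cast_natCast] at hap h1 h2
      push_cast at h2
      exact hW t x u q j (by lia) hg hap (by lia) h1.le h2
    have hV : ∀ M K : ℕ, N ≤ M → M ≤ K → ‖VN (d+2) t ω K - VN (d+2) t ω M‖ ≤ C1 * (2 + 2 / ρ) * (M:ℝ) ^ (-ρ) := by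
      intro M K h1 h2
      exact VN_tail_weyl (d+2) t ω M K (by lia) h2 C1 ρ hC1.le hρp (fun x j hj _ => hW' x j (by lia))
    obtain ⟨L, hL⟩ := cauchy_lim (VN (d+2) t ω) (fun M => C1 * (2 + 2 / ρ) * (M:ℝ) ^ (-ρ)) (by
      have := ((tendsto_rpow_neg_atTop hρp).comp tendsto_natCast_atTop_atTop).const_mul (C1 * (2 + 2 / ρ))
      simpa using this) N hV
    refine ⟨L, hL, ?_⟩
    apply lim_bound _ L _ _ hL N
    intro K hK
    refine (hV N K le_rfl hK).trans ?_
    have : C1 * (2 + 2 / ρ) * (N:ℝ) ^ (-ρ) ≤ C1 * (2 + 2 / ρ) * t ^ (α * Δ / 2 ^ (d+1) - ε) := by gcongr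
    nlinarith
  · obtain ⟨q, rfl⟩ := Int.eq_ofNat_of_zero_le (by lia : 0 ≤ q')
    simp only [Int.cast_natCast] at htq htm
    have hq1 : 1 ≤ q := by lia
    have hq0 : (0:ℝ) < q := by exact_mod_cast hq1
    have hq1' : (1:ℝ) ≤ q := by exact_mod_cast hq1
    obtain ⟨L, hL⟩ := VN_rat_lim (d+2) hne u q hq1 ω
    rw [← htq] at hL
    refine ⟨L, hL, ?_⟩
    set ν : ℝ := (((d+2 : ℕ) : ℝ) - Δ) with hν
    have hν0 : 0 < ν := by
      rw [hν]; push_cast; have : (0:ℝ) ≤ d := Nat.cast_nonneg d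
      linarith
    have hαν : 0 < α * ν := by positivity
    have hqj : ∀ j : ℕ, N ≤ j → (q:ℝ) ≤ (j:ℝ) ^ ν := by
      intro j hj
      have hjN : (N:ℝ) ≤ j := by exact_mod_cast hj
      have h1 : (q:ℝ) ^ (1 / (α * ν)) ≤ m / t := by
        rw [le_div_iff₀ ht0]
        rw [Real.rpow_neg hq0.le] at htm
        have hp : 0 < (q:ℝ) ^ (1 / (α * ν)) := by positivity
        calc _ ≤ (q:ℝ) ^ (1 / (α * ν)) * ((m:ℝ) * ((q:ℝ) ^ (1 / (α * ν)))⁻¹) := by gcongr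
          _ = m := by field_simp
      have h2 : (q:ℝ) ≤ (m / t) ^ (α * ν) := by
        have := Real.rpow_le_rpow (by positivity) h1 hαν.le
        rwa [← Real.rpow_mul hq0.le, one_div_mul_cancel hαν.ne', Real.rpow_one] at this
      rw [Real.rpow_mul (by positivity)] at h2
      refine h2.trans ?_
      apply Real.rpow_le_rpow (by positivity) _ hν0.le
      rw [Real.div_rpow (by linarith) ht0.le, div_eq_mul_inv, ← Real.rpow_neg ht0.le]
      refine le_trans ?_ (hNle.trans hjN)
      gcongr
      calc (m:ℝ) ^ α ≤ (m:ℝ) ^ (1:ℝ) := Real.rpow_le_rpow_of_exponent_le hm1 hα2.le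
        _ = m := Real.rpow_one _
    set F := ⌊(q:ℝ) ^ (1 / Δ)⌋₊ with hF
    have hFq : q ≤ F := by
      apply Nat.le_floor
      calc (q:ℝ) = (q:ℝ) ^ (1:ℝ) := (Real.rpow_one _).symm
        _ ≤ _ := Real.rpow_le_rpow_of_exponent_le hq1' (by rw [le_div_iff₀ hΔ0]; linarith)
    set M1 := max N F with hM1
    have hfirst : ‖VN (d+2) t ω M1 - VN (d+2) t ω N‖ ≤ C1 * (2 + 2 / ρ) * (N:ℝ) ^ (-ρ) := by
      rcases le_total F N with h | h
      · rw [hM1, max_eq_left h, sub_self, norm_zero]; positivity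
      · rw [hM1, max_eq_right h]
        apply VN_tail_weyl (d+2) t ω N F hN1 h C1 ρ hC1.le hρp
        intro x j hj1 hj2
        refine hW t x u q j hq1 hg (by rw [htq]; simp; positivity) (by lia) ?_ ?_
        · have : (j:ℝ) ≤ (q:ℝ) ^ (1 / Δ) := (Nat.le_floor_iff (by positivity)).mp hj2
          have := Real.rpow_le_rpow (by positivity) this hΔ0.le
          rwa [← Real.rpow_mul hq0.le, one_div_mul_cancel hΔ0.ne', Real.rpow_one] at this
        · have := hqj j hj1
          rw [hν] at this; push_cast at this; exact this
    have hu : 1 ≤ u := by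
      by_contra hu
      have : (u:ℝ) ≤ 0 := by exact_mod_cast (by lia : u ≤ 0)
      have : t ≤ 0 := by rw [htq]; exact div_nonpos_of_nonpos_of_nonneg this hq0.le
      linarith
    have hqt : t⁻¹ ≤ q := by
      have : (1:ℝ) ≤ u := by exact_mod_cast hu
      rw [htq, inv_div, div_le_iff₀ (by linarith)]; nlinarith
    have hρ1 : ρ0 ≤ 1 / 2 ^ (d+1) := by rw [hρ0]; gcongr
    have hqb : (q:ℝ) ^ (-(1 / 2 ^ (d+1) : ℝ) + 2 * η) ≤ t ^ (α * Δ / 2 ^ (d+1) - ε) := by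
      calc _ ≤ (t⁻¹) ^ (-(1 / 2 ^ (d+1) : ℝ) + 2 * η) := Real.rpow_le_rpow_of_nonpos (by positivity) hqt (by linarith)
        _ = t ^ (1 / 2 ^ (d+1) - 2 * η) := by rw [Real.inv_rpow ht0.le, ← Real.rpow_neg ht0.le]; congr 1; ring
        _ ≤ _ := hexp _ (by nlinarith)
    apply lim_bound _ L _ _ hL M1
    intro K hK
    have h2 := hR u q hq1 hg ω M1 K (by lia) hK
    rw [← htq] at h2
    have : VN (d+2) t ω K - VN (d+2) t ω N = (VN (d+2) t ω K - VN (d+2) t ω M1) + (VN (d+2) t ω M1 - VN (d+2) t ω N) := by ring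
    rw [this]
    refine (norm_add_le _ _).trans ((add_le_add h2 hfirst).trans ?_)
    have e1 : C1 * (2 + 2 / ρ) * (N:ℝ) ^ (-ρ) ≤ C1 * (2 + 2 / ρ) * t ^ (α * Δ / 2 ^ (d+1) - ε) := by gcongr
    have e2 : C2 * (q:ℝ) ^ (-(1 / 2 ^ (d+1) : ℝ) + 2 * η) ≤ C2 * t ^ (α * Δ / 2 ^ (d+1) - ε) := by gcongr
    linarith


/-- continuous integrand -/
noncomputable def GI (n : ℕ) (s y : ℝ) : ℂ := ee (y ^ n) * Complex.ofReal (2 * Real.pi * s * Real.sinc (2 * Real.pi * s * y))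

lemma GI_eq (n : ℕ) (hn : n ≠ 0) (s y : ℝ) : (if y = 0 then Complex.ofReal (2 * Real.pi * s)
      else ee (y ^ n) * Complex.ofReal (Real.sin (2 * Real.pi * s * y)) / Complex.ofReal y) = GI n s y := by
  unfold GI
  split_ifs with h
  · subst h; simp [hn, ee_zero]
  · rw [mul_div_assoc, ← Complex.ofReal_div]
    congr 2
    by_cases hs : s = 0
    · subst hs; simp
    · rw [Real.sinc_of_ne_zero (by have := Real.pi_ne_zero; positivity)]
      have := Real.pi_ne_zero
      field_simp

lemma GI_cont (n : ℕ) (s : ℝ) : Continuous (GI n s) := by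
  unfold GI
  have := continuous_ee
  have := Real.continuous_sinc
  fun_prop

lemma GI_even (n : ℕ) (hn : Even n) (s y : ℝ) : GI n s (-y) = GI n s y := by
  unfold GI
  rw [hn.neg_pow, mul_neg, Real.sinc_neg]

lemma GI_odd (n : ℕ) (s y : ℝ) : GI n (-s) y = - GI n s y := by
  unfold GI
  have : 2 * Real.pi * -s * y = -(2 * Real.pi * s * y) := by ring
  rw [this, Real.sinc_neg]; push_cast; ring

lemma Iint_eq (n : ℕ) (hn0 : n ≠ 0) (hn : Even n) (s R : ℝ) : Iint n s R = 2 * ∫ y in (0:ℝ)..R, GI n s y := by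
  unfold Iint
  simp_rw [GI_eq n hn0]
  rw [← intervalIntegral.integral_add_adjacent_intervals (b := 0) ((GI_cont n s).intervalIntegrable _ _) ((GI_cont n s).intervalIntegrable _ _)]
  have : ∫ y in (-R)..0, GI n s y = ∫ y in (0:ℝ)..R, GI n s y := by
    have := intervalIntegral.integral_comp_neg (a := 0) (b := R) (GI n s)
    simp only [GI_even n hn, neg_zero] at this
    exact this.symm
  rw [this]; ring

lemma Iint_neg (n : ℕ) (hn0 : n ≠ 0) (hn : Even n) (s R : ℝ) : Iint n (-s) R = - Iint n s R := by
  rw [Iint_eq n hn0 hn, Iint_eq n hn0 hn]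
  simp_rw [GI_odd]
  rw [intervalIntegral.integral_neg]; ring

lemma osc_int (d : ℕ) (s S Y R : ℝ) (hs : |s| ≤ S) (hY1 : 1 ≤ Y) (hYS : S ≤ Y) (hYR : Y ≤ R) :
    ‖∫ y in Y..R, ee (y ^ (d+2) + s * y) / (y:ℂ)‖ ≤ (Y ^ (d+2))⁻¹ / 3 := by
  obtain ⟨hs1, hs2⟩ := abs_le.mp hs
  set p : ℝ → ℝ := fun y => (d+2) * y ^ (d+2) + s * y with hp
  set p' : ℝ → ℝ := fun y => (d+2) * ((d+2) * y ^ (d+1)) + s with hp'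
  have hd : (0:ℝ) ≤ d := Nat.cast_nonneg d
  have hpow : ∀ y, Y ≤ y → y ≤ y ^ (d+1) := by
    intro y hy
    have h1 : 1 ≤ y := by linarith
    calc y = y ^ 1 := (pow_one y).symm
      _ ≤ y ^ (d+1) := pow_le_pow_right₀ h1 (by lia)
  have hple : ∀ y, Y ≤ y → y ^ (d+2) ≤ p y := by
    intro y hy
    have h1 : 1 ≤ y := by linarith
    have h2 := hpow y hy
    have h3 : y ^ (d+2) = y ^ (d+1) * y := pow_succ _ _
    have h4 : 0 ≤ (y ^ (d+1) + s) * y := by apply mul_nonneg <;> linarith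
    have h5 : 0 ≤ y ^ (d+2) := by positivity
    simp only [hp]
    nlinarith [mul_nonneg hd h5]
  have hp0 : ∀ y, Y ≤ y → 0 < p y := by
    intro y hy
    have : 0 < y ^ (d+2) := by have : 0 < y := by linarith
                               positivity
    linarith [hple y hy]
  have hp'0 : ∀ y, Y ≤ y → 0 ≤ p' y := by
    intro y hy
    have h2 := hpow y hy
    simp only [hp']
    have h6 : 0 ≤ y ^ (d+1) := by linarith
    nlinarith [mul_nonneg hd h6, mul_nonneg hd (mul_nonneg hd h6)]
  have hder : ∀ y, HasDerivAt p (p' y) y := by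
    intro y
    have h1 := ((hasDerivAt_pow (d+2) y).const_mul ((d:ℝ)+2)).add ((hasDerivAt_id y).const_mul s)
    refine h1.congr_deriv ?_
    have : d + 2 - 1 = d + 1 := by lia
    rw [this, hp']; push_cast; ring
  have hderg : ∀ y, HasDerivAt (fun y : ℝ => y ^ (d+2) + s * y) ((d+2) * y ^ (d+1) + s) y := by
    intro y
    have h1 := (hasDerivAt_pow (d+2) y).add ((hasDerivAt_id y).const_mul s)
    refine h1.congr_deriv ?_
    have : d + 2 - 1 = d + 1 := by lia
    rw [this]; push_cast; ring
  set E : ℝ → ℂ := fun y => ee (y ^ (d+2) + s * y) with hE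
  have hEc : Continuous E := by have := continuous_ee; fun_prop
  have hEd : ∀ y, HasDerivAt E (((d+2) * y ^ (d+1) + s : ℝ) • (2 * Real.pi * Complex.I * E y)) y := by
    intro y
    exact (hasDerivAt_ee (y ^ (d+2) + s * y)).scomp y (hderg y)
  have hH : ∀ y, Y ≤ y → HasDerivAt (fun y => E y * Complex.ofReal ((p y)⁻¹)) (2 * Real.pi * Complex.I * (E y / (y:ℂ)) - E y * Complex.ofReal (p' y / (p y)^2)) y := by
    intro y hy
    have h1 := (hEd y).mul (((hder y).inv (hp0 y hy).ne').ofReal_comp)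
    refine h1.congr_deriv ?_
    have hy0 : (y:ℂ) ≠ 0 := by exact_mod_cast (by linarith : y ≠ 0)
    have hpy : (p y : ℂ) ≠ 0 := by exact_mod_cast (hp0 y hy).ne'
    have hpe : p y = y * ((d+2) * y ^ (d+1) + s) := by simp only [hp]; ring
    have hg0 : ((d+2) * y ^ (d+1) + s : ℝ) ≠ 0 := by
      intro h; rw [hpe, h, mul_zero] at hpy; simp at hpy
    have e1 : Complex.ofReal ((p y)⁻¹) * Complex.ofReal ((d+2) * y ^ (d+1) + s) = (y:ℂ)⁻¹ := by
      rw [hpe, ← Complex.ofReal_mul, ← Complex.ofReal_inv]; congr 1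
      have : y ≠ 0 := by linarith
      field_simp
    rw [Complex.real_smul, div_eq_mul_inv (E y), ← e1, neg_div, Pi.inv_apply, Complex.ofReal_neg]
    ring
  have hcu : Set.uIcc Y R = Set.Icc Y R := Set.uIcc_of_le hYR
  have hpc : Continuous p := by simp only [hp]; fun_prop
  have hp'c : Continuous p' := by simp only [hp']; fun_prop
  have hAc : ContinuousOn (fun y : ℝ => E y / (y:ℂ)) (Set.uIcc Y R) := by
    rw [hcu]
    apply hEc.continuousOn.div Complex.continuous_ofReal.continuousOn
    intro y hy
    exact_mod_cast (by linarith [hy.1] : y ≠ 0)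
  have hBr : ContinuousOn (fun y : ℝ => p' y / (p y)^2) (Set.uIcc Y R) := by
    rw [hcu]
    apply hp'c.continuousOn.div (hpc.pow 2).continuousOn
    intro y hy
    exact pow_ne_zero _ (hp0 y hy.1).ne'
  have hBc : ContinuousOn (fun y : ℝ => E y * Complex.ofReal (p' y / (p y)^2)) (Set.uIcc Y R) := by
    apply hEc.continuousOn.mul
    exact Complex.continuous_ofReal.comp_continuousOn hBr
  have hAi := hAc.intervalIntegrable (μ := volume)
  have hBi := hBc.intervalIntegrable (μ := volume)
  have hFTC := intervalIntegral.integral_eq_sub_of_hasDerivAt (a := Y) (b := R) (f := fun y => E y * Complex.ofReal ((p y)⁻¹))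
    (f' := fun y => 2 * Real.pi * Complex.I * (E y / (y:ℂ)) - E y * Complex.ofReal (p' y / (p y)^2))
    (fun y hy => hH y (by rw [hcu] at hy; exact hy.1)) ((hAi.const_mul _).sub hBi)
  rw [intervalIntegral.integral_sub (hAi.const_mul _) hBi, intervalIntegral.integral_const_mul] at hFTC
  have hr := intervalIntegral.integral_eq_sub_of_hasDerivAt (a := Y) (b := R) (f := fun y => -(p y)⁻¹)
    (f' := fun y => p' y / (p y)^2)
    (fun y hy => by
      have := ((hder y).inv (hp0 y (by rw [hcu] at hy; exact hy.1)).ne').neg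
      refine this.congr_deriv ?_; ring) hBr.intervalIntegrable
  have hB : ‖∫ y in Y..R, E y * Complex.ofReal (p' y / (p y)^2)‖ ≤ (p Y)⁻¹ - (p R)⁻¹ := by
    have := intervalIntegral.norm_integral_le_of_norm_le (μ := volume) hYR (f := fun y => E y * Complex.ofReal (p' y / (p y)^2)) (g := fun y => p' y / (p y)^2)
      (by
        apply Eventually.of_forall
        intro y hy
        rw [norm_mul, norm_ee, one_mul, Complex.norm_real, Real.norm_eq_abs, abs_of_nonneg]
        have := hp'0 y hy.1.le
        positivity) hBr.intervalIntegrable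
    rw [hr] at this
    linarith
  set I1 := ∫ y in Y..R, E y / (y:ℂ) with hI1
  set I2 := ∫ y in Y..R, E y * Complex.ofReal (p' y / (p y)^2)
  have hR0 := hp0 R hYR
  have hY0 := hp0 Y le_rfl
  have hn1 : ‖E R * Complex.ofReal ((p R)⁻¹)‖ = (p R)⁻¹ := by
    rw [norm_mul, norm_ee, one_mul, Complex.norm_real, Real.norm_eq_abs, abs_of_pos (by positivity)]
  have hn2 : ‖E Y * Complex.ofReal ((p Y)⁻¹)‖ = (p Y)⁻¹ := by
    rw [norm_mul, norm_ee, one_mul, Complex.norm_real, Real.norm_eq_abs, abs_of_pos (by positivity)]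
  have hfin : 2 * Real.pi * Complex.I * I1 = E R * Complex.ofReal ((p R)⁻¹) - E Y * Complex.ofReal ((p Y)⁻¹) + I2 := by
    linear_combination hFTC
  have hnorm : 2 * Real.pi * ‖I1‖ ≤ 2 * (p Y)⁻¹ := by
    have h1 : ‖2 * Real.pi * Complex.I * I1‖ = 2 * Real.pi * ‖I1‖ := by
      rw [norm_mul]; simp [abs_of_pos Real.pi_pos]
    rw [← h1, hfin]
    refine (norm_add_le _ _).trans ?_
    have := norm_sub_le (E R * Complex.ofReal ((p R)⁻¹)) (E Y * Complex.ofReal ((p Y)⁻¹))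
    linarith
  have hpi := Real.pi_gt_three
  have hYp : 0 < Y ^ (d+2) := by positivity
  have : (p Y)⁻¹ ≤ (Y ^ (d+2))⁻¹ := inv_anti₀ hYp (hple Y le_rfl)
  have h0 := norm_nonneg I1
  nlinarith

lemma Iint_diff (d : ℕ) (hne : Even (d+2)) (s S Y R : ℝ) (hs : |s| ≤ S) (hY1 : 1 ≤ Y) (hYS : S ≤ Y) (hYR : Y ≤ R) :
    ‖Iint (d+2) s R - Iint (d+2) s Y‖ ≤ (Y ^ (d+2))⁻¹ := by
  rw [Iint_eq _ (by lia) hne, Iint_eq _ (by lia) hne, ← mul_sub,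
    intervalIntegral.integral_interval_sub_left ((GI_cont _ s).intervalIntegrable _ _) ((GI_cont _ s).intervalIntegrable _ _)]
  have h1 := osc_int d s S Y R hs hY1 hYS hYR
  have h2 := osc_int d (-s) S Y R (by rwa [abs_neg]) hY1 hYS hYR
  have hcu : Set.uIcc Y R = Set.Icc Y R := Set.uIcc_of_le hYR
  have hi : ∀ s : ℝ, IntervalIntegrable (fun y : ℝ => ee (y ^ (d+2) + s * y) / (y:ℂ)) volume Y R := by
    intro s
    apply ContinuousOn.intervalIntegrable
    rw [hcu]
    have hEc : Continuous (fun y : ℝ => ee (y ^ (d+2) + s * y)) := by have := continuous_ee; fun_prop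
    apply hEc.continuousOn.div Complex.continuous_ofReal.continuousOn
    intro y hy
    exact_mod_cast (by linarith [hy.1] : y ≠ 0)
  have h3 : ∫ y in Y..R, GI (d+2) s y = (2 * Complex.I)⁻¹ * ((∫ y in Y..R, ee (y ^ (d+2) + s * y) / (y:ℂ)) - ∫ y in Y..R, ee (y ^ (d+2) + (-s) * y) / (y:ℂ)) := by
    rw [← intervalIntegral.integral_sub (hi _) (hi _), ← intervalIntegral.integral_const_mul]
    apply intervalIntegral.integral_congr
    intro y hy
    rw [hcu] at hy
    have hy0 : y ≠ 0 := by linarith [hy.1]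
    have : GI (d+2) s y = (2 * Complex.I)⁻¹ * (ee (y ^ (d+2) + s * y) / (y:ℂ) - ee (y ^ (d+2) + (-s) * y) / (y:ℂ)) := by
      rw [← GI_eq _ (by lia), if_neg hy0]
      have : 2 * Real.pi * s * y = 2 * Real.pi * (s * y) := by ring
      rw [this, ee_sin, ee_add, ee_add, neg_mul]
      ring
    exact this
  rw [h3, norm_mul, norm_mul, norm_inv]
  have : ‖(2 * Complex.I : ℂ)‖ = 2 := by simp
  rw [this]
  have h4 := norm_sub_le (∫ y in Y..R, ee (y ^ (d+2) + s * y) / (y:ℂ)) (∫ y in Y..R, ee (y ^ (d+2) + (-s) * y) / (y:ℂ))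
  have hYp : 0 < (Y ^ (d+2))⁻¹ := by positivity
  have : ‖(2:ℂ)‖ = 2 := by simp
  rw [this]
  linarith

lemma I_lim (d : ℕ) (hne : Even (d+2)) (s S : ℝ) (hs : |s| ≤ S) : ∃ Is : ℂ,
    Tendsto (fun R : ℝ => Complex.ofReal (1 / (2 * Real.pi)) * Iint (d+2) s R) atTop (nhds Is) ∧
    ∀ Y : ℝ, 1 ≤ Y → S ≤ Y → ‖Complex.ofReal (1 / (2 * Real.pi)) * Iint (d+2) s Y - Is‖ ≤ (Y ^ (d+2))⁻¹ := by
  set f := fun R : ℝ => Complex.ofReal (1 / (2 * Real.pi)) * Iint (d+2) s R with hf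
  have hd : ∀ Y R : ℝ, 1 ≤ Y → S ≤ Y → Y ≤ R → ‖f R - f Y‖ ≤ (Y ^ (d+2))⁻¹ := by
    intro Y R h1 h2 h3
    simp only [hf]
    rw [← mul_sub, norm_mul, Complex.norm_real, Real.norm_eq_abs, abs_of_pos (by positivity)]
    have e1 := Iint_diff d hne s S Y R hs h1 h2 h3
    have e2 := two_pi_inv_le
    rw [one_div]
    have : 0 < (2 * Real.pi)⁻¹ := by positivity
    have := norm_nonneg (Iint (d+2) s R - Iint (d+2) s Y)
    nlinarith
  have hb : Tendsto (fun Y : ℝ => (Y ^ (d+2))⁻¹) atTop (nhds 0) :=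
    (tendsto_pow_atTop (by lia)).inv_tendsto_atTop
  have hc : ∃ Is, Tendsto f atTop (nhds Is) := by
    apply cauchySeq_tendsto_of_complete
    rw [Metric.cauchySeq_iff']
    intro ε hε
    have := (hb.eventually (gt_mem_nhds hε)).and ((eventually_ge_atTop 1).and (eventually_ge_atTop S))
    obtain ⟨N, hN1, hN2, hN3⟩ := this.exists
    refine ⟨N, fun K hK => ?_⟩
    rw [dist_eq_norm]
    exact (hd N K hN2 hN3 hK).trans_lt hN1
  obtain ⟨Is, hIs⟩ := hc
  refine ⟨Is, hIs, ?_⟩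
  intro Y h1 h2
  rw [norm_sub_rev]
  have : Tendsto (fun K => ‖f K - f Y‖) atTop (nhds ‖Is - f Y‖) := (hIs.sub_const _).norm
  exact le_of_tendsto this (eventually_atTop.mpr ⟨Y, fun R hR => hd Y R h1 h2 hR⟩)


lemma pow_diff (a b : ℝ) (ha : 0 ≤ a) (hab : a ≤ b) (n : ℕ) :
    (n+1) * a ^ n * (b - a) ≤ b ^ (n+1) - a ^ (n+1) ∧ b ^ (n+1) - a ^ (n+1) ≤ (n+1) * b ^ n * (b - a) := by
  have hb : 0 ≤ b := ha.trans hab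
  have hd : 0 ≤ b - a := by linarith
  induction n with
  | zero => simp
  | succ n ih =>
    obtain ⟨h1, h2⟩ := ih
    have hp : a ^ (n+1) ≤ b ^ (n+1) := pow_le_pow_left₀ ha hab _
    have e : b ^ (n+1+1) - a ^ (n+1+1) = b * (b ^ (n+1) - a ^ (n+1)) + a ^ (n+1) * (b - a) := by ring
    have e' : b ^ (n+1+1) - a ^ (n+1+1) = a * (b ^ (n+1) - a ^ (n+1)) + b ^ (n+1) * (b - a) := by ring
    push_cast
    constructor
    · rw [e']
      have := mul_le_mul_of_nonneg_left h1 ha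
      have := mul_le_mul_of_nonneg_right hp hd
      have e3 : a * ((n+1) * a ^ n * (b - a)) = (n+1) * (a ^ (n+1) * (b - a)) := by ring
      linarith
    · rw [e]
      have := mul_le_mul_of_nonneg_left h2 hb
      have := mul_le_mul_of_nonneg_right hp hd
      have e3 : b * ((n+1) * b ^ n * (b - a)) = (n+1) * (b ^ (n+1) * (b - a)) := by ring
      linarith

noncomputable def psiF (δ : ℝ) : ℂ := ∫ w in (0:ℝ)..1, ee (δ * w)
noncomputable def chiF (δ : ℝ) : ℂ := ∫ w in (0:ℝ)..1, Complex.ofReal (1 - w) * ee (δ * w)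

lemma psi_id (δ : ℝ) : 2 * Real.pi * Complex.I * δ * psiF δ = ee δ - 1 := by
  have hc := continuous_ee
  have h := intervalIntegral.integral_eq_sub_of_hasDerivAt (a := (0:ℝ)) (b := 1) (f := fun w => ee (δ * w))
    (f' := fun w => 2 * Real.pi * Complex.I * δ * ee (δ * w)) (fun w _ => by
      have := (hasDerivAt_ee (δ * w)).scomp w ((hasDerivAt_id w).const_mul δ)
      refine this.congr_deriv ?_
      rw [Complex.real_smul]; push_cast; ring) (by apply Continuous.intervalIntegrable; fun_prop)
  rw [intervalIntegral.integral_const_mul] at h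
  unfold psiF
  rw [h]; simp [ee_zero]

lemma chi_id (δ : ℝ) : 2 * Real.pi * Complex.I * δ * chiF δ = psiF δ - 1 := by
  have hc := continuous_ee
  have h := intervalIntegral.integral_eq_sub_of_hasDerivAt (a := (0:ℝ)) (b := 1) (f := fun w => Complex.ofReal (1 - w) * ee (δ * w))
    (f' := fun w => 2 * Real.pi * Complex.I * δ * (Complex.ofReal (1 - w) * ee (δ * w)) - ee (δ * w)) (fun w _ => by
      have h1 := (hasDerivAt_ee (δ * w)).scomp w ((hasDerivAt_id w).const_mul δ)
      have h2 := (((hasDerivAt_id w).const_sub 1).ofReal_comp).mul h1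
      refine h2.congr_deriv ?_
      rw [Complex.real_smul]; simp; ring) (by apply Continuous.intervalIntegrable; fun_prop)
  rw [intervalIntegral.integral_sub (by apply Continuous.intervalIntegrable; fun_prop) (by apply Continuous.intervalIntegrable; fun_prop),
    intervalIntegral.integral_const_mul] at h
  unfold chiF psiF
  simp [ee_zero] at h
  simp
  linear_combination h

lemma ee_unit_diff (a b w : ℝ) (hw : w ∈ Set.uIoc (0:ℝ) 1) : ‖ee (a * w) - ee (b * w)‖ ≤ 2 * Real.pi * |a - b| := by
  rw [Set.uIoc_of_le zero_le_one] at hw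
  refine (norm_ee_sub_ee _ _).trans ?_
  rw [← sub_mul, abs_mul]
  have : |w| ≤ 1 := by rw [abs_le]; constructor <;> linarith [hw.1, hw.2]
  have := Real.pi_pos
  have := abs_nonneg (a - b)
  have := mul_le_mul_of_nonneg_left ‹|w| ≤ 1› this
  nlinarith

lemma psi_lip (a b : ℝ) : ‖psiF a - psiF b‖ ≤ 2 * Real.pi * |a - b| := by
  have hc := continuous_ee
  unfold psiF
  rw [← intervalIntegral.integral_sub (by apply Continuous.intervalIntegrable; fun_prop) (by apply Continuous.intervalIntegrable; fun_prop)]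
  have := intervalIntegral.norm_integral_le_of_norm_le_const (a := (0:ℝ)) (b := 1) (ee_unit_diff a b)
  simpa using this

lemma chi_lip (a b : ℝ) : ‖chiF a - chiF b‖ ≤ 2 * Real.pi * |a - b| := by
  have hc := continuous_ee
  unfold chiF
  rw [← intervalIntegral.integral_sub (by apply Continuous.intervalIntegrable; fun_prop) (by apply Continuous.intervalIntegrable; fun_prop)]
  have := intervalIntegral.norm_integral_le_of_norm_le_const (a := (0:ℝ)) (b := 1) (f := fun w => Complex.ofReal (1 - w) * ee (a * w) - Complex.ofReal (1 - w) * ee (b * w)) (C := 2 * Real.pi * |a - b|) (by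
    intro w hw
    have h := ee_unit_diff a b w hw
    rw [Set.uIoc_of_le zero_le_one] at hw
    rw [← mul_sub, norm_mul, Complex.norm_real, Real.norm_eq_abs]
    have : |1 - w| ≤ 1 := by rw [abs_le]; constructor <;> linarith [hw.1, hw.2]
    have h0 := norm_nonneg (ee (a * w) - ee (b * w))
    nlinarith)
  simpa using this

lemma psi_zero : psiF 0 = 1 := by unfold psiF; simp [ee_zero]

lemma chi_le (a : ℝ) : ‖chiF a‖ ≤ 1 := by
  unfold chiF
  have := intervalIntegral.norm_integral_le_of_norm_le_const (a := (0:ℝ)) (b := 1) (f := fun w => Complex.ofReal (1 - w) * ee (a * w)) (C := 1) (by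
    intro w hw
    rw [Set.uIoc_of_le zero_le_one] at hw
    rw [norm_mul, norm_ee, Complex.norm_real, Real.norm_eq_abs, mul_one]
    rw [abs_le]; constructor <;> linarith [hw.1, hw.2])
  simpa using this

lemma psi_ge (a : ℝ) (ha : |a| ≤ 1/16) : 1/2 ≤ ‖psiF a‖ := by
  have h := psi_lip 0 a
  rw [psi_zero, zero_sub, abs_neg] at h
  have h1 := norm_sub_norm_le (1:ℂ) (psiF a)
  rw [norm_one] at h1
  have := Real.pi_lt_d2
  have := Real.pi_pos
  nlinarith [abs_nonneg a]

noncomputable def hF (δ : ℝ) : ℂ := chiF δ / psiF δ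

lemma psi_ne (a : ℝ) (ha : |a| ≤ 1/16) : psiF a ≠ 0 := by
  have := psi_ge a ha
  intro h; rw [h, norm_zero] at this; linarith

lemma hF_le (a : ℝ) (ha : |a| ≤ 1/16) : ‖hF a‖ ≤ 2 := by
  unfold hF
  have h1 := psi_ge a ha
  rw [norm_div, div_le_iff₀ (by linarith)]
  linarith [chi_le a]

lemma hF_lip (a b : ℝ) (ha : |a| ≤ 1/16) (hb : |b| ≤ 1/16) : ‖hF a - hF b‖ ≤ 40 * |a - b| := by
  have na := psi_ne a ha
  have nb := psi_ne b hb
  have h1 := psi_ge a ha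
  have h2 := psi_ge b hb
  have e : hF a - hF b = ((chiF a - chiF b) + hF b * (psiF b - psiF a)) / psiF a := by
    unfold hF; field_simp; ring
  rw [e, norm_div, div_le_iff₀ (by linarith)]
  refine (norm_add_le _ _).trans ?_
  rw [norm_mul]
  have h3 := chi_lip a b
  have h4 := psi_lip b a
  rw [abs_sub_comm] at h4
  have h5 := hF_le b hb
  have h6 : ‖hF b‖ * ‖psiF b - psiF a‖ ≤ 2 * (2 * Real.pi * |a - b|) := by gcongr
  have := Real.pi_lt_d2
  have := abs_nonneg (a - b)
  nlinarith

lemma hF_id (a : ℝ) (ha : |a| ≤ 1/16) : psiF a - 1 = (ee a - 1) * hF a := by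
  have na := psi_ne a ha
  unfold hF
  rw [← psi_id, ← chi_id]; field_simp

lemma sum_int (d : ℕ) (t v : ℝ) (N : ℕ) (ht : 0 ≤ t) (h1 : t * (d+2) * ((N:ℝ)+1) ^ (d+1) ≤ 1/32) (hv : |v| ≤ 1/32) :
    ‖∑ k ∈ range N, ee (t * (k:ℝ) ^ (d+2) + v * k) - ∫ y in (0:ℝ)..N, ee (t * y ^ (d+2) + v * y)‖ ≤ 15 := by
  have hc := continuous_ee
  set φ : ℝ → ℝ := fun y => t * y ^ (d+2) + v * y with hφ
  set δ : ℕ → ℝ := fun k => φ (k+1) - φ k with hδ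
  have hφc : Continuous φ := by simp only [hφ]; fun_prop
  have hδe : ∀ k, δ k = t * (((k:ℝ)+1) ^ (d+2) - (k:ℝ)^(d+2)) + v := by intro k; simp only [hδ, hφ]; ring
  have hpd := fun (k : ℕ) => pow_diff (k:ℝ) (k+1) (by positivity) (by linarith) (d+1)
  have hmono : ∀ k, δ k ≤ δ (k+1) := by
    intro k
    rw [hδe, hδe]
    have a1 := (hpd k).2
    have a2 := (hpd (k+1)).1
    push_cast at a1 a2 ⊢
    have : ((k:ℝ)+1) ^ (d+2) - (k:ℝ)^(d+2) ≤ ((k:ℝ)+1+1) ^ (d+2) - ((k:ℝ)+1)^(d+2) := by linarith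
    have := mul_le_mul_of_nonneg_left this ht
    linarith
  obtain ⟨hv1, hv2⟩ := abs_le.mp hv
  have hδb : ∀ k ≤ N, |δ k| ≤ 1/16 := by
    intro k hk
    have hkN : (k:ℝ) ≤ N := by exact_mod_cast hk
    have a1 := (hpd k).2
    have a3 := (hpd k).1
    have a2 : ((k:ℝ)+1)^(d+1) ≤ ((N:ℝ)+1)^(d+1) := by gcongr
    have hd0 : (0:ℝ) ≤ d := Nat.cast_nonneg d
    push_cast at a1 a3
    have a4 : ((k:ℝ)+1) ^ (d+2) - (k:ℝ)^(d+2) ≤ (d+2) * ((N:ℝ)+1)^(d+1) := by nlinarith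
    have a5 : 0 ≤ ((k:ℝ)+1) ^ (d+2) - (k:ℝ)^(d+2) := by
      refine le_trans ?_ a3
      have : (k:ℝ) + 1 - k = 1 := by ring
      rw [this]; positivity
    have a6 := mul_le_mul_of_nonneg_left a4 ht
    have a7 := mul_nonneg ht a5
    rw [hδe, abs_le]
    constructor <;> linarith
  have hint : ∫ y in (0:ℝ)..N, ee (φ y) = ∑ k ∈ range N, ∫ w in (0:ℝ)..1, ee (φ (k + w)) := by
    have := intervalIntegral.sum_integral_adjacent_intervals (f := fun y => ee (φ y)) (μ := volume) (a := fun k : ℕ => (k:ℝ)) (n := N)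
      (fun k _ => by apply Continuous.intervalIntegrable; fun_prop)
    simp only [Nat.cast_zero] at this
    rw [← this]
    apply sum_congr rfl; intro k _
    rw [intervalIntegral.integral_comp_add_left (fun y => ee (φ y)) (k:ℝ)]
    simp
  have hlin : ∀ k : ℕ, ‖(∫ w in (0:ℝ)..1, ee (φ (k + w))) - ee (φ k) * psiF (δ k)‖ ≤ 2 * Real.pi * (t * ((d+2) * (((k:ℝ)+1)^(d+1) - (k:ℝ)^(d+1)))) := by
    intro k
    unfold psiF
    rw [← intervalIntegral.integral_const_mul, ← intervalIntegral.integral_sub (by apply Continuous.intervalIntegrable; fun_prop) (by apply Continuous.intervalIntegrable; fun_prop)]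
    have := intervalIntegral.norm_integral_le_of_norm_le_const (a := (0:ℝ)) (b := 1) (f := fun w => ee (φ (k + w)) - ee (φ k) * ee (δ k * w))
      (C := 2 * Real.pi * (t * ((d+2) * (((k:ℝ)+1)^(d+1) - (k:ℝ)^(d+1))))) (by
      intro w hw
      rw [Set.uIoc_of_le zero_le_one] at hw
      rw [← ee_add]
      refine (norm_ee_sub_ee _ _).trans ?_
      gcongr
      have hk0 : (0:ℝ) ≤ k := Nat.cast_nonneg k
      have hd0 : (0:ℝ) ≤ d := Nat.cast_nonneg d
      have b1 := pow_diff (k:ℝ) (k+w) hk0 (by linarith [hw.1]) (d+1)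
      have b2 := hpd k
      push_cast at b1 b2
      have e : φ (k + w) - (φ k + δ k * w) = t * (((k:ℝ)+w)^(d+2) - (k:ℝ)^(d+2) - w * (((k:ℝ)+1) ^ (d+2) - (k:ℝ)^(d+2))) := by
        rw [hδe]; simp only [hφ]; ring
      rw [e, abs_mul, abs_of_nonneg ht]
      gcongr
      set P := (k:ℝ)^(d+1) with hP
      set Q := ((k:ℝ)+1)^(d+1) with hQ
      have hPQ : P ≤ Q := by rw [hP, hQ]; gcongr; linarith
      have hQw : ((k:ℝ)+w)^(d+1) ≤ Q := pow_le_pow_left₀ (by linarith [hw.1]) (by linarith [hw.2]) _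
      obtain ⟨b11, b12⟩ := b1
      obtain ⟨b21, b22⟩ := b2
      have c1 : (d+2) * P * w ≤ ((k:ℝ)+w)^(d+2) - (k:ℝ)^(d+2) := by
        refine le_trans (le_of_eq ?_) b11; ring
      have c2 : ((k:ℝ)+w)^(d+2) - (k:ℝ)^(d+2) ≤ (d+2) * Q * w := by
        refine b12.trans ?_
        have : ((d:ℝ)+1+1) * ((k:ℝ)+w)^(d+1) * ((k:ℝ)+w-k) = ((d:ℝ)+2) * ((k:ℝ)+w)^(d+1) * w := by ring
        rw [this]
        have := hw.1.le
        gcongr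
      have c3 : (d+2) * P ≤ ((k:ℝ)+1)^(d+2) - (k:ℝ)^(d+2) := by
        refine le_trans (le_of_eq ?_) b21; ring
      have c4 : ((k:ℝ)+1)^(d+2) - (k:ℝ)^(d+2) ≤ (d+2) * Q := by
        refine le_trans b22 (le_of_eq ?_); ring
      have c5 := mul_le_mul_of_nonneg_left c3 hw.1.le
      have c6 := mul_le_mul_of_nonneg_left c4 hw.1.le
      have c7 : 0 ≤ (d+2) * (Q - P) := by apply mul_nonneg; linarith; linarith
      have c8 : w * ((d+2) * (Q - P)) ≤ 1 * ((d+2) * (Q - P)) := mul_le_mul_of_nonneg_right hw.2 c7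
      rw [abs_le]
      constructor <;> linarith)
    simpa using this
  have htel : ∑ k ∈ range N, 2 * Real.pi * (t * ((d+2) * (((k:ℝ)+1)^(d+1) - (k:ℝ)^(d+1)))) ≤ 1 := by
    have : ∀ k ∈ range N, 2 * Real.pi * (t * ((d+2) * (((k:ℝ)+1)^(d+1) - (k:ℝ)^(d+1)))) =
       2 * Real.pi * (t * (d+2)) * ((((k+1 : ℕ):ℝ))^(d+1) - (k:ℝ)^(d+1)) := by intro k _; push_cast; ring
    rw [sum_congr rfl this, ← mul_sum, sum_range_sub (fun k : ℕ => (k:ℝ)^(d+1))]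
    have a2 : (N:ℝ)^(d+1) ≤ ((N:ℝ)+1)^(d+1) := by gcongr; linarith
    have a3 : t * (d+2) * ((N:ℝ)^(d+1) - ((0:ℕ):ℝ)^(d+1)) ≤ 1/32 := by
      refine le_trans ?_ h1
      gcongr
      simp; exact a2
    have := Real.pi_lt_d2
    have hpi := Real.pi_pos
    rw [mul_assoc]
    calc _ ≤ 2 * Real.pi * (1/32) := by gcongr
      _ ≤ 1 := by linarith
  have hab : ‖∑ k ∈ Ico 0 N, (ee (φ (k+1:ℕ)) - ee (φ k)) * hF (δ k)‖ ≤ 2 * (2 + 5) := by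
    refine (abel_ineq (fun k => ee (φ (k+1:ℕ)) - ee (φ k)) (fun k => hF (δ k)) 0 N (by lia) 2 ?_).trans ?_
    · intro j _ _
      rw [Nat.Ico_zero_eq_range, sum_range_sub (fun k : ℕ => ee (φ k))]
      refine (norm_sub_le _ _).trans ?_
      rw [norm_ee, norm_ee]; norm_num
    · gcongr
      · exact hF_le _ (hδb N le_rfl)
      · calc _ ≤ ∑ k ∈ Ico 0 N, 40 * (δ (k+1) - δ k) := by
              apply sum_le_sum; intro k hk
              rw [mem_Ico] at hk
              refine (hF_lip _ _ (hδb (k+1) (by lia)) (hδb k (by lia))).trans ?_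
              rw [abs_of_nonneg (by linarith [hmono k])]
          _ = 40 * (δ N - δ 0) := by rw [← mul_sum, Nat.Ico_zero_eq_range, sum_range_sub]
          _ ≤ 5 := by
              have := abs_le.mp (hδb N le_rfl)
              have := abs_le.mp (hδb 0 (by lia))
              linarith
  have hkey : ∑ k ∈ range N, ee (φ k) - ∫ y in (0:ℝ)..N, ee (φ y) = 
     -(∑ k ∈ range N, ((∫ w in (0:ℝ)..1, ee (φ (k + w))) - ee (φ k) * psiF (δ k))) - ∑ k ∈ Ico 0 N, (ee (φ (k+1:ℕ)) - ee (φ k)) * hF (δ k) := by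
    rw [hint, Nat.Ico_zero_eq_range, ← sum_sub_distrib, ← sum_neg_distrib, ← sum_sub_distrib]
    apply sum_congr rfl; intro k hk
    rw [mem_range] at hk
    have e1 := hF_id (δ k) (hδb k hk.le)
    have e2 : ee (φ (k+1:ℕ)) = ee (δ k) * ee (φ k) := by
      rw [← ee_add]; simp only [hδ]; push_cast; ring_nf
    rw [e2]
    linear_combination (-ee (φ k)) * e1
  rw [hkey]
  refine (norm_sub_le _ _).trans ?_
  rw [norm_neg]
  have h3 : ‖∑ k ∈ range N, ((∫ w in (0:ℝ)..1, ee (φ (k + w))) - ee (φ k) * psiF (δ k))‖ ≤ 1 :=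
    (norm_sum_le _ _).trans ((sum_le_sum (fun k _ => hlin k)).trans htel)
  linarith


lemma int_ee (β y : ℝ) : ∫ v in (-β)..β, ee (v * y) = Complex.ofReal (2 * β * Real.sinc (2 * Real.pi * β * y)) := by
  have hc := continuous_ee
  by_cases hy : y = 0
  · subst hy
    simp [ee_zero]; ring
  have hyc : (y:ℂ) ≠ 0 := by exact_mod_cast hy
  have hpi : (Real.pi:ℂ) ≠ 0 := by exact_mod_cast Real.pi_ne_zero
  have h := intervalIntegral.integral_eq_sub_of_hasDerivAt (a := -β) (b := β) (f := fun v => (2 * Real.pi * Complex.I * y)⁻¹ * ee (v * y))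
    (f' := fun v => ee (v * y)) (fun v _ => by
      have := ((hasDerivAt_ee (v * y)).scomp v ((hasDerivAt_id v).mul_const y)).const_mul ((2 * Real.pi * Complex.I * y)⁻¹)
      refine this.congr_deriv ?_
      rw [Complex.real_smul]; push_cast; field_simp [Complex.I_ne_zero]) (by apply Continuous.intervalIntegrable; fun_prop)
  rw [h]
  have e : Complex.ofReal (2 * β * Real.sinc (2 * Real.pi * β * y)) = Complex.ofReal (Real.sin (2 * Real.pi * (β * y)) / (Real.pi * y)) := by
    congr 1
    by_cases hb : β = 0
    · subst hb; simp
    · have := Real.pi_ne_zero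
      rw [Real.sinc_of_ne_zero (by positivity)]
      rw [show 2 * Real.pi * β * y = 2 * Real.pi * (β * y) by ring]
      field_simp
  rw [e, Complex.ofReal_div, ee_sin, neg_mul]
  push_cast
  field_simp [Complex.I_ne_zero]

lemma A_main (d : ℕ) (hne : Even (d+2)) (t τ s : ℝ) (N : ℕ) (ht : 0 < t) (hτ : 0 < τ) (hτt : τ ^ (d+2) = t) (hN : 1 ≤ N)
    (h1 : t * (d+2) * ((N:ℝ)+1) ^ (d+1) ≤ 1/32) (hs : |s * τ| ≤ 1/32) :
    ‖VN (d+2) t (s * τ) N - Complex.ofReal (1 / (2 * Real.pi)) * Iint (d+2) s (N * τ)‖ ≤ 32 * |s * τ| := by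
  have hc := continuous_ee
  have hpi0 := Real.pi_ne_zero
  set β := s * τ with hβ
  have hsum : ∫ v in (-β)..β, ∑ k ∈ range N, ee (t * (k:ℝ) ^ (d+2) + v * k) = VN (d+2) t β N + Complex.ofReal (2 * β) := by
    rw [intervalIntegral.integral_finsetSum (fun k _ => by apply Continuous.intervalIntegrable; fun_prop)]
    obtain ⟨N', rfl⟩ : ∃ N', N = N' + 1 := ⟨N - 1, by lia⟩
    unfold VN
    rw [sum_range_succ', sum_range_succ']
    simp_rw [ee_add, intervalIntegral.integral_const_mul, int_ee]
    have : ∀ k ∈ range N', ee (t * ((k+1 : ℕ):ℝ) ^ (d+2)) * Complex.ofReal (2 * β * Real.sinc (2 * Real.pi * β * ((k+1 : ℕ):ℝ))) =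
       ee (t * ((k+1 : ℕ):ℝ) ^ (d+2)) * Complex.ofReal (Real.sin (2 * Real.pi * β * ((k+1 : ℕ):ℝ)) / (Real.pi * ((k+1 : ℕ):ℝ))) := by
      intro k _
      congr 2
      by_cases hb : β = 0
      · rw [hb]; simp
      · have : (((k+1 : ℕ):ℝ)) ≠ 0 := by exact_mod_cast (by lia : k + 1 ≠ 0)
        rw [Real.sinc_of_ne_zero (by positivity)]
        field_simp
    rw [sum_congr rfl this]
    simp [ee_zero]
  have hintg : ∫ v in (-β)..β, ∫ y in (0:ℝ)..N, ee (t * y ^ (d+2) + v * y) = Complex.ofReal (1 / (2 * Real.pi)) * Iint (d+2) s (N * τ) := by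
    rw [MeasureTheory.intervalIntegral_intervalIntegral_swap]
    · simp_rw [ee_add, intervalIntegral.integral_const_mul, int_ee]
      rw [Iint_eq _ (by lia) hne]
      have h2 := intervalIntegral.smul_integral_comp_mul_left (a := 0) (b := (N:ℝ)) (c := τ) (f := GI (d+2) s)
      rw [mul_zero, mul_comm τ] at h2
      rw [← h2, Complex.real_smul, ← intervalIntegral.integral_const_mul, ← intervalIntegral.integral_const_mul, ← intervalIntegral.integral_const_mul]
      apply intervalIntegral.integral_congr
      intro y _
      have e1 : 2 * Real.pi * s * (τ * y) = 2 * Real.pi * β * y := by rw [hβ]; ring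
      have e2 : (τ * y) ^ (d+2) = t * y ^ (d+2) := by rw [mul_pow, hτt]
      simp only [GI]
      rw [e1, e2, hβ]
      have hpc : (Real.pi:ℂ) ≠ 0 := by exact_mod_cast hpi0
      push_cast; field_simp
    · have hcont : Continuous (Function.uncurry (fun v y : ℝ => ee (t * y ^ (d+2) + v * y))) := by
        simp only [Function.uncurry_def]; fun_prop
      refine (hcont.continuousOn.integrableOn_compact (isCompact_uIcc.prod isCompact_uIcc)).mono_set
        (Set.prod_mono Set.uIoc_subset_uIcc Set.uIoc_subset_uIcc)
  have hdiff : (VN (d+2) t β N + Complex.ofReal (2 * β)) - Complex.ofReal (1 / (2 * Real.pi)) * Iint (d+2) s (N * τ) =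
     ∫ v in (-β)..β, (∑ k ∈ range N, ee (t * (k:ℝ) ^ (d+2) + v * k) - ∫ y in (0:ℝ)..N, ee (t * y ^ (d+2) + v * y)) := by
    rw [intervalIntegral.integral_sub, hsum, hintg]
    · apply Continuous.intervalIntegrable; fun_prop
    · apply Continuous.intervalIntegrable
      apply intervalIntegral.continuous_parametric_intervalIntegral_of_continuous'
      fun_prop
  have hb := intervalIntegral.norm_integral_le_of_norm_le_const (a := -β) (b := β)
    (f := fun v => ∑ k ∈ range N, ee (t * (k:ℝ) ^ (d+2) + v * k) - ∫ y in (0:ℝ)..N, ee (t * y ^ (d+2) + v * y)) (C := 15) (by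
      intro v hv
      apply sum_int d t v N ht.le h1
      refine le_trans ?_ hs
      rw [Set.mem_uIoc] at hv
      rcases hv with ⟨a, b⟩ | ⟨a, b⟩
      · rw [abs_le]; have := le_abs_self β; constructor <;> linarith
      · rw [abs_le]; have := neg_le_abs β; constructor <;> linarith)
  rw [← hdiff] at hb
  have e1 : |β - -β| = 2 * |β| := by rw [show β - -β = 2 * β by ring, abs_mul]; simp
  rw [e1] at hb
  have e2 : ‖Complex.ofReal (2 * β)‖ = 2 * |β| := by rw [Complex.norm_real, Real.norm_eq_abs, abs_mul]; simp
  have e3 : VN (d+2) t β N - Complex.ofReal (1 / (2 * Real.pi)) * Iint (d+2) s (N * τ) = (VN (d+2) t β N + Complex.ofReal (2 * β) - Complex.ofReal (1 / (2 * Real.pi)) * Iint (d+2) s (N * τ)) - Complex.ofReal (2 * β) := by ring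
  rw [e3]
  refine (norm_sub_le _ _).trans ?_
  rw [e2]; linarith


lemma kuzmin (d : ℕ) (t x l : ℝ) (M N : ℕ) (ht : 0 ≤ t) (hl : 0 < l) (hl1 : l ≤ 1) (hx1 : l ≤ x) (hx2 : x ≤ 1 - l)
    (h1 : t * (d+2) * ((N:ℝ)+1) ^ (d+1) ≤ l/2) (hMN : M ≤ N) :
    ‖∑ k ∈ Ico M N, ee (t * (k:ℝ) ^ (d+2) + x * k)‖ ≤ 5 / l ^ 2 := by
  set φ : ℕ → ℝ := fun k => t * (k:ℝ) ^ (d+2) + x * k with hφ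
  set δ : ℕ → ℝ := fun k => φ (k+1) - φ k with hδ
  have hδe : ∀ k, δ k = t * (((k:ℝ)+1) ^ (d+2) - (k:ℝ)^(d+2)) + x := by intro k; simp only [hδ, hφ]; push_cast; ring
  have hpd := fun (k : ℕ) => pow_diff (k:ℝ) (k+1) (by positivity) (by linarith) (d+1)
  have hmono : ∀ k, δ k ≤ δ (k+1) := by
    intro k
    rw [hδe, hδe]
    have a1 := (hpd k).2
    have a2 := (hpd (k+1)).1
    push_cast at a1 a2 ⊢
    have : ((k:ℝ)+1) ^ (d+2) - (k:ℝ)^(d+2) ≤ ((k:ℝ)+1+1) ^ (d+2) - ((k:ℝ)+1)^(d+2) := by linarith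
    have := mul_le_mul_of_nonneg_left this ht
    linarith
  have hδb : ∀ k ≤ N, l ≤ δ k ∧ δ k ≤ 1 - l/2 := by
    intro k hk
    have hkN : (k:ℝ) ≤ N := by exact_mod_cast hk
    have a1 := (hpd k).2
    have a3 := (hpd k).1
    have a2 : ((k:ℝ)+1)^(d+1) ≤ ((N:ℝ)+1)^(d+1) := by gcongr
    have hd0 : (0:ℝ) ≤ d := Nat.cast_nonneg d
    push_cast at a1 a3
    have a4 : ((k:ℝ)+1) ^ (d+2) - (k:ℝ)^(d+2) ≤ (d+2) * ((N:ℝ)+1)^(d+1) := by nlinarith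
    have a5 : 0 ≤ ((k:ℝ)+1) ^ (d+2) - (k:ℝ)^(d+2) := by
      refine le_trans ?_ a3
      have : (k:ℝ) + 1 - k = 1 := by ring
      rw [this]; positivity
    have a6 := mul_le_mul_of_nonneg_left a4 ht
    have a7 := mul_nonneg ht a5
    rw [hδe]
    constructor <;> linarith
  have hge : ∀ k ≤ N, 2 * l ≤ ‖ee (δ k) - 1‖ := by
    intro k hk
    obtain ⟨b1, b2⟩ := hδb k hk
    rw [norm_ee_sub_one]
    have := sin_lower (δ k) (l/2) (by linarith) (by linarith) (by linarith)
    linarith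
  set c : ℕ → ℂ := fun k => (ee (δ k) - 1)⁻¹ with hc
  have hne : ∀ k ≤ N, ee (δ k) - 1 ≠ 0 := by
    intro k hk h
    have := hge k hk
    rw [h, norm_zero] at this; linarith
  have hcb : ∀ k ≤ N, ‖c k‖ ≤ 1 / (2 * l) := by
    intro k hk
    simp only [hc]
    rw [norm_inv, ← one_div]
    exact one_div_le_one_div_of_le (by positivity) (hge k hk)
  have hcd : ∀ k, k + 1 ≤ N → ‖c (k+1) - c k‖ ≤ (2 / l^2) * (δ (k+1) - δ k) := by
    intro k hk
    have n1 := hne k (by lia)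
    have n2 := hne (k+1) hk
    have e : c (k+1) - c k = (ee (δ k) - ee (δ (k+1))) * (c (k+1) * c k) := by
      simp only [hc]; field_simp; ring
    rw [e, norm_mul, norm_mul]
    have b1 := norm_ee_sub_ee (δ k) (δ (k+1))
    rw [abs_sub_comm, abs_of_nonneg (by linarith [hmono k])] at b1
    have b2 := hcb k (by lia)
    have b3 := hcb (k+1) hk
    have hm := hmono k
    have hpi := Real.pi_le_four
    calc _ ≤ (2 * 4 * (δ (k+1) - δ k)) * (1 / (2 * l) * (1 / (2 * l))) := by
          have : 0 ≤ δ (k+1) - δ k := by linarith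
          gcongr
          refine b1.trans ?_
          gcongr
      _ = _ := by field_simp; ring
  have hid : ∀ k ∈ Ico M N, ee (φ k) = (ee (φ (k+1)) - ee (φ k)) * c k := by
    intro k hk
    rw [mem_Ico] at hk
    have n1 := hne k (by lia)
    have e2 : ee (φ (k+1)) = ee (δ k) * ee (φ k) := by
      rw [← ee_add]; simp only [hδ]; ring_nf
    rw [e2]; simp only [hc]; field_simp
  change ‖∑ k ∈ Ico M N, ee (φ k)‖ ≤ _
  rw [sum_congr rfl hid]
  refine (abel_ineq (fun k => ee (φ (k+1)) - ee (φ k)) c M N hMN 2 ?_).trans ?_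
  · intro j hj _
    rw [sum_Ico_sub (fun k : ℕ => ee (φ k)) hj]
    refine (norm_sub_le _ _).trans ?_
    rw [norm_ee, norm_ee]; norm_num
  · have hs : ∑ k ∈ Ico M N, ‖c (k+1) - c k‖ ≤ 2 / l^2 := by
      calc _ ≤ ∑ k ∈ Ico M N, (2 / l^2) * (δ (k+1) - δ k) := by
            apply sum_le_sum; intro k hk; rw [mem_Ico] at hk; exact hcd k (by lia)
        _ = (2 / l^2) * (δ N - δ M) := by rw [← mul_sum, sum_Ico_sub _ hMN]
        _ ≤ (2 / l^2) * 1 := by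
            gcongr
            have := hδb N le_rfl
            have := hδb M hMN
            linarith
        _ = _ := by ring
    have h3 := hcb N le_rfl
    have h4 : 1 / (2 * l) ≤ 1 / (2 * l^2) := by
      apply one_div_le_one_div_of_le (by positivity); nlinarith
    have h5 : 2 * (1 / (2 * l^2) + 2 / l^2) = 5 / l^2 := by field_simp; ring
    rw [← h5]
    gcongr
    exact h3.trans h4

lemma sawtooth_lim (θ : ℝ) (h0 : 0 < θ) (h1 : θ < 1) : 
    Tendsto (fun K : ℕ => ∑ k ∈ range K, Real.sin (2 * Real.pi * θ * k) / (Real.pi * k)) atTop (nhds (1/2 - θ)) := by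
  have hpi := Real.pi_pos
  set f : ℕ → ℝ := fun k => Real.sin (2 * Real.pi * θ * k) / (Real.pi * k) with hf
  -- convergence
  have hsin : 0 < |Real.sin (Real.pi * θ)| := by
    have : 0 < Real.sin (Real.pi * θ) := Real.sin_pos_of_pos_of_lt_pi (by positivity) (by nlinarith)
    exact abs_pos.mpr this.ne'
  have hconv : ∃ l, Tendsto (fun K : ℕ => ∑ k ∈ range K, f k) atTop (nhds l) := by
    obtain ⟨L, hL⟩ := cauchy_lim (fun K => Complex.ofReal (∑ k ∈ range K, f k)) (fun M => (1 / |Real.sin (Real.pi * θ)|) / M)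
      (tendsto_const_div_atTop_nhds_zero_nat _) 1 (fun M K hM hMK => by
        have h := TS_le θ M K hM hMK hsin
        have e : Complex.ofReal (∑ k ∈ range K, f k) - Complex.ofReal (∑ k ∈ range M, f k) = (Real.pi : ℂ)⁻¹ * TS θ M K := by
          rw [← Complex.ofReal_sub, ← sum_Ico_eq_sub _ hMK, TS, mul_sum, Complex.ofReal_sum]
          apply sum_congr rfl; intro k _
          simp only [hf]; push_cast; ring
        rw [e, norm_mul, norm_inv, Complex.norm_real, Real.norm_eq_abs, abs_of_pos hpi]
        refine le_trans ?_ h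
        have : Real.pi⁻¹ ≤ 1 := inv_le_one_of_one_le₀ (by linarith [Real.pi_gt_three])
        have := norm_nonneg (TS θ M K)
        nlinarith)
    refine ⟨L.re, ?_⟩
    have := (Complex.continuous_re.tendsto L).comp hL
    simpa [Function.comp_def] using this
  obtain ⟨l, hl⟩ := hconv
  have habel := Real.tendsto_tsum_powerSeries_nhdsWithin_lt hl
  set z := ee θ with hz
  have hval : ∀ x : ℝ, 0 < x → x < 1 → ∑' n, f n * x ^ n = Real.pi⁻¹ * (-Complex.log (1 - x * z)).im := by
    intro x hx0 hx1
    have hn : ‖(x:ℂ) * z‖ < 1 := by rw [norm_mul, norm_ee, Complex.norm_real, Real.norm_eq_abs, abs_of_pos hx0]; linarith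
    have h := Complex.hasSum_taylorSeries_neg_log hn
    have h2 := (Complex.hasSum_im h).mul_left (Real.pi⁻¹)
    rw [← h2.tsum_eq]
    congr 1; ext n
    have : ((x:ℂ) * z) ^ n / n = Complex.ofReal (x ^ n / n) * ee (n * θ) := by
      rw [ee_mul_nat, mul_pow]; push_cast; ring
    rw [this, Complex.im_ofReal_mul, ee_im]
    simp only [hf]
    rw [show 2 * Real.pi * (n * θ) = 2 * Real.pi * θ * n by ring]
    ring
  have hs0 : 0 < Real.sin (Real.pi * θ) := Real.sin_pos_of_pos_of_lt_pi (by positivity) (by nlinarith)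
  have hzz : 1 - z = ((2 * Real.sin (Real.pi * θ) : ℝ) : ℂ) * (Complex.cos ((Real.pi * θ - Real.pi / 2 : ℝ)) + Complex.sin ((Real.pi * θ - Real.pi / 2 : ℝ)) * Complex.I) := by
    rw [hz, ee_cos_sin, ← Complex.ofReal_cos, ← Complex.ofReal_sin, Real.cos_sub_pi_div_two, Real.sin_sub_pi_div_two]
    have e : 2 * Real.pi * θ = 2 * (Real.pi * θ) := by ring
    rw [e, Real.cos_two_mul, Real.sin_two_mul]
    have := Real.sin_sq_add_cos_sq (Real.pi * θ)
    generalize Real.sin (Real.pi * θ) = a at this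
    generalize Real.cos (Real.pi * θ) = b at this
    apply Complex.ext
    · simp [← Complex.ofReal_pow]; nlinarith
    · simp [← Complex.ofReal_pow]
  have harg : (1 - z).arg = Real.pi * θ - Real.pi / 2 := by
    rw [hzz]
    exact Complex.arg_mul_cos_add_sin_mul_I (by positivity) ⟨by nlinarith, by nlinarith⟩
  have hre : 0 < (1 - z).re := by
    rw [hzz, ← Complex.ofReal_cos, ← Complex.ofReal_sin, Real.cos_sub_pi_div_two]
    generalize Real.sin (Real.pi * θ) = a at hs0
    generalize Real.sin (Real.pi * θ - Real.pi / 2) = b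
    simp
    positivity
  have hlim : Tendsto (fun x : ℝ => Real.pi⁻¹ * (-Complex.log (1 - x * z)).im) (nhdsWithin 1 (Set.Iio 1)) (nhds (1/2 - θ)) := by
    have hc : ContinuousAt (fun x : ℝ => Real.pi⁻¹ * (-Complex.log (1 - x * z)).im) 1 := by
      have h1 : ContinuousAt (fun x : ℝ => (1:ℂ) - x * z) 1 := by fun_prop
      have h2 : ContinuousAt (fun x : ℝ => Complex.log (1 - x * z)) 1 := by
        apply h1.clog
        left
        simpa using hre
      exact (Complex.continuous_im.continuousAt.comp h2.neg).const_mul _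
    have h3 := hc.tendsto.mono_left (nhdsWithin_le_nhds (s := Set.Iio 1))
    convert h3 using 2
    simp only [Complex.ofReal_one, one_mul, Complex.neg_im, Complex.log_im, harg]
    field_simp
    ring
  have hev : (fun x : ℝ => ∑' n, f n * x ^ n) =ᶠ[nhdsWithin 1 (Set.Iio 1)] (fun x : ℝ => Real.pi⁻¹ * (-Complex.log (1 - x * z)).im) := by
    filter_upwards [Ioo_mem_nhdsLT (by norm_num : (0:ℝ) < 1)] with x hx
    exact hval x hx.1 hx.2
  have := tendsto_nhds_unique habel (hlim.congr' hev.symm)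
  rw [← this]; exact hl


lemma B_far (d : ℕ) (t θ l : ℝ) (M N : ℕ) (ht : 0 ≤ t) (hl : 0 < l) (hl1 : l ≤ 1/2) (hx1 : l ≤ θ) (hx2 : θ ≤ 1 - l)
    (h1 : t * (d+2) * ((N:ℝ)+1) ^ (d+1) ≤ l/2) (hM : 1 ≤ M) (hMN : M ≤ N) :
    ‖VN (d+2) t θ N - VN (d+2) t θ M‖ ≤ 5 / l ^ 2 / M := by
  rw [VN_sub _ _ _ _ _ hMN]
  simp only [VN_term]
  rw [← mul_sum, sum_sub_distrib, norm_mul, norm_two_pi_I_inv]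
  have hh : ∀ j : ℕ, j ≤ N → t * (d+2) * ((j:ℝ)+1) ^ (d+1) ≤ l/2 := by
    intro j hj
    have : (j:ℝ) ≤ N := by exact_mod_cast hj
    refine le_trans ?_ h1
    gcongr
  have e1 := abel_inv (fun k => ee (t * (k:ℝ) ^ (d+2) + θ * k)) M N hM hMN (5/l^2) (fun j h2 h3 =>
    kuzmin d t θ l M j ht hl (by linarith) hx1 hx2 (hh j h3) h2)
  have hper : ∀ k : ℕ, ee (t * (k:ℝ) ^ (d+2) + (-θ) * k) = ee (t * (k:ℝ) ^ (d+2) + (1-θ) * k) := by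
    intro k
    rw [show t * (k:ℝ) ^ (d+2) + (1-θ) * k = (t * (k:ℝ) ^ (d+2) + (-θ) * k) + k by ring, ee_add _ (k:ℝ), ee_nat, mul_one]
  have e2 := abel_inv (fun k => ee (t * (k:ℝ) ^ (d+2) + (-θ) * k)) M N hM hMN (5/l^2) (fun j h2 h3 => by
    simp only [hper]
    exact kuzmin d t (1-θ) l M j ht hl (by linarith) (by linarith) (by linarith) (hh j h3) h2)
  set Q := 5 / l ^ 2 / (M:ℝ)
  calc _ ≤ (1/2) * (Q + Q) := by
        gcongr
        · exact two_pi_inv_le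
        · exact (norm_sub_le _ _).trans (add_le_add e1 e2)
    _ = Q := by ring

lemma B_near (d : ℕ) (t θ l : ℝ) (N : ℕ) (ht : 0 ≤ t) (hl : 0 < l) (hx1 : l ≤ θ) (hx2 : θ ≤ 1 - l) (hN : 1 ≤ N) :
    ‖VN (d+2) t θ N - Complex.ofReal (∑ k ∈ range N, Real.sin (2 * Real.pi * θ * k) / (Real.pi * k))‖
      ≤ (d+4) / l * (t * (N:ℝ)^(d+1)) := by
  have hpi := Real.pi_pos
  have hsl := sin_lower θ l hl.le hx1 (by linarith)
  set w : ℕ → ℂ := fun k => (ee (t * (k:ℝ)^(d+2)) - 1) * (k:ℂ)⁻¹ with hw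
  have e : VN (d+2) t θ N - Complex.ofReal (∑ k ∈ range N, Real.sin (2 * Real.pi * θ * k) / (Real.pi * k))
      = (Real.pi:ℂ)⁻¹ * ∑ k ∈ Ico 1 N, Complex.ofReal (Real.sin (2 * Real.pi * θ * k)) * w k := by
    rw [VN, Complex.ofReal_sum, ← sum_sub_distrib, range_eq_Ico, sum_eq_sum_Ico_succ_bot (by lia), mul_sum]
    simp only [Nat.cast_zero, mul_zero, Real.sin_zero, zero_div, Complex.ofReal_zero, sub_zero, zero_add]
    apply sum_congr rfl
    intro k _
    simp only [hw]; push_cast; ring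
  have hA : ∀ k : ℕ, ‖ee (t * (k:ℝ)^(d+2)) - 1‖ ≤ 2 * Real.pi * (t * (k:ℝ)^(d+2)) := by
    intro k
    have := norm_ee_sub_one_le (t * (k:ℝ)^(d+2))
    rwa [abs_of_nonneg (by positivity)] at this
  have hwN : ‖w N‖ ≤ 2 * Real.pi * t * (N:ℝ)^(d+1) := by
    have hN0 : (0:ℝ) < N := by exact_mod_cast hN
    simp only [hw]
    rw [norm_mul, norm_inv, Complex.norm_natCast]
    calc _ ≤ 2 * Real.pi * (t * (N:ℝ)^(d+2)) * (N:ℝ)⁻¹ := by gcongr; exact hA N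
      _ = _ := by field_simp; ring
  have hwd : ∀ k ∈ Ico 1 N, ‖w (k+1) - w k‖ ≤ 2 * Real.pi * t * (d+3) * (N:ℝ)^d := by
    intro k hk
    rw [mem_Ico] at hk
    have hk0 : (0:ℝ) < k := by exact_mod_cast hk.1
    have hkN : (k:ℝ) + 1 ≤ N := by exact_mod_cast hk.2
    have hkc : (k:ℂ) ≠ 0 := by exact_mod_cast hk0.ne'
    have hkc1 : (k:ℂ) + 1 ≠ 0 := by exact_mod_cast (by lia : k + 1 ≠ 0)
    have e2 : w (k+1) - w k = (ee (t * ((k+1:ℕ):ℝ)^(d+2)) - ee (t * (k:ℝ)^(d+2))) * ((k+1:ℕ):ℂ)⁻¹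
        - (ee (t * (k:ℝ)^(d+2)) - 1) * ((k+1:ℕ):ℂ)⁻¹ * (k:ℂ)⁻¹ := by
      simp only [hw]; push_cast; field_simp; ring
    rw [e2]
    refine (norm_sub_le _ _).trans ?_
    rw [norm_mul, norm_mul, norm_mul, norm_inv, norm_inv, Complex.norm_natCast, Complex.norm_natCast]
    have b1 := norm_ee_sub_ee (t * ((k+1:ℕ):ℝ)^(d+2)) (t * (k:ℝ)^(d+2))
    have pd := (pow_diff (k:ℝ) (k+1) hk0.le (by linarith) (d+1)).2
    push_cast at pd b1 ⊢
    have hp0 : (k:ℝ)^(d+2) ≤ ((k:ℝ)+1)^(d+2) := by gcongr; linarith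
    rw [← mul_sub, abs_of_nonneg (mul_nonneg ht (by linarith))] at b1
    have c1 : ‖ee (t * ((k:ℝ)+1)^(d+2)) - ee (t * (k:ℝ)^(d+2))‖ ≤ 2 * Real.pi * (t * ((d+2) * ((k:ℝ)+1)^(d+1))) := by
      refine b1.trans ?_
      gcongr
      linarith
    have c2 := hA k
    calc _ ≤ 2 * Real.pi * (t * ((d+2) * ((k:ℝ)+1)^(d+1))) * ((k:ℝ)+1)⁻¹ + 2 * Real.pi * (t * (k:ℝ)^(d+2)) * ((k:ℝ)+1)⁻¹ * (k:ℝ)⁻¹ := by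
          gcongr
      _ = 2 * Real.pi * t * (d+2) * ((k:ℝ)+1)^d + 2 * Real.pi * t * (k:ℝ)^d * ((k:ℝ) * ((k:ℝ)+1)⁻¹) := by
          field_simp; ring
      _ ≤ 2 * Real.pi * t * (d+2) * (N:ℝ)^d + 2 * Real.pi * t * (N:ℝ)^d * 1 := by
          gcongr
          · linarith
          · rw [← div_eq_mul_inv, div_le_one (by linarith)]; linarith
      _ = _ := by ring
  have hab := abel_ineq (fun k => Complex.ofReal (Real.sin (2 * Real.pi * θ * k))) w 1 N hN (1/(2*l)) (by
    intro j _ _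
    have := sin_part θ 1 j
    rw [le_div_iff₀ (by positivity)]
    refine le_trans ?_ this
    gcongr)
  have hsum : ∑ k ∈ Ico 1 N, ‖w (k+1) - w k‖ ≤ 2 * Real.pi * t * (d+3) * (N:ℝ)^(d+1) := by
    refine (sum_le_sum hwd).trans ?_
    rw [sum_const, Nat.card_Ico, nsmul_eq_mul, pow_succ]
    have : ((N-1:ℕ):ℝ) ≤ N := by exact_mod_cast Nat.sub_le N 1
    calc _ ≤ (N:ℝ) * (2 * Real.pi * t * (d+3) * (N:ℝ)^d) := by gcongr
      _ = _ := by ring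
  rw [e, norm_mul, norm_inv, Complex.norm_real, Real.norm_eq_abs, abs_of_pos hpi]
  calc _ ≤ Real.pi⁻¹ * (1/(2*l) * (2 * Real.pi * t * (N:ℝ)^(d+1) + 2 * Real.pi * t * (d+3) * (N:ℝ)^(d+1))) := by
        gcongr
        refine hab.trans ?_
        gcongr
    _ = _ := by field_simp; ring

lemma B_saw (θ l : ℝ) (N : ℕ) (hl : 0 < l) (hx1 : l ≤ θ) (hx2 : θ ≤ 1 - l) (hN : 1 ≤ N) :
    ‖Complex.ofReal (1/2-θ) - Complex.ofReal (∑ k ∈ range N, Real.sin (2 * Real.pi * θ * k) / (Real.pi * k))‖ ≤ 1 / l / N := by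
  have hpi := Real.pi_pos
  have hsl := sin_lower θ l hl.le hx1 (by linarith)
  have hlim := sawtooth_lim θ (by linarith) (by linarith)
  have hlim2 := (Complex.continuous_ofReal.tendsto _).comp hlim
  refine lim_bound _ _ _ _ hlim2 N ?_
  intro K hK
  have h := TS_le θ N K hN hK (by linarith)
  have e : Complex.ofReal (∑ k ∈ range K, Real.sin (2 * Real.pi * θ * k) / (Real.pi * k)) - Complex.ofReal (∑ k ∈ range N, Real.sin (2 * Real.pi * θ * k) / (Real.pi * k)) = (Real.pi : ℂ)⁻¹ * TS θ N K := by
    rw [← Complex.ofReal_sub, ← sum_Ico_eq_sub _ hK, TS, mul_sum, Complex.ofReal_sum]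
    apply sum_congr rfl; intro k _
    push_cast; ring
  simp only [Function.comp]
  rw [e, norm_mul, norm_inv, Complex.norm_real, Real.norm_eq_abs, abs_of_pos hpi]
  have h2 : Real.pi⁻¹ ≤ 1 := inv_le_one_of_one_le₀ (by linarith [Real.pi_gt_three])
  have h3 := norm_nonneg (TS θ N K)
  have h4 : 1 / |Real.sin (Real.pi * θ)| / N ≤ 1 / l / N := by
    gcongr
    linarith
  nlinarith

lemma B_main (d : ℕ) (t τ θ l : ℝ) (N : ℕ) (ht : 0 < t) (hτ : 0 < τ) (hτ1 : τ ≤ 1) (hτt : τ ^ (d+2) = t)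
    (hl : 0 < l) (hl1 : l ≤ 1/2) (hx1 : l ≤ θ) (hx2 : θ ≤ 1 - l)
    (h1 : t * (d+2) * ((N:ℝ)+1) ^ (d+1) ≤ l/2) (hN : 1 / τ ≤ N) :
    ‖VN (d+2) t θ N - Complex.ofReal (1/2-θ)‖ ≤ (5/l^2 + (d+4)/l * 2^(d+1) + 1/l) * τ := by
  set M := ⌈1/τ⌉₊ with hM
  have hM1 : 1/τ ≤ M := Nat.le_ceil _
  have hMN : M ≤ N := Nat.ceil_le.mpr hN
  have h1τ : 1 ≤ 1/τ := by rw [le_div_iff₀ hτ]; linarith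
  have hM2 : (M:ℝ) ≤ 2/τ := by
    have := (Nat.ceil_lt_add_one (by positivity : 0 ≤ 1/τ)).le
    have e : 2/τ = 1/τ + 1/τ := by ring
    rw [e]; linarith
  have hMp : (1:ℝ) ≤ M := by linarith
  have hMn : 1 ≤ M := by exact_mod_cast hMp
  have hinv : (M:ℝ)⁻¹ ≤ τ := by
    rw [inv_le_comm₀ (by linarith) hτ, ← one_div]; exact hM1
  have a1 := B_far d t θ l M N ht.le hl hl1 hx1 hx2 h1 hMn hMN
  have a2 := B_near d t θ l M ht.le hl hx1 hx2 hMn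
  have a3 := B_saw θ l M hl hx1 hx2 hMn
  have b1 : 5 / l ^ 2 / (M:ℝ) ≤ 5/l^2 * τ := by rw [div_eq_mul_inv _ (M:ℝ)]; gcongr
  have b3 : 1 / l / (M:ℝ) ≤ 1/l * τ := by rw [div_eq_mul_inv _ (M:ℝ)]; gcongr
  have b2 : t * (M:ℝ)^(d+1) ≤ 2^(d+1) * τ := by
    calc _ ≤ τ^(d+2) * (2/τ)^(d+1) := by rw [hτt]; gcongr
      _ = _ := by rw [div_pow]; field_simp; ring
  have b4 : (d+4) / l * (t * (M:ℝ)^(d+1)) ≤ (d+4) / l * (2^(d+1) * τ) := by gcongr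
  set X := Complex.ofReal (∑ k ∈ range M, Real.sin (2 * Real.pi * θ * k) / (Real.pi * k))
  have e : VN (d+2) t θ N - Complex.ofReal (1/2-θ) = (VN (d+2) t θ N - VN (d+2) t θ M) + (VN (d+2) t θ M - X) - (Complex.ofReal (1/2-θ) - X) := by ring
  rw [e]
  refine (norm_sub_le _ _).trans ?_
  have := norm_add_le (VN (d+2) t θ N - VN (d+2) t θ M) (VN (d+2) t θ M - X)
  nlinarith


lemma U_term (n : ℕ) (hn : Even n) (γ t β σ : ℝ) (hσ : σ = 1 ∨ σ = -1) (k : ℕ) (hk : 1 ≤ k) :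
    Complex.ofReal (Real.sin (2 * Real.pi * γ * (k : ℝ)) / (Real.pi * (k : ℝ))) *
        ee (t * (k : ℝ) ^ n + (σ * γ + β) * (k : ℝ)) +
    Complex.ofReal (Real.sin (2 * Real.pi * γ * (-(k : ℝ))) / (Real.pi * (-(k : ℝ)))) *
        ee (t * (-(k : ℝ)) ^ n + (σ * γ + β) * (-(k : ℝ))) = 
    ee (t * (k:ℝ) ^ n) * Complex.ofReal (Real.sin (2 * Real.pi * (2 * γ + σ * β) * k) / (Real.pi * k))
    - ee (t * (k:ℝ) ^ n) * Complex.ofReal (Real.sin (2 * Real.pi * (σ * β) * k) / (Real.pi * k)) := by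
  rw [hn.neg_pow, mul_neg, Real.sin_neg, mul_neg, mul_neg, neg_div_neg_eq, ee_add, ee_add, ee_neg]
  have h1 : ee ((σ * γ + β) * k) + (starRingEnd ℂ) (ee ((σ * γ + β) * k)) = Complex.ofReal (2 * Real.cos (2 * Real.pi * ((σ * γ + β) * k))) := by
    rw [ee_cos_sin, Complex.add_conj]
    simp [← Complex.ofReal_cos, ← Complex.ofReal_sin]
  have h2 : Real.sin (2 * Real.pi * γ * k) * (2 * Real.cos (2 * Real.pi * ((σ * γ + β) * k))) =
      Real.sin (2 * Real.pi * (2 * γ + σ * β) * k) - Real.sin (2 * Real.pi * (σ * β) * k) := by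
    have e := Real.two_mul_sin_mul_cos (2 * Real.pi * γ * k) (2 * Real.pi * ((σ * γ + β) * k))
    rcases hσ with rfl | rfl
    · rw [show 2 * Real.pi * (2 * γ + 1 * β) * k = 2 * Real.pi * γ * k + 2 * Real.pi * ((1 * γ + β) * k) by ring,
        show 2 * Real.pi * (1 * β) * k = -(2 * Real.pi * γ * k - 2 * Real.pi * ((1 * γ + β) * k)) by ring, Real.sin_neg]
      linarith
    · rw [show 2 * Real.pi * (2 * γ + (-1) * β) * k = 2 * Real.pi * γ * k - 2 * Real.pi * (((-1) * γ + β) * k) by ring,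
        show 2 * Real.pi * ((-1) * β) * k = -(2 * Real.pi * γ * k + 2 * Real.pi * (((-1) * γ + β) * k)) by ring, Real.sin_neg]
      linarith
  have hk0 : (k:ℝ) ≠ 0 := by exact_mod_cast (by lia : k ≠ 0)
  rw [← mul_sub, ← Complex.ofReal_sub, ← sub_div, ← h2]
  set E := ee ((σ * γ + β) * k)
  calc _ = ee (t * (k:ℝ)^n) * (Complex.ofReal (Real.sin (2 * Real.pi * γ * k) / (Real.pi * k)) * (E + (starRingEnd ℂ) E)) := by ring
    _ = _ := by rw [h1, ← Complex.ofReal_mul]; congr 2; ring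

lemma U_red (n : ℕ) (hn : Even n) (γ t β σ : ℝ) (hσ : σ = 1 ∨ σ = -1) (K : ℕ) :
    Upartial n γ t (σ * γ + β) K = Complex.ofReal (2 * γ) + (VN n t (2 * γ + σ * β) (K+1) - VN n t (σ * β) (K+1)) := by
  unfold Upartial
  congr 1
  induction K with
  | zero => simp [VN, Finset.filter_singleton]
  | succ K ih =>
    have hset : (Finset.Icc (-((K+1:ℕ) : ℤ)) ((K+1:ℕ) : ℤ)).filter (· ≠ 0) =
        insert ((K+1:ℕ):ℤ) (insert (-((K+1:ℕ):ℤ)) ((Finset.Icc (-(K : ℤ)) (K : ℤ)).filter (· ≠ 0))) := by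
      ext x; simp only [mem_filter, mem_Icc, mem_insert]; lia
    rw [hset, sum_insert (by simp; lia), sum_insert (by simp), ih, ← add_assoc]
    have h := U_term n hn γ t β σ hσ (K+1) (by lia)
    have e1 := sum_range_succ (fun k : ℕ => ee (t * (k:ℝ) ^ n) * Complex.ofReal (Real.sin (2 * Real.pi * (2 * γ + σ * β) * k) / (Real.pi * k))) (K+1)
    have e2 := sum_range_succ (fun k : ℕ => ee (t * (k:ℝ) ^ n) * Complex.ofReal (Real.sin (2 * Real.pi * (σ * β) * k) / (Real.pi * k))) (K+1)
    simp only [Int.cast_neg, Int.cast_natCast]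
    rw [h]
    unfold VN
    rw [e1, e2]
    ring


lemma small_rpow (κ c b : ℝ) (hκ : 0 < κ) (hc : 0 ≤ c) (hb : 0 < b) : ∃ t0 > (0:ℝ), ∀ t : ℝ, 0 < t → t ≤ t0 → c * t ^ κ ≤ b := by
  refine ⟨(b / (c+1)) ^ (κ⁻¹), by positivity, fun t ht h => ?_⟩
  have h1 : t ^ κ ≤ b / (c+1) := by
    calc t ^ κ ≤ ((b / (c+1)) ^ (κ⁻¹)) ^ κ := Real.rpow_le_rpow ht.le h hκ.le
      _ = _ := by rw [← Real.rpow_mul (by positivity), inv_mul_cancel₀ hκ.ne', Real.rpow_one]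
  have h2 : 0 < t ^ κ := by positivity
  rw [le_div_iff₀ (by positivity)] at h1
  nlinarith

set_option maxHeartbeats 1600000 in
lemma core (d : ℕ) (hne : Even (d+2)) (Δ : ℝ) (hΔ0 : 0 < Δ) (hΔ1 : Δ < 1)
    (γ : ℝ) (hγ : γ ∈ Set.Ioo (0 : ℝ) (1 / 2))
    (m : ℤ) (hm : 2 ≤ m) (α : ℝ) (hα1 : (((d+2:ℕ) : ℝ) - Δ)⁻¹ < α) (hα2 : α < (((d+2:ℕ) : ℝ) - 1)⁻¹)
    (ε : ℝ) (hε : 0 < ε) (S : ℝ) (hS : 0 < S) :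
    ∃ C > (0 : ℝ), ∃ t₁ > (0 : ℝ), ∀ t ∈ Set.Ioc (0 : ℝ) t₁,
      ((Irrational t ∧ t ∈ Bset (d+2) Δ m α) ∨
        (∃ u q : ℤ, 1 ≤ q ∧ Int.gcd u q = 1 ∧ t = (u : ℝ) / (q : ℝ) ∧
          t ≤ (m : ℝ) * (q : ℝ) ^ (-(1 / (α * (((d+2:ℕ) : ℝ) - Δ)))))) →
      ∀ s ∈ Set.Icc (-S) S, ∀ σ : ℝ, (σ = 1 ∨ σ = -1) →
        ∃ Is L : ℂ,
          Tendsto (fun R : ℝ => Complex.ofReal (1 / (2 * Real.pi)) * Iint (d+2) s R)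
            atTop (nhds Is) ∧
          Tendsto (fun K : ℕ => Upartial (d+2) γ t (σ * γ + s * t ^ ((((d+2:ℕ) : ℝ))⁻¹)) K)
            atTop (nhds L) ∧
          ‖L - (1 / 2 - Complex.ofReal σ * Is)‖ ≤
            C * (t ^ (α * Δ / 2 ^ (d + 1) - ε) + t ^ (α * ((d+2:ℕ):ℝ) - 1)) := by
  obtain ⟨hγ0, hγ1⟩ := hγ
  set n : ℝ := ((d+2:ℕ):ℝ) with hn
  have hnd : n = d + 2 := by rw [hn]; push_cast; ring
  have hd0 : (0:ℝ) ≤ d := Nat.cast_nonneg d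
  have hn2 : 2 ≤ n := by linarith
  have hαn : n⁻¹ < α := by
    refine lt_of_le_of_lt ?_ hα1
    exact inv_anti₀ (by linarith) (by linarith)
  have hn0 : 0 < n⁻¹ := by positivity
  have hα0 : 0 < α := by linarith
  have hαd : α * (d+1) < 1 := by
    rw [lt_inv_comm₀ hα0 (by linarith), hnd, ← one_div, lt_div_iff₀ hα0] at hα2
    nlinarith
  have hαlt1 : α < 1 := by nlinarith
  have hm1 : (2:ℝ) ≤ m := by exact_mod_cast hm
  set l : ℝ := min γ (1/2 - γ) with hl
  have hl0 : 0 < l := by rw [hl]; apply lt_min <;> linarith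
  have hlγ : l ≤ γ := min_le_left _ _
  have hlγ2 : l ≤ 1/2 - γ := min_le_right _ _
  obtain ⟨C0, hC0, htail⟩ := tail_main d hne Δ hΔ0 hΔ1 m hm α hα0 hαlt1 ε hε
  obtain ⟨ta, hta0, hta⟩ := small_rpow n⁻¹ S (min (1/32) l) hn0 hS.le (by positivity)
  obtain ⟨tb, htb0, htb⟩ := small_rpow (1 - α*(d+1)) ((d+2) * (m+2)^(d+1)) (min (1/32) (l/2)) (by linarith) (by positivity) (by positivity)
  obtain ⟨tc, htc0, htc⟩ := small_rpow (α - n⁻¹) S 1 (by linarith) hS.le (by norm_num)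
  set CB := 5/l^2 + (d+4)/l * 2^(d+1) + 1/l with hCB
  have hCB0 : 0 < CB := by positivity
  refine ⟨2 * C0 + CB + 33 * S + 1, by positivity, min (min ta tb) (min tc 1), by positivity, ?_⟩
  rintro t ⟨ht0, ht⟩ hcase s ⟨hs1, hs2⟩ σ hσ
  have ht1 : t ≤ 1 := ht.trans ((min_le_right _ _).trans (min_le_right _ _))
  have ka := hta t ht0 (ht.trans ((min_le_left _ _).trans (min_le_left _ _)))
  have kb := htb t ht0 (ht.trans ((min_le_left _ _).trans (min_le_right _ _)))
  have kc := htc t ht0 (ht.trans ((min_le_right _ _).trans (min_le_left _ _)))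
  set τ := t ^ n⁻¹ with hτ
  have hτ0 : 0 < τ := by positivity
  have hτ1 : τ ≤ 1 := Real.rpow_le_one ht0.le ht1 hn0.le
  have hτt : τ ^ (d+2) = t := by
    rw [hτ, hn]; exact Real.rpow_inv_natCast_pow ht0.le (by lia)
  set N := ⌈(m:ℝ) * t ^ (-α)⌉₊ with hN
  have hta0 : 0 < t ^ (-α) := by positivity
  have hta1 : 1 ≤ t ^ (-α) := Real.one_le_rpow_of_pos_of_le_one_of_nonpos ht0 ht1 (by linarith)
  have hNle : (m:ℝ) * t ^ (-α) ≤ N := Nat.le_ceil _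
  have hNt : t ^ (-α) ≤ N := by nlinarith
  have hN1 : 1 ≤ N := by
    have : (1:ℝ) ≤ N := by linarith
    exact_mod_cast this
  have hNup : (N:ℝ) + 1 ≤ (m+2) * t ^ (-α) := by
    have := (Nat.ceil_lt_add_one (by positivity : 0 ≤ (m:ℝ) * t ^ (-α))).le
    rw [← hN] at this
    nlinarith
  have hmain : t * (d+2) * ((N:ℝ)+1) ^ (d+1) ≤ min (1/32) (l/2) := by
    refine le_trans ?_ kb
    calc t * (d+2) * ((N:ℝ)+1) ^ (d+1) ≤ t * (d+2) * ((m+2) * t ^ (-α)) ^ (d+1) := by gcongr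
      _ = (d+2) * (m+2)^(d+1) * (t ^ (1:ℝ) * (t ^ (-α)) ^ (d+1)) := by rw [mul_pow, Real.rpow_one]; ring
      _ = _ := by
        rw [← Real.rpow_natCast (t ^ (-α)), ← Real.rpow_mul ht0.le, ← Real.rpow_add ht0]
        congr 2; push_cast; ring
  have hinvτ : 1 / τ ≤ N := by
    refine le_trans ?_ hNt
    rw [hτ, one_div, ← Real.rpow_neg ht0.le]
    exact Real.rpow_le_rpow_of_exponent_ge ht0 ht1 (by linarith)
  set Y := (N:ℝ) * τ with hY
  have hYlow : t ^ (-(α - n⁻¹)) ≤ Y := by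
    calc t ^ (-(α - n⁻¹)) = t ^ (-α) * τ := by rw [hτ, ← Real.rpow_add ht0]; congr 1; ring
      _ ≤ _ := by rw [hY]; gcongr
  have hYp : 0 < t ^ (-(α - n⁻¹)) := by positivity
  have hY1 : 1 ≤ Y := le_trans (Real.one_le_rpow_of_pos_of_le_one_of_nonpos ht0 ht1 (by linarith)) hYlow
  have hYS : S ≤ Y := by
    refine le_trans ?_ hYlow
    rw [Real.rpow_neg ht0.le, ← one_div, le_div_iff₀ (by positivity)]
    exact kc
  have hYn : (Y^(d+2))⁻¹ ≤ t ^ (α * n - 1) := by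
    calc (Y^(d+2))⁻¹ ≤ ((t ^ (-(α - n⁻¹)))^(d+2))⁻¹ := by gcongr
      _ = _ := by
        rw [← Real.rpow_natCast, ← Real.rpow_mul ht0.le, ← Real.rpow_neg ht0.le, ← hn]
        congr 1; field_simp
  set E := t ^ (α * Δ / 2 ^ (d+1) - ε) with hE
  have hτE : τ ≤ E := by
    apply Real.rpow_le_rpow_of_exponent_ge ht0 ht1
    have h2 : n ≤ 2^(d+1) := by
      rw [hn]
      have h4 : d + 2 ≤ 2^(d+1) := Nat.lt_two_pow_self (n := d+1)
      exact_mod_cast h4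
    have h3 : α * Δ / 2^(d+1) ≤ n⁻¹ := by
      rw [← one_div]
      have : α * Δ ≤ 1 := mul_le_one₀ hαlt1.le hΔ0.le hΔ1.le
      gcongr
    linarith
  have hσ1 : |σ| = 1 := by rcases hσ with rfl | rfl <;> simp
  have hsS : |s| ≤ S := abs_le.mpr ⟨hs1, hs2⟩
  have hβ : |σ * s * τ| ≤ S * τ := by
    rw [abs_mul, abs_mul, hσ1, one_mul, abs_of_pos hτ0]; gcongr
  have hβ2 := abs_le.mp (hβ.trans (ka.trans (min_le_right _ _)))
  obtain ⟨Is, hIs, hIsb⟩ := I_lim d hne s S hsS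
  have hI' : Iint (d+2) (σ * s) Y = Complex.ofReal σ * Iint (d+2) s Y := by
    rcases hσ with rfl | rfl
    · simp
    · rw [neg_one_mul, Iint_neg _ (by lia) hne]; simp
  have hIb : ‖Complex.ofReal (1/(2*Real.pi)) * Iint (d+2) (σ * s) Y - Complex.ofReal σ * Is‖ ≤ t ^ (α * n - 1) := by
    rw [hI', show Complex.ofReal (1/(2*Real.pi)) * (Complex.ofReal σ * Iint (d+2) s Y) - Complex.ofReal σ * Is
      = Complex.ofReal σ * (Complex.ofReal (1/(2*Real.pi)) * Iint (d+2) s Y - Is) by ring, norm_mul, Complex.norm_real,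
      Real.norm_eq_abs, hσ1, one_mul]
    exact (hIsb Y hY1 hYS).trans hYn
  obtain ⟨V1, hV1, hb1⟩ := htail t ⟨ht0, ht1⟩ hcase (2 * γ + σ * (s * τ))
  obtain ⟨V2, hV2, hb2⟩ := htail t ⟨ht0, ht1⟩ hcase (σ * (s * τ))
  refine ⟨Is, Complex.ofReal (2 * γ) + (V1 - V2), hIs, ?_, ?_⟩
  · simp only [U_red (d+2) hne γ t (s * τ) σ hσ]
    exact (((tendsto_add_atTop_iff_nat 1).mpr hV1).sub ((tendsto_add_atTop_iff_nat 1).mpr hV2)).const_add _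
  · rw [← mul_assoc] at hb1 hb2 hV1 hV2
    have hB := B_main d t τ (2 * γ + σ * s * τ) l N ht0 hτ0 hτ1 hτt hl0 (by linarith) (by linarith) (by linarith)
      (hmain.trans (min_le_right _ _)) hinvτ
    have hA := A_main d hne t τ (σ * s) N ht0 hτ0 hτt hN1 (hmain.trans (min_le_left _ _)) (hβ.trans (ka.trans (min_le_left _ _)))
    have hbeta : ‖Complex.ofReal (σ * s * τ)‖ ≤ S * τ := by rw [Complex.norm_real]; exact hβ
    set W1 := VN (d+2) t (2 * γ + σ * s * τ) N
    set W2 := VN (d+2) t (σ * s * τ) N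
    set J := Complex.ofReal (1/(2*Real.pi)) * Iint (d+2) (σ * s) Y
    have e : Complex.ofReal (2 * γ) + (V1 - V2) - (1/2 - Complex.ofReal σ * Is) =
        (V1 - W1) + (W1 - Complex.ofReal (1/2 - (2 * γ + σ * s * τ))) - (V2 - W2) - (W2 - J) - (J - Complex.ofReal σ * Is)
          - Complex.ofReal (σ * s * τ) := by
      push_cast; ring
    rw [e]
    have n1 := norm_add_le (V1 - W1) (W1 - Complex.ofReal (1/2 - (2 * γ + σ * s * τ)))
    have n2 := norm_sub_le ((V1 - W1) + (W1 - Complex.ofReal (1/2 - (2 * γ + σ * s * τ)))) (V2 - W2)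
    have n3 := norm_sub_le ((V1 - W1) + (W1 - Complex.ofReal (1/2 - (2 * γ + σ * s * τ))) - (V2 - W2)) (W2 - J)
    have n4 := norm_sub_le ((V1 - W1) + (W1 - Complex.ofReal (1/2 - (2 * γ + σ * s * τ))) - (V2 - W2) - (W2 - J)) (J - Complex.ofReal σ * Is)
    have n5 := norm_sub_le ((V1 - W1) + (W1 - Complex.ofReal (1/2 - (2 * γ + σ * s * τ))) - (V2 - W2) - (W2 - J) - (J - Complex.ofReal σ * Is)) (Complex.ofReal (σ * s * τ))
    have k1 : CB * τ ≤ CB * E := by gcongr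
    have k2 : S * τ ≤ S * E := by gcongr
    set F := t ^ (α * n - 1)
    have hF : 0 < F := by positivity
    have hEp : 0 < E := by positivity
    have k3 : 0 ≤ (2 * C0 + CB + 33 * S) * F := by positivity
    have hA2 : 32 * |σ * s * τ| ≤ 32 * (S * τ) := by gcongr
    have : (2 * C0 + CB + 33 * S + 1) * (E + F) = (2 * C0 + CB + 33 * S) * F + F + 2 * (C0 * E) + CB * E + 33 * (S * E) + E := by ring
    linarith

/-- `n` even: the ringing profile. With `I(s) = (1/2π)·lim_{R→∞}∫_{−R}^R
e(y^n)sin(2πsy)dy/y`, for admissible `t → 0⁺` and `s ∈ [−S,S]`, `σ = ±1`,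
`U(t, σγ + s·t^{1/n}) = 1/2 − σ·I(s) + O(t^{αΔ/2^{n−1}−ε} + t^{αn−1})`. -/
theorem stmt12 (n : ℕ) (hn : 2 ≤ n) (hne : Even n) (Δ : ℝ) (hΔ0 : 0 < Δ) (hΔ1 : Δ < 1)
    (hΔ2 : n = 2 → Δ < 1 / 2) (γ : ℝ) (hγ : γ ∈ Set.Ioo (0 : ℝ) (1 / 2))
    (m : ℤ) (hm : 2 ≤ m) (α : ℝ) (hα1 : ((n : ℝ) - Δ)⁻¹ < α) (hα2 : α < ((n : ℝ) - 1)⁻¹)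
    (ε : ℝ) (hε : 0 < ε) (S : ℝ) (hS : 0 < S) :
    ∃ C > (0 : ℝ), ∃ t₁ > (0 : ℝ), ∀ t ∈ Set.Ioc (0 : ℝ) t₁,
      ((Irrational t ∧ t ∈ Bset n Δ m α) ∨
        (∃ u q : ℤ, 1 ≤ q ∧ Int.gcd u q = 1 ∧ t = (u : ℝ) / (q : ℝ) ∧
          t ≤ (m : ℝ) * (q : ℝ) ^ (-(1 / (α * ((n : ℝ) - Δ)))))) →
      ∀ s ∈ Set.Icc (-S) S, ∀ σ : ℝ, (σ = 1 ∨ σ = -1) →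
        ∃ Is L : ℂ,
          Tendsto (fun R : ℝ => Complex.ofReal (1 / (2 * Real.pi)) * Iint n s R)
            atTop (nhds Is) ∧
          Tendsto (fun K : ℕ => Upartial n γ t (σ * γ + s * t ^ ((n : ℝ)⁻¹)) K)
            atTop (nhds L) ∧
          ‖L - (1 / 2 - Complex.ofReal σ * Is)‖ ≤
            C * (t ^ (α * Δ / 2 ^ (n - 1) - ε) + t ^ (α * n - 1)) := by
  obtain ⟨d, rfl⟩ : ∃ d, n = d + 2 := ⟨n - 2, by lia⟩
  exact core d hne Δ hΔ0 hΔ1 γ hγ m hm α hα1 hα2 ε hε S hS
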